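/- arXiv:1812.10269 — 2 statements merged into one kernel-verified Lean document; each statement's English description precedes it below -/
import Mathlib

section
/- Let d ≥ 2 and ℓ ≥ d be integers and let s ≥ 1. Any ℓ polynomials in ℝ[x_1,…,x_d], each of degree at most s, have at most (50·s·ℓ/d)^d realizable sign conditions. -/
open MvPolynomial

/-!
Each realizable sign condition is replaced by a nonempty closed cell, cut out by inequalities
`± P i ≤ u`: four walls per polynomial suffice to make the cells of distinct sign conditions
disjoint, and for generic levels `u` no `d + 1` walls have a common point. For small `η > 0`,
minimize `η * ∑ k, x k ^ (2 * s + 2)` plus the sum of the squared violations of the inequalities of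
a cell. Small penalty forces the minimizers of distinct cells to be distinct and to violate at most
`d` inequalities each. If `A` is the set of violated inequalities `q w ≤ 0`, the minimizer is a
critical point of `η * ∑ k, x k ^ (2 * s + 2) + ∑ w ∈ A, q w ^ 2`. At these critical points every
`x k ^ (2 * s + 1)` is a polynomial of degree at most `2 * s`, so all polynomial functions on them
are spanned by `(2 * s + 1) ^ d` monomials; since evaluations at distinct points are linearly
independent, there are at most `(2 * s + 1) ^ d` of them. Summing over the sets `A`, the number of
sign conditions is at most `(2 * s + 1) ^ d * ∑ k ≤ d, (4 * ℓ).choose k ≤ (12 * e * s * ℓ / d) ^ d`,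
and `12 * e < 50`.
-/

namespace MilnorThom

section PolynomialSystems

variable {σ K : Type*}

theorem linearMap_eq_zero_of_X_pow_reduction [CommSemiring K] {M : Type*} [AddCommMonoid M]
    [Module K M] {n : ℕ} {R : σ → MvPolynomial σ K} (hR : ∀ k, (R k).totalDegree < n)
    (L : MvPolynomial σ K →ₗ[K] M) (hred : ∀ k p, L (X k ^ n * p) = L (R k * p))
    (hL : ∀ α : σ →₀ ℕ, (∀ k, α k < n) → L (monomial α 1) = 0) : L = 0 := by
  classical
  suffices ∀ N, ∀ α : σ →₀ ℕ, α.degree = N → L (monomial α 1) = 0 by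
    refine linearMap_ext fun α => LinearMap.ext_ring ?_
    exact this _ α rfl
  intro N
  induction N using Nat.strong_induction_on with
  | _ N ih =>
    intro α hα
    by_cases hsmall : ∀ k, α k < n
    · exact hL α hsmall
    obtain ⟨k, hk⟩ : ∃ k, n ≤ α k := by simpa using hsmall
    obtain ⟨β, rfl⟩ := exists_add_of_le (Finsupp.single_le_iff.2 hk)
    have hfactor : monomial (Finsupp.single k n + β) (1 : K) = X k ^ n * monomial β 1 := by
      rw [X_pow_eq_monomial, monomial_mul, one_mul]
    rw [hfactor, hred, (R k).as_sum, Finset.sum_mul, map_sum]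
    refine Finset.sum_eq_zero fun γ hγ => ?_
    have hγn : γ.degree < n := (le_totalDegree hγ).trans_lt (hR k)
    have hlower : L (monomial (γ + β) 1) = 0 := by
      refine ih _ ?_ _ rfl
      simp only [← hα, map_add, Finsupp.degree_single]
      lia
    rw [monomial_mul, ← smul_eq_mul, ← smul_monomial, map_smul, hlower, smul_zero]

theorem linearIndependent_eval [CommRing K] [IsDomain K] :
    LinearIndependent K (fun (x : σ → K) (p : MvPolynomial σ K) => eval x p) := by
  have hinj : Function.Injective fun x : σ → K => (eval x : MvPolynomial σ K →* K) := by
    intro x y hxy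
    funext k
    simpa using DFunLike.congr_fun hxy (X k)
  exact (linearIndependent_monoidHom (MvPolynomial σ K) K).comp _ hinj

theorem card_le_pow_of_pow_eq_eval [Fintype σ] [CommRing K] [IsDomain K] {n : ℕ}
    {R : σ → MvPolynomial σ K} (hR : ∀ k, (R k).totalDegree < n) (S : Finset (σ → K))
    (hS : ∀ x ∈ S, ∀ k, x k ^ n = eval x (R k)) : S.card ≤ n ^ Fintype.card σ := by
  classical
  have hli : LinearIndependent K
      fun (x : S) (e : σ → Fin n) => ∏ k, (x : σ → K) k ^ (e k : ℕ) := by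
    rw [Fintype.linearIndependent_iff]
    intro c hc
    let L : MvPolynomial σ K →ₗ[K] K := ∑ x : S, c x • (aeval (x : σ → K)).toLinearMap
    have hL_apply (p) : L p = ∑ x : S, c x * eval (x : σ → K) p := by simp [L]
    have hL : L = 0 := by
      refine linearMap_eq_zero_of_X_pow_reduction hR L (fun k p => ?_) (fun α hα => ?_)
      · simp only [hL_apply, map_mul, map_pow, eval_X]
        exact Finset.sum_congr rfl fun x _ => by rw [hS x x.2 k]
      · simpa [hL_apply, eval_monomial, Finsupp.prod_fintype] using
          congrFun hc fun k => ⟨α k, hα k⟩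
    refine Fintype.linearIndependent_iff.1
      (linearIndependent_eval.comp ((↑) : S → σ → K) Subtype.val_injective) c ?_
    funext p
    simpa [hL_apply] using LinearMap.congr_fun hL p
  simpa using hli.fintype_card_le_finrank

end PolynomialSystems

section CriticalPoints

variable {σ : Type*}

theorem hasDerivAt_eval_update {𝕜 : Type*} [NontriviallyNormedField 𝕜] [DecidableEq σ]
    (p : MvPolynomial σ 𝕜) (x : σ → 𝕜) (k : σ) :
    HasDerivAt (fun τ => eval (Function.update x k τ) p) (eval x (pderiv k p)) (x k) := by
  induction p using MvPolynomial.induction_on with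
  | C a => simpa using hasDerivAt_const (x k) a
  | add p q hp hq => simpa using! hp.add hq
  | mul_X p i hp =>
    have hX : HasDerivAt (fun τ => Function.update x k τ i) (eval x (pderiv k (X i))) (x k) := by
      simpa [pderiv_X, Pi.single_apply, apply_ite, eq_comm] using
        hasDerivAt_pi.1 (hasDerivAt_update x k (x k)) i
    have hmul := hp.mul hX
    simp only [Function.update_eq_self] at hmul
    convert! hmul using 1
    · simp only [map_mul, eval_X]; rfl
    · simp only [Derivation.leibniz, smul_eq_mul, map_add, map_mul, eval_X]
      ring

theorem eval_pderiv_eq_zero_of_isLocalMin {p : MvPolynomial σ ℝ} {x : σ → ℝ}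
    (hx : IsLocalMin (fun y => eval y p) x) (k : σ) : eval x (pderiv k p) = 0 := by
  classical
  have hcont : ContinuousAt (fun τ => Function.update x k τ) (x k) :=
    (continuous_const.update k continuous_id).continuousAt
  have hmin : IsLocalMin (fun y => eval y p) (Function.update x k (x k)) := by simpa using hx
  exact (hmin.comp_continuous hcont).hasDerivAt_eq_zero (hasDerivAt_eval_update p x k)

theorem totalDegree_pderiv_le {K : Type*} [CommSemiring K] (p : MvPolynomial σ K) (k : σ) :
    (pderiv k p).totalDegree ≤ p.totalDegree := by
  classical
  conv_lhs => rw [p.as_sum, map_sum]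
  refine totalDegree_finsetSum_le fun α hα => ?_
  rw [pderiv_monomial]
  exact (totalDegree_monomial_le _ _).trans
    ((Finsupp.degree_mono tsub_le_self).trans (le_totalDegree hα))

theorem pderiv_psum {K : Type*} [CommSemiring K] [Fintype σ] (n : ℕ) (k : σ) :
    pderiv k (psum σ K n) = (n : MvPolynomial σ K) * X k ^ (n - 1) := by
  classical
  simp [psum, pderiv_X, Pi.single_apply]

theorem card_criticalPoints_le {K : Type*} [Field K] [CharZero K] [Fintype σ] {n : ℕ}
    {Q : MvPolynomial σ K} (hQ : Q.totalDegree ≤ n) {η : K} (hη : η ≠ 0) (S : Finset (σ → K))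
    (hS : ∀ x ∈ S, ∀ k, eval x (pderiv k (C η * psum σ K (n + 2) + Q)) = 0) :
    S.card ≤ (n + 1) ^ Fintype.card σ := by
  refine card_le_pow_of_pow_eq_eval (R := fun k => C (-(η * (n + 2))⁻¹) * pderiv k Q)
    (fun k => ?_) S (fun x hx k => ?_)
  · have hmul := totalDegree_mul (C (-(η * (n + 2))⁻¹)) (pderiv k Q)
    have hpderiv := totalDegree_pderiv_le Q k
    rw [totalDegree_C] at hmul
    lia
  · have hn : (n + 2 : K) ≠ 0 := by exact_mod_cast (n + 1).succ_ne_zero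
    have hgrad := hS x hx k
    simp only [map_add, pderiv_C_mul, pderiv_psum, Nat.cast_add, Nat.cast_ofNat,
      Nat.add_one_sub_one, map_mul, eval_C, map_natCast, eval_ofNat, map_pow, eval_X] at hgrad
    simp only [map_mul, eval_C]
    field_simp
    linear_combination hgrad

end CriticalPoints

section GeneralPosition

variable {σ W K : Type*} [Fintype σ] [CommRing K]

/-- Polynomials in `d` variables no `d + 1` of which have a common zero. -/
def InGeneralPosition (q : W → MvPolynomial σ K) : Prop :=
  ∀ A : Finset W, Fintype.card σ < A.card → ∀ x, ∃ w ∈ A, eval x (q w) ≠ 0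

variable [IsDomain K]

theorem exists_ne_zero_aeval_eq_zero [Fintype W] (hcard : Fintype.card σ < Fintype.card W)
    (Q : W → MvPolynomial σ K) : ∃ R : MvPolynomial W K, R ≠ 0 ∧ aeval Q R = 0 := by
  have hdep : ¬ AlgebraicIndependent K Q := by
    intro hind
    have htrdeg := hind.lift_cardinalMk_le_trdeg
    rw [trdeg_of_isDomain] at htrdeg
    simp only [Cardinal.mk_fintype, Cardinal.lift_natCast, Nat.cast_le] at htrdeg
    lia
  simpa [algebraicIndependent_iff, and_comm] using hdep

theorem exists_ne_zero_eval_eq_zero_of_forall_eval_eq (Q : W → MvPolynomial σ K) {A : Finset W}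
    (hA : Fintype.card σ < A.card) :
    ∃ F : MvPolynomial W K, F ≠ 0 ∧
      ∀ u x, (∀ w ∈ A, eval x (Q w) = u w) → eval u F = 0 := by
  obtain ⟨R, hR0, hR⟩ := exists_ne_zero_aeval_eq_zero (by simpa using hA) fun w : A => Q w
  refine ⟨rename Subtype.val R,
    (map_ne_zero_iff _ (rename_injective _ Subtype.val_injective)).2 hR0, fun u x hux => ?_⟩
  have hu : u ∘ Subtype.val = fun w : A => eval x (Q w) := funext fun w => (hux w w.2).symm
  calc eval u (rename Subtype.val R) = eval (u ∘ Subtype.val) R := eval_rename _ _ _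
    _ = eval x (aeval (fun w : A => Q w) R) := by
      rw [hu]
      exact (comp_aeval_apply _ (aeval x) R).symm
    _ = 0 := by rw [hR, map_zero]

theorem exists_mem_forall_eval_ne_zero {α : Type*} [Finite α] {F : α → MvPolynomial W K}
    (hF : ∀ a, F a ≠ 0) {s : W → Set K} (hs : ∀ w, (s w).Infinite) :
    ∃ u : W → K, (∀ w, u w ∈ s w) ∧ ∀ a, eval u (F a) ≠ 0 := by
  have := Fintype.ofFinite α
  by_contra! hzero
  refine Finset.prod_ne_zero_iff.2 (fun a _ => hF a) (funext_set s hs (p := ∏ a, F a) (q := 0) ?_)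
  intro u hu
  obtain ⟨a, ha⟩ := hzero u fun w => hu w trivial
  rw [map_prod, map_zero, Finset.prod_eq_zero (Finset.mem_univ a) ha]

theorem exists_inGeneralPosition_sub_C [Finite W] (Q : W → MvPolynomial σ K) {s : W → Set K}
    (hs : ∀ w, (s w).Infinite) :
    ∃ u : W → K, (∀ w, u w ∈ s w) ∧ InGeneralPosition fun w => Q w - C (u w) := by
  have := Fintype.ofFinite W
  choose F hF0 hF using fun A : {A : Finset W // Fintype.card σ < A.card} =>
    exists_ne_zero_eval_eq_zero_of_forall_eval_eq Q A.2
  obtain ⟨u, hus, hu⟩ := exists_mem_forall_eval_ne_zero hF0 hs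
  refine ⟨u, hus, fun A hA x => ?_⟩
  by_contra! hx
  exact hu ⟨A, hA⟩ (hF ⟨A, hA⟩ u x fun w hw => by simpa [sub_eq_zero] using hx w hw)

end GeneralPosition

section Counting

theorem card_filter_card_le (W : Type*) [Fintype W] (d : ℕ) :
    (Finset.univ.filter fun A : Finset W => A.card ≤ d).card =
      ∑ k ∈ Finset.range (d + 1), (Fintype.card W).choose k := by
  rw [Finset.card_eq_sum_card_fiberwise (f := Finset.card) (t := Finset.range (d + 1))]
  · refine Finset.sum_congr rfl fun k hk => ?_
    rw [← Finset.card_univ, ← Finset.card_powersetCard]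
    congr 1
    ext A
    have hkd : k ≤ d := Finset.mem_range_succ_iff.1 hk
    simp only [Finset.mem_filter, Finset.mem_univ, true_and, Finset.mem_powersetCard_univ]
    lia
  · intro A hA
    simpa [Nat.lt_succ_iff] using hA

theorem sum_range_choose_le {d n : ℕ} (hd : 0 < d) (hdn : d ≤ n) :
    (∑ k ∈ Finset.range (d + 1), (n.choose k : ℝ)) ≤ (Real.exp 1 * n / d) ^ d := by
  have hn0 : (0 : ℝ) < n := by exact_mod_cast hd.trans_le hdn
  set r : ℝ := d / n
  have hr0 : 0 < r := by positivity
  have hr1 : r ≤ 1 := (div_le_one hn0).2 (by exact_mod_cast hdn)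
  have hrhs : (Real.exp 1 * n / d) ^ d = Real.exp d / r ^ d := by
    rw [← Real.exp_one_pow, ← div_pow, div_div_eq_mul_div]
  rw [hrhs, le_div_iff₀ (by positivity), Finset.sum_mul]
  calc ∑ k ∈ Finset.range (d + 1), (n.choose k : ℝ) * r ^ d
      ≤ ∑ k ∈ Finset.range (d + 1), (n.choose k : ℝ) * r ^ k := by
        refine Finset.sum_le_sum fun k hk => ?_
        gcongr ?_ * ?_
        exact pow_le_pow_of_le_one hr0.le hr1 (Finset.mem_range_succ_iff.1 hk)
    _ ≤ ∑ k ∈ Finset.range (n + 1), (n.choose k : ℝ) * r ^ k := by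
        gcongr
    _ = (r + 1) ^ n := by simp [add_pow, mul_comm]
    _ ≤ Real.exp r ^ n := by gcongr; exact Real.add_one_le_exp r
    _ = Real.exp d := by rw [← Real.exp_nat_mul, mul_div_cancel₀ _ hn0.ne']

end Counting

section Penalty

variable {σ W : Type*} {n : ℕ}

/-- The closed region `{x | q w x ≤ 0 for all w ∈ B}` cut out by the constraints in `B`. -/
def feasibleSet (q : W → MvPolynomial σ ℝ) (B : Finset W) : Set (σ → ℝ) :=
  {x | ∀ w ∈ B, eval x (q w) ≤ 0}

/-- The constraints in `B` that are violated at `x`. -/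
noncomputable def violated (q : W → MvPolynomial σ ℝ) (B : Finset W) (x : σ → ℝ) : Finset W :=
  B.filter fun w => 0 < eval x (q w)

/-- The sum of the squared violations of the constraints in `B`, a continuous function vanishing
exactly on `feasibleSet q B`. -/
noncomputable def penalty (q : W → MvPolynomial σ ℝ) (B : Finset W) (x : σ → ℝ) : ℝ :=
  ∑ w ∈ B, max 0 (eval x (q w)) ^ 2

variable (q : W → MvPolynomial σ ℝ) (B : Finset W)

theorem penalty_nonneg (x : σ → ℝ) : 0 ≤ penalty q B x :=
  Finset.sum_nonneg fun _ _ => sq_nonneg _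

theorem continuous_penalty : Continuous (penalty q B) :=
  continuous_finsetSum _ fun w _ => (continuous_const.max (continuous_eval (q w))).pow 2

variable {q B}

theorem penalty_eq_zero_iff {x : σ → ℝ} : penalty q B x = 0 ↔ x ∈ feasibleSet q B := by
  simp [penalty, feasibleSet, Finset.sum_eq_zero_iff_of_nonneg]

theorem penalty_eq_sum_violated (x : σ → ℝ) :
    penalty q B x = ∑ w ∈ violated q B x, eval x (q w) ^ 2 := by
  rw [penalty, violated, Finset.sum_filter]
  refine Finset.sum_congr rfl fun w _ => ?_
  split_ifs with hw
  · rw [max_eq_right hw.le]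
  · rw [max_eq_left (not_lt.1 hw), zero_pow two_ne_zero]

theorem sq_max_zero_le_sq_sub_min_zero (a b : ℝ) : max 0 b ^ 2 ≤ (b - min 0 a) ^ 2 := by
  rcases le_total b 0 with hb | hb
  · simpa [max_eq_left hb] using sq_nonneg (b - min 0 a)
  · rw [max_eq_right hb]
    gcongr
    linarith [min_le_left 0 a]

theorem max_zero_eq_sub_min_zero (a : ℝ) : max 0 a = a - min 0 a := by
  linarith [max_add_min 0 a]

theorem eval_pderiv_eq_zero_of_isMin_add_penalty {p : MvPolynomial σ ℝ} {x : σ → ℝ}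
    (hx : ∀ y, eval x p + penalty q B x ≤ eval y p + penalty q B y) (k : σ) :
    eval x (pderiv k (p + ∑ w ∈ violated q B x, q w ^ 2)) = 0 := by
  -- Freezing the satisfied constraints at their value at `x` turns the penalty into a polynomial
  -- that dominates it and agrees with it at `x`, hence still has a minimum there.
  let majorant := p + ∑ w ∈ B, (q w - C (min 0 (eval x (q w)))) ^ 2
  have hmin (y) : eval x majorant ≤ eval y majorant := by
    simp only [majorant, map_add, map_sum, map_pow, map_sub, eval_C]
    calc eval x p + ∑ w ∈ B, (eval x (q w) - min 0 (eval x (q w))) ^ 2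
        = eval x p + penalty q B x := by simp only [penalty, max_zero_eq_sub_min_zero]
      _ ≤ eval y p + penalty q B y := hx y
      _ ≤ eval y p + ∑ w ∈ B, (eval y (q w) - min 0 (eval x (q w))) ^ 2 := by
        gcongr
        exact Finset.sum_le_sum fun w _ => sq_max_zero_le_sq_sub_min_zero _ _
  rw [← eval_pderiv_eq_zero_of_isLocalMin (p := majorant) (.of_forall hmin) k]
  simp only [majorant, map_add, map_sum, pderiv_pow, violated, Finset.sum_filter]
  congr 1
  refine Finset.sum_congr rfl fun w _ => ?_
  split_ifs with hw
  · simp [min_eq_left hw.le, mul_assoc]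
  · simp [min_eq_right (not_lt.1 hw)]

theorem penalty_add_penalty_pos {B' : Finset W}
    (hdisj : Disjoint (feasibleSet q B) (feasibleSet q B')) (x : σ → ℝ) :
    0 < penalty q B x + penalty q B' x := by
  refine (add_nonneg (penalty_nonneg q B x) (penalty_nonneg q B' x)).lt_of_ne' fun h => ?_
  rw [add_eq_zero_iff_of_nonneg (penalty_nonneg q B x) (penalty_nonneg q B' x),
    penalty_eq_zero_iff, penalty_eq_zero_iff] at h
  exact Set.disjoint_left.1 hdisj h.1 h.2

variable [Fintype σ]

theorem eval_psum_nonneg (hn : Even n) (x : σ → ℝ) : 0 ≤ eval x (psum σ ℝ n) := by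
  simpa [psum] using Finset.sum_nonneg fun k _ => hn.pow_nonneg (x k)

theorem isCompact_setOf_eval_psum_le (hn : Even n) (hn0 : n ≠ 0) (M : ℝ) :
    IsCompact {x : σ → ℝ | eval x (psum σ ℝ n) ≤ M} := by
  refine (isCompact_closedBall (0 : σ → ℝ) (1 + |M|)).of_isClosed_subset
    (isClosed_le (continuous_eval _) continuous_const) fun x hx => ?_
  rw [mem_closedBall_zero_iff, pi_norm_le_iff_of_nonneg (by positivity)]
  intro k
  have hpow : |x k| ^ n ≤ M := by
    rw [hn.pow_abs]
    refine (Finset.single_le_sum (fun i _ => hn.pow_nonneg (x i)) (Finset.mem_univ k)).trans ?_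
    simpa [psum] using hx
  rw [Real.norm_eq_abs]
  by_contra! hlarge
  have hself : |x k| ≤ |x k| ^ n := le_self_pow₀ (by linarith [abs_nonneg M]) hn0
  linarith [le_abs_self M]

theorem exists_isMin_psum_add_penalty (hn : Even n) (hn0 : n ≠ 0) {η M : ℝ} (hη : 0 < η)
    {z : σ → ℝ} (hz : z ∈ feasibleSet q B) (hzM : eval z (psum σ ℝ n) ≤ M) :
    ∃ x, (∀ y, eval x (C η * psum σ ℝ n) + penalty q B x ≤
        eval y (C η * psum σ ℝ n) + penalty q B y) ∧
      eval x (psum σ ℝ n) ≤ M ∧ penalty q B x ≤ η * M := by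
  simp only [map_mul, eval_C]
  have hcont : Continuous fun y => η * eval y (psum σ ℝ n) + penalty q B y :=
    (continuous_const.mul (continuous_eval _)).add (continuous_penalty q B)
  have hz0 : penalty q B z = 0 := penalty_eq_zero_iff.2 hz
  obtain ⟨x, hx⟩ := hcont.exists_forall_le' z <| by
    filter_upwards [(isCompact_setOf_eval_psum_le hn hn0 M).compl_mem_cocompact] with y hy
    have hMy : M ≤ eval y (psum σ ℝ n) := (not_le.1 (by simpa using hy)).le
    rw [hz0, add_zero]
    exact le_add_of_le_of_nonneg (by gcongr; exact hzM.trans hMy) (penalty_nonneg q B y)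
  have hxz : η * eval x (psum σ ℝ n) + penalty q B x ≤ η * M := by
    refine (hx z).trans ?_
    rw [hz0, add_zero]
    gcongr
  refine ⟨x, hx, ?_, ?_⟩
  · exact le_of_mul_le_mul_left (by linarith [penalty_nonneg q B x]) hη
  · linarith [mul_nonneg hη.le (eval_psum_nonneg hn x)]

end Penalty

section DisjointRegions

theorem eventually_forall_mul_lt {X : Type*} [TopologicalSpace X] {K : Set X} (hK : IsCompact K)
    {f : X → ℝ} (hf : ContinuousOn f K) (hpos : ∀ x ∈ K, 0 < f x) (M : ℝ) :
    ∀ᶠ η in nhdsWithin (0 : ℝ) (Set.Ioi 0), ∀ x ∈ K, η * M < f x := by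
  obtain ⟨m, hm, hmf⟩ := hK.exists_forall_le' hf hpos
  have hlim : Filter.Tendsto (fun η : ℝ => η * M) (nhdsWithin 0 (Set.Ioi 0)) (nhds 0) := by
    simpa using (continuous_mul_const M).tendsto 0 |>.mono_left nhdsWithin_le_nhds
  filter_upwards [hlim.eventually_lt_const hm] with η hη x hx
  exact hη.trans_le (hmf x hx)

variable {σ W N : Type*} [Fintype σ] {q : W → MvPolynomial σ ℝ} {B : N → Finset W}

theorem exists_penalty_weight [Finite W] [Finite N] (hq : InGeneralPosition q)
    (hdisj : Pairwise fun μ ν => Disjoint (feasibleSet q (B μ)) (feasibleSet q (B ν)))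
    {K : Set (σ → ℝ)} (hK : IsCompact K) (M : ℝ) :
    ∃ η > 0, ∀ x ∈ K,
      (∀ A : Finset W, Fintype.card σ < A.card → η * M < ∑ w ∈ A, eval x (q w) ^ 2) ∧
      ∀ μ ν, μ ≠ ν → η * (2 * M) < penalty q (B μ) x + penalty q (B ν) x := by
  have hgen : ∀ᶠ η in nhdsWithin (0 : ℝ) (Set.Ioi 0), ∀ A : Finset W,
      Fintype.card σ < A.card → ∀ x ∈ K, η * M < ∑ w ∈ A, eval x (q w) ^ 2 := by
    simp only [Filter.eventually_all]
    refine fun A hA => eventually_forall_mul_lt hK (Continuous.continuousOn ?_) (fun x _ => ?_) M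
    · exact continuous_finsetSum _ fun w _ => (continuous_eval (q w)).pow 2
    · obtain ⟨w, hw, hxw⟩ := hq A hA x
      exact Finset.sum_pos' (fun _ _ => sq_nonneg _) ⟨w, hw, by positivity⟩
  have hsep : ∀ᶠ η in nhdsWithin (0 : ℝ) (Set.Ioi 0), ∀ μ ν, μ ≠ ν →
      ∀ x ∈ K, η * (2 * M) < penalty q (B μ) x + penalty q (B ν) x := by
    simp only [Filter.eventually_all]
    exact fun μ ν hμν => eventually_forall_mul_lt hK
      ((continuous_penalty q _).add (continuous_penalty q _)).continuousOn
      (fun x _ => penalty_add_penalty_pos (hdisj hμν) x) _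
  obtain ⟨η, hη, hηgen, hηsep⟩ := (eventually_mem_nhdsWithin.and (hgen.and hsep)).exists
  exact ⟨η, hη, fun x hx => ⟨fun A hA => hηgen A hA x hx, fun μ ν h => hηsep μ ν h x hx⟩⟩

theorem exists_separated_criticalPoints [Finite W] [Finite N] {n : ℕ} (hn : Even n) (hn0 : n ≠ 0)
    (hq : InGeneralPosition q) (hne : ∀ ν, (feasibleSet q (B ν)).Nonempty)
    (hdisj : Pairwise fun μ ν => Disjoint (feasibleSet q (B μ)) (feasibleSet q (B ν))) :
    ∃ η > 0, ∃ (x : N → σ → ℝ) (A : N → Finset W), Function.Injective x ∧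
      (∀ ν, (A ν).card ≤ Fintype.card σ) ∧
      ∀ ν k, eval (x ν) (pderiv k (C η * psum σ ℝ n + ∑ w ∈ A ν, q w ^ 2)) = 0 := by
  choose z hz using hne
  obtain ⟨M, hM⟩ := (Set.finite_range fun ν => eval (z ν) (psum σ ℝ n)).bddAbove
  obtain ⟨η, hη, hweight⟩ :=
    exists_penalty_weight hq hdisj (isCompact_setOf_eval_psum_le hn hn0 M) M
  choose x hmin hxM hpen using fun ν =>
    exists_isMin_psum_add_penalty hn hn0 hη (hz ν) (hM ⟨ν, rfl⟩)
  refine ⟨η, hη, x, fun ν => violated q (B ν) (x ν), fun μ ν hμν => ?_, fun ν => ?_,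
    fun ν k => eval_pderiv_eq_zero_of_isMin_add_penalty (hmin ν) k⟩
  · by_contra hne
    have hsep := (hweight (x ν) (hxM ν)).2 μ ν hne
    have hμ := hpen μ
    rw [hμν] at hμ
    linarith [hpen ν]
  · by_contra! hcard
    have hgen := (hweight (x ν) (hxM ν)).1 _ hcard
    rw [← penalty_eq_sum_violated] at hgen
    exact (hpen ν).not_gt hgen

theorem card_le_of_pairwise_disjoint_feasibleSet [Fintype W] [Fintype N] {s : ℕ}
    (hdeg : ∀ w, (q w).totalDegree ≤ s) (hq : InGeneralPosition q)
    (hne : ∀ ν, (feasibleSet q (B ν)).Nonempty)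
    (hdisj : Pairwise fun μ ν => Disjoint (feasibleSet q (B μ)) (feasibleSet q (B ν))) :
    Fintype.card N ≤ (2 * s + 1) ^ Fintype.card σ *
      ∑ k ∈ Finset.range (Fintype.card σ + 1), (Fintype.card W).choose k := by
  classical
  obtain ⟨η, hη, x, A, hx, hA, hcrit⟩ := exists_separated_criticalPoints (n := 2 * s + 2)
    ⟨s + 1, by ring⟩ (by lia) hq hne hdisj
  have hfiber : ∀ A₀ ∈ Finset.univ.image A,
      (Finset.univ.filter fun ν => A ν = A₀).card ≤ (2 * s + 1) ^ Fintype.card σ := by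
    intro A₀ _
    have hdegA : (∑ w ∈ A₀, q w ^ 2).totalDegree ≤ 2 * s :=
      totalDegree_finsetSum_le fun w _ => (totalDegree_pow _ _).trans (by gcongr; exact hdeg w)
    rw [← Finset.card_image_of_injective _ hx]
    refine card_criticalPoints_le hdegA hη.ne' _ fun y hy k => ?_
    obtain ⟨ν, hν, rfl⟩ := Finset.mem_image.1 hy
    rw [← (Finset.mem_filter.1 hν).2]
    exact hcrit ν k
  calc Fintype.card N = (Finset.univ : Finset N).card := rfl
    _ ≤ (2 * s + 1) ^ Fintype.card σ * (Finset.univ.image A).card :=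
      Finset.card_le_mul_card_image _ _ hfiber
    _ ≤ (2 * s + 1) ^ Fintype.card σ *
        (Finset.univ.filter fun A₀ : Finset W => A₀.card ≤ Fintype.card σ).card := by
      gcongr
      simpa [Finset.subset_iff] using hA
    _ = _ := by rw [card_filter_card_le]

end DisjointRegions

section SignConditions

/-- The walls of the three cells that replace `p < 0`, `p = 0` and `0 < p` for a real quantity
`p`: the first and last cell are half-lines with one wall, the middle cell is an interval with two
walls. -/
inductive Wall
  | negTop
  | zeroBot
  | zeroTop
  | posBot
  deriving DecidableEq

namespace Wall

instance : Fintype Wall :=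
  ⟨{negTop, zeroBot, zeroTop, posBot}, fun w => by cases w <;> simp⟩

/-- The sign whose cell is bounded by the wall. -/
def sign : Wall → SignType
  | negTop => -1
  | zeroBot | zeroTop => 0
  | posBot => 1

/-- The coefficient `1` for upper and `-1` for lower bounds: a wall at level `u` imposes
`orient * p ≤ u`, so that the level of a lower bound is the negative of that bound. -/
def orient : Wall → ℝ
  | negTop | zeroTop => 1
  | zeroBot | posBot => -1

/-- The admissible levels of a wall when all nonzero values of interest have absolute value at
least `a`: the cell boundaries then separate `0` from these values, and `± a / 2` separate the
cells. -/
def levels (a : ℝ) : Wall → Set ℝ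
  | negTop | posBot => Set.Ioo (-a) (-(a / 2))
  | zeroBot | zeroTop => Set.Ioo 0 (a / 2)

theorem infinite_levels {a : ℝ} (ha : 0 < a) (w : Wall) : (w.levels a).Infinite := by
  cases w <;> exact Set.Ioo_infinite (by linarith)

theorem forall_iff {C : Wall → Prop} :
    (∀ w, C w) ↔ C negTop ∧ C zeroBot ∧ C zeroTop ∧ C posBot :=
  ⟨fun h => ⟨h _, h _, h _, h _⟩, fun h w => by cases w <;> simp only [h]⟩

end Wall

/-- The closed interval replacing the set of reals of sign `τ` when the walls are at levels `u`. -/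
def signCell (u : Wall → ℝ) (τ : SignType) : Set ℝ :=
  {p | ∀ w : Wall, w.sign = τ → w.orient * p ≤ u w}

section SignCell

variable {u : Wall → ℝ}

theorem signCell_neg_one : signCell u (-1) = Set.Iic (u .negTop) := by
  ext p
  simp [signCell, Wall.forall_iff, Wall.sign, Wall.orient]

theorem signCell_zero : signCell u 0 = Set.Icc (-u .zeroBot) (u .zeroTop) := by
  ext p
  simp [signCell, Wall.forall_iff, Wall.sign, Wall.orient, neg_le]

theorem signCell_one : signCell u 1 = Set.Ici (-u .posBot) := by
  ext p
  simp [signCell, Wall.forall_iff, Wall.sign, Wall.orient, neg_le]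

variable {a : ℝ} (hu : ∀ w, u w ∈ w.levels a)
include hu

theorem mem_signCell_sign {p : ℝ} (hp : p ≠ 0 → a ≤ |p|) : p ∈ signCell u (SignType.sign p) := by
  obtain ⟨⟨hneg, -⟩, ⟨hbot, -⟩, ⟨htop, -⟩, ⟨hpos, -⟩⟩ := Wall.forall_iff.1 hu
  rcases lt_trichotomy p 0 with h | rfl | h
  · rw [sign_neg h, signCell_neg_one, Set.mem_Iic]
    linarith [hp h.ne, abs_of_neg h]
  · rw [sign_zero, signCell_zero]
    exact ⟨neg_nonpos.2 hbot.le, htop.le⟩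
  · rw [sign_pos h, signCell_one, Set.mem_Ici]
    linarith [hp h.ne', abs_of_pos h]

theorem pairwise_disjoint_signCell :
    Pairwise fun τ τ' => Disjoint (signCell u τ) (signCell u τ') := by
  obtain ⟨⟨-, hneg⟩, ⟨hbot_pos, hbot⟩, ⟨-, htop⟩, ⟨-, hpos⟩⟩ := Wall.forall_iff.1 hu
  have hneg_zero : Disjoint (signCell u (-1)) (signCell u 0) := by
    rw [signCell_neg_one, signCell_zero, Set.disjoint_left]
    exact fun p hp hp' => by linarith [Set.mem_Iic.1 hp, hp'.1]
  have hneg_pos : Disjoint (signCell u (-1)) (signCell u 1) := by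
    rw [signCell_neg_one, signCell_one, Set.Iic_disjoint_Ici]
    linarith
  have hzero_pos : Disjoint (signCell u 0) (signCell u 1) := by
    rw [signCell_zero, signCell_one, Set.disjoint_left]
    exact fun p hp hp' => by linarith [hp.2, Set.mem_Ici.1 hp']
  rintro (_ | _ | _) (_ | _ | _) hne
  exacts [absurd rfl hne, hneg_zero.symm, hzero_pos, hneg_zero, absurd rfl hne, hneg_pos,
    hzero_pos.symm, hneg_pos.symm, absurd rfl hne]

end SignCell

variable {σ ι : Type*}

/-- The sign conditions on the family `P` that are realized at some point. -/
def realizableSigns (P : ι → MvPolynomial σ ℝ) : Set (ι → SignType) :=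
  {ν | ∃ x, ∀ i, SignType.sign (eval x (P i)) = ν i}

/-- The constraint `orient * P i ≤ u w` imposed by the wall `w = (i, _)`, in the form `· ≤ 0`. -/
noncomputable def wallConstraint (P : ι → MvPolynomial σ ℝ) (u : ι × Wall → ℝ) (w : ι × Wall) :
    MvPolynomial σ ℝ :=
  C w.2.orient * P w.1 - C (u w)

/-- The walls of the cells of the sign condition `ν`. -/
def wallsOf [Fintype ι] (ν : ι → SignType) : Finset (ι × Wall) :=
  Finset.univ.filter fun w => w.2.sign = ν w.1

theorem mem_feasibleSet_wallConstraint [Fintype ι] {P : ι → MvPolynomial σ ℝ} {u : ι × Wall → ℝ}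
    {ν : ι → SignType} {x : σ → ℝ} :
    x ∈ feasibleSet (wallConstraint P u) (wallsOf ν) ↔
      ∀ i, eval x (P i) ∈ signCell (fun w => u (i, w)) (ν i) := by
  simp [feasibleSet, wallConstraint, wallsOf, signCell]

theorem totalDegree_wallConstraint_le {P : ι → MvPolynomial σ ℝ} {s : ℕ}
    (hdeg : ∀ i, (P i).totalDegree ≤ s) (u : ι × Wall → ℝ) (w : ι × Wall) :
    (wallConstraint P u w).totalDegree ≤ s := by
  have hmul := totalDegree_mul (C w.2.orient) (P w.1)
  have hP := hdeg w.1
  have hsub := totalDegree_sub_C_le (C w.2.orient * P w.1) (u w)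
  rw [totalDegree_C] at hmul
  rw [wallConstraint]
  lia

theorem exists_pos_forall_le_abs [Finite ι] (f : ι → ℝ) :
    ∃ a > 0, ∀ i, f i ≠ 0 → a ≤ |f i| := by
  have hsmall : ∀ᶠ a in nhdsWithin (0 : ℝ) (Set.Ioi 0), ∀ i, f i ≠ 0 → a ≤ |f i| :=
    Filter.eventually_all.2 fun i => Filter.eventually_all.2 fun hi =>
      nhdsWithin_le_nhds (eventually_le_nhds (abs_pos.2 hi))
  exact (eventually_mem_nhdsWithin.and hsmall).exists

theorem ncard_realizableSigns_le [Fintype σ] [Fintype ι] {P : ι → MvPolynomial σ ℝ} {s : ℕ}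
    (hdeg : ∀ i, (P i).totalDegree ≤ s) :
    (realizableSigns P).ncard ≤ (2 * s + 1) ^ Fintype.card σ *
      ∑ k ∈ Finset.range (Fintype.card σ + 1), (4 * Fintype.card ι).choose k := by
  have := Fintype.ofFinite (realizableSigns P)
  choose x hx using fun ν : realizableSigns P => ν.2
  obtain ⟨a, ha, hax⟩ := exists_pos_forall_le_abs
    fun νi : realizableSigns P × ι => eval (x νi.1) (P νi.2)
  obtain ⟨u, hu, hgen⟩ := exists_inGeneralPosition_sub_C
    (fun w : ι × Wall => C w.2.orient * P w.1) fun w => Wall.infinite_levels ha w.2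
  have hcard := card_le_of_pairwise_disjoint_feasibleSet (q := wallConstraint P u)
    (B := fun ν : realizableSigns P => wallsOf ν) (totalDegree_wallConstraint_le hdeg u) hgen
    (fun ν => ⟨x ν, mem_feasibleSet_wallConstraint.2 fun i => ?_⟩) (fun μ ν hμν => ?_)
  · have hWall : Fintype.card Wall = 4 := rfl
    rwa [Fintype.card_prod, hWall, mul_comm (Fintype.card ι), ← Nat.card_eq_fintype_card,
      Nat.card_coe_set_eq] at hcard
  · rw [← hx ν i]
    exact mem_signCell_sign (fun w => hu (i, w)) (hax (ν, i))
  · obtain ⟨i, hi⟩ := Function.ne_iff.1 (Subtype.coe_injective.ne hμν)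
    rw [Set.disjoint_left]
    intro y hyμ hyν
    rw [mem_feasibleSet_wallConstraint] at hyμ hyν
    exact Set.disjoint_left.1 (pairwise_disjoint_signCell (fun w => hu (i, w)) hi) (hyμ i) (hyν i)

end SignConditions

end MilnorThom

theorem milnor_thom_sign_conditions_general {σ ι : Type*} [Fintype σ] [Fintype ι] [Nonempty σ]
    {s : ℕ} (hs : 1 ≤ s) (hcard : Fintype.card σ ≤ 4 * Fintype.card ι)
    (P : ι → MvPolynomial σ ℝ) (hdeg : ∀ i, (P i).totalDegree ≤ s) :
    (Set.ncard {ν : ι → SignType | ∃ x : σ → ℝ, ∀ i, SignType.sign (eval x (P i)) = ν i} : ℝ) ≤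
      (12 * Real.exp 1 * s * Fintype.card ι / Fintype.card σ) ^ Fintype.card σ := by
  set d := Fintype.card σ
  set ℓ := Fintype.card ι
  have hncard : ((MilnorThom.realizableSigns P).ncard : ℝ) ≤
      (2 * s + 1) ^ d * ∑ k ∈ Finset.range (d + 1), ((4 * ℓ).choose k : ℝ) := by
    exact_mod_cast MilnorThom.ncard_realizableSigns_le hdeg
  have hs3 : (2 * s + 1 : ℝ) ≤ 3 * s := by exact_mod_cast (by lia : 2 * s + 1 ≤ 3 * s)
  calc ((MilnorThom.realizableSigns P).ncard : ℝ)
      ≤ (2 * s + 1) ^ d * ∑ k ∈ Finset.range (d + 1), ((4 * ℓ).choose k : ℝ) := hncard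
    _ ≤ (3 * s) ^ d * (Real.exp 1 * (4 * ℓ : ℕ) / d) ^ d := by
      gcongr
      exact MilnorThom.sum_range_choose_le Fintype.card_pos hcard
    _ = (12 * Real.exp 1 * s * ℓ / d) ^ d := by
      rw [← mul_pow]
      push_cast
      ring

/-- **Milnor–Thom.** Any `ℓ` polynomials in `ℝ[x_1,…,x_d]`, each of degree at most `s`
(with `2 ≤ d ≤ ℓ`, `s ≥ 1`), have at most `(50·s·ℓ/d)^d` realizable sign conditions. -/
theorem milnor_thom_sign_conditions (d ℓ s : ℕ) (hd : 2 ≤ d) (hℓ : d ≤ ℓ) (hs : 1 ≤ s)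
    (P : Fin ℓ → MvPolynomial (Fin d) ℝ)
    (hdeg : ∀ j, (P j).totalDegree ≤ s) :
    (Set.ncard {ν : Fin ℓ → SignType |
        ∃ x : Fin d → ℝ, ∀ j, SignType.sign (eval x (P j)) = ν j} : ℝ)
      ≤ ((50 * s * ℓ : ℝ) / d) ^ d := by
  have : NeZero d := ⟨by lia⟩
  have hexp : 12 * Real.exp 1 ≤ 50 := by linarith [Real.exp_one_lt_d9]
  have hcard : Fintype.card (Fin d) ≤ 4 * Fintype.card (Fin ℓ) := by
    simp only [Fintype.card_fin]
    lia
  have hbound := milnor_thom_sign_conditions_general hs hcard P hdeg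
  simp only [Fintype.card_fin] at hbound
  refine hbound.trans ?_
  gcongr
end

section
/- (Guth's generalized polynomial partitioning.) Let S be a finite family of semi-algebraic sets in ℝ^d, each of dimension at most r and complexity at most b. There exist constants C = C(d) > 0 and c = c(b,d) > 0 such that for every integer k ≥ 1 there is a tuple (P_1,…,P_k) of d-variate real polynomials with deg P_j ≤ C·2^{j/d} for each j, such that all 2^k strict sign conditions of (P_1,…,P_k) are realizable and the realization of each strict sign condition intersects at most |S|/(c·2^{k(1−r/d)}) sets from S. -/
open MvPolynomial

/-- A set `S ⊆ ℝ^d` is semi-algebraic of complexity at most `b`: it is the locus of points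
satisfying a Boolean formula with at most `b` atoms of the form `P(x) < 0` or `P(x) = 0`,
where each `P` is a `d`-variate real polynomial of degree at most `b`. -/
def IsSemiAlgebraicOfComplexity (d b : ℕ) (S : Set (Fin d → ℝ)) : Prop :=
  ∃ (P : Fin b → MvPolynomial (Fin d) ℝ) (τ : Fin b → Bool) (φ : (Fin b → Prop) → Prop),
    (∀ i, (P i).totalDegree ≤ b) ∧
    S = {x | φ fun i => if τ i then eval x (P i) < 0 else eval x (P i) = 0}

/-- The realization of the strict sign condition `ν ∈ {−1,1}^k` (encoded by `Bool`, with
`true ↦ +1` and `false ↦ −1`) of the tuple of polynomials `(P 0, …, P (k-1))`. -/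
def StrictRealization {d k : ℕ} (P : Fin k → MvPolynomial (Fin d) ℝ)
    (ν : Fin k → Bool) : Set (Fin d → ℝ) :=
  {x | ∀ j, if ν j then 0 < eval x (P j) else eval x (P j) < 0}

/-!
The argument is Guth's. Give the `j`-th polynomial a block of about `2 ^ (j + 2)` coefficients,
which a degree of order `2 ^ (j / d)` allows. A weight on the `2 ^ k` strict sign conditions is
constant as soon as its Fourier coefficients indexed by the nonempty sets `A` of polynomials vanish.
The coefficient indexed by `A` is odd in every block `j ∈ A`, so charging it to the block `max A`
makes the system triangular, and a Borsuk–Ulam theorem for products of spheres provides a common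
zero for two weights at once. That theorem is combinatorial: take a fine Kuhn triangulation of a
cube whose boundary is glued antipodally block by block, and label its vertices by signs. Modulo 2,
the sum over all simplices of a cup product of coboundaries of labels depends only on the effect of
the gluing on the labels; for explicit labels it is 1, so some small simplex sees every function
change sign. The two weights are the number of points of a grid in each cell, which makes every sign
condition realizable, and the number of sets `T` that meet the cell, both in a continuous
approximation; compactness removes the second approximation.

A constant weight equals its total over `2 ^ k`, so it remains to bound the number of sign cells met
by one set `T` of dimension at most `r` by `O(D ^ r)`, with `D` the sum of the degrees. Write `T` as
a finite union of zero sets of nonnegative polynomials inside open sets. After a generic shear, the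
horizontal slice of dimension `d - r` through a chosen point of each cell contains spheres around
that point which avoid `T`, so that each cell traps a critical point of a Lagrange system in which
only `r` equations see the degree `D`; a Bézout-type bound, proved by linear independence of the
multiples of the equations, counts these points.
-/

namespace PolynomialPartitioning

/-! ### Cup products of coboundaries in characteristic two -/

section Cochain

variable {X R : Type*}

/-- The coboundary of the cochain `f` on ordered simplices, in characteristic two: the sum of `f`
over the faces of the simplex with vertex list `l`. -/
def coboundary [AddCommMonoid R] (f : List X → R) (l : List X) : R :=
  ∑ t ∈ Finset.range l.length, f (l.eraseIdx t)

/-- The cup product `δa₁ ⌣ ⋯ ⌣ δaᵣ` of coboundaries of vertex functions in characteristic two, on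
the ordered simplex with vertex list `l`. Vertices after the first `r + 1` are ignored. -/
def cupCoboundaries [CommRing R] : List (X → R) → List X → R
  | [], _ => 1
  | a :: as, x :: y :: l => (a x + a y) * cupCoboundaries as (y :: l)
  | _ :: _, _ => 0

/-- The cup product `δa₁ ⌣ ⋯ ⌣ δaᵣ ⌣ h ⌣ δb₁ ⌣ ⋯ ⌣ δbₛ`, whose coboundary is
`δa₁ ⌣ ⋯ ⌣ δaᵣ ⌣ δh ⌣ δb₁ ⌣ ⋯ ⌣ δbₛ`. -/
def cupCoboundariesInsert [CommRing R] (h : X → R) (bs : List (X → R)) :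
    List (X → R) → List X → R
  | [], [] => 0
  | [], x :: l => h x * cupCoboundaries bs (x :: l)
  | a :: as, x :: y :: l => (a x + a y) * cupCoboundariesInsert h bs as (y :: l)
  | _ :: _, _ => 0

lemma coboundary_cons [AddCommMonoid R] (f : List X → R) (x : X) (l : List X) :
    coboundary f (x :: l) = f l + coboundary (fun l' ↦ f (x :: l')) l := by
  simp [coboundary, Finset.sum_range_succ', add_comm]

lemma coboundary_const_mul [NonUnitalNonAssocSemiring R] (c : R) (f : List X → R) (l : List X) :
    coboundary (fun l' ↦ c * f l') l = c * coboundary f l := by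
  simp [coboundary, Finset.mul_sum]

variable [CommRing R]

lemma cupCoboundaries_append_add_cons (a h : X → R) (bs as : List (X → R)) (l : List X) :
    cupCoboundaries (as ++ (a + h) :: bs) l =
      cupCoboundaries (as ++ a :: bs) l + cupCoboundaries (as ++ h :: bs) l := by
  induction as generalizing l with
  | nil =>
    match l with
    | [] | [x] => simp [cupCoboundaries]
    | x :: y :: l => simp only [List.nil_append, cupCoboundaries, Pi.add_apply]; ring
  | cons b as ih =>
    match l with
    | [] | [x] => simp [cupCoboundaries]
    | x :: y :: l => simp only [List.cons_append, cupCoboundaries, ih]; ring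

lemma cupCoboundaries_ofFn (n : ℕ) (a : Fin n → X → R) (f : ℕ → X) :
    cupCoboundaries (List.ofFn a) ((List.range (n + 1)).map f) =
      ∏ t : Fin n, (a t (f t) + a t (f (t + 1))) := by
  induction n generalizing f with
  | zero => simp [cupCoboundaries]
  | succ n ih =>
    rw [List.ofFn_succ, List.range_succ_eq_map, List.map_cons, List.map_map,
      List.range_succ_eq_map, List.map_cons, cupCoboundaries, Fin.prod_univ_succ,
      ← List.map_cons, ← List.range_succ_eq_map, ih]
    simp

variable [CharP R 2]

lemma coboundary_cupCoboundaries (as : List (X → R)) (l : List X)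
    (hl : l.length = as.length + 2) : coboundary (cupCoboundaries as) l = 0 := by
  induction as generalizing l with
  | nil =>
    match l, hl with
    | [x, y], _ => simp [coboundary, cupCoboundaries, CharTwo.two_eq_zero]
  | cons a as ih =>
    match l, hl with
    | x :: y :: z :: l, hl =>
      have hface := ih (y :: z :: l) (by simpa using hl)
      rw [coboundary_cons] at hface
      rw [coboundary_cons, coboundary_cons]
      simp only [cupCoboundaries]
      rw [coboundary_const_mul]
      linear_combination
        (a x + a y) * hface + CharTwo.add_self_eq_zero (a z * cupCoboundaries as (z :: l))

lemma coboundary_cupCoboundariesInsert (h : X → R) (bs as : List (X → R)) (l : List X)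
    (hl : l.length = as.length + bs.length + 2) :
    coboundary (cupCoboundariesInsert h bs as) l = cupCoboundaries (as ++ h :: bs) l := by
  induction as generalizing l with
  | nil =>
    match l, hl with
    | x :: y :: l, hl =>
      have hface := coboundary_cupCoboundaries bs (x :: y :: l) (by simpa using hl)
      rw [coboundary_cons] at hface
      rw [coboundary_cons]
      simp only [cupCoboundariesInsert, cupCoboundaries, List.nil_append]
      rw [coboundary_const_mul]
      linear_combination h x * hface - CharTwo.add_self_eq_zero (h x * cupCoboundaries bs (y :: l))
  | cons a as ih =>
    match l, hl with
    | [x, y], hl => simp at hl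
    | x :: y :: z :: l, hl =>
      have hface := ih (y :: z :: l) (by simp only [List.length_cons] at hl ⊢; omega)
      rw [coboundary_cons] at hface
      rw [coboundary_cons, coboundary_cons]
      simp only [cupCoboundariesInsert, cupCoboundaries, List.cons_append]
      rw [coboundary_const_mul]
      linear_combination (a x + a y) * hface +
        CharTwo.add_self_eq_zero (a z * cupCoboundariesInsert h bs as (z :: l))

end Cochain

section Gluing

variable {X R J I : Type*}

/-- A cochain is compatible with gluing along the maps `T j`, each applied only to simplices whose
vertices all satisfy `B j`. -/
def IsGlued (B : J → X → Prop) (T : J → X → X) (f : List X → R) : Prop :=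
  ∀ j l, (∀ u ∈ l, B j u) → f (l.map (T j)) = f l

/-- A vertex function changes by a constant under each gluing map, so that its coboundary is
compatible with the gluing. -/
def IsGluedUpToConst [Add R] (B : J → X → Prop) (T : J → X → X) (a : X → R) : Prop :=
  ∀ j, ∃ c, ∀ u, B j u → a (T j u) = a u + c

variable {B : J → X → Prop} {T : J → X → X}

lemma IsGluedUpToConst.add_of_invariant [AddCommSemigroup R] {a h : X → R}
    (ha : IsGluedUpToConst B T a) (hh : ∀ j u, B j u → h (T j u) = h u) :
    IsGluedUpToConst B T (a + h) := fun j ↦ by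
  obtain ⟨c, hc⟩ := ha j
  exact ⟨c, fun u hu ↦ by simp only [Pi.add_apply, hc u hu, hh j u hu, add_right_comm]⟩

variable [CommRing R] [CharP R 2]

lemma IsGluedUpToConst.add_apply_eq {a : X → R} (ha : IsGluedUpToConst B T a) {j : J} {x y : X}
    (hx : B j x) (hy : B j y) : a (T j x) + a (T j y) = a x + a y := by
  obtain ⟨c, hc⟩ := ha j
  rw [hc x hx, hc y hy]
  linear_combination CharTwo.add_self_eq_zero c

lemma isGlued_cupCoboundaries {as : List (X → R)} (has : ∀ a ∈ as, IsGluedUpToConst B T a) :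
    IsGlued B T (cupCoboundaries as) := by
  induction as with
  | nil => intro j l _; simp [cupCoboundaries]
  | cons a as ih =>
    intro j l hl
    match l with
    | [] | [x] => simp [cupCoboundaries]
    | x :: y :: l =>
      obtain ⟨hx, hyl⟩ := List.forall_mem_cons.1 hl
      have htail := ih (List.forall_mem_cons.1 has).2 j (y :: l) hyl
      simp only [List.map_cons, cupCoboundaries] at htail ⊢
      rw [htail, (has a (by simp)).add_apply_eq hx (hyl y (by simp))]

lemma isGlued_cupCoboundariesInsert {h : X → R} (hh : ∀ j u, B j u → h (T j u) = h u)
    {bs as : List (X → R)} (hbs : ∀ b ∈ bs, IsGluedUpToConst B T b)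
    (has : ∀ a ∈ as, IsGluedUpToConst B T a) :
    IsGlued B T (cupCoboundariesInsert h bs as) := by
  induction as with
  | nil =>
    intro j l hl
    match l with
    | [] => simp [cupCoboundariesInsert]
    | x :: l =>
      have htail := isGlued_cupCoboundaries hbs j (x :: l) hl
      simp only [List.map_cons, cupCoboundariesInsert] at htail ⊢
      rw [htail, hh j x (hl x (by simp))]
  | cons a as ih =>
    intro j l hl
    match l with
    | [] | [x] => simp [cupCoboundariesInsert]
    | x :: y :: l =>
      obtain ⟨hx, hyl⟩ := List.forall_mem_cons.1 hl
      have htail := ih (List.forall_mem_cons.1 has).2 j (y :: l) hyl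
      simp only [List.map_cons, cupCoboundariesInsert] at htail ⊢
      rw [htail, (has a (by simp)).add_apply_eq hx (hyl y (by simp))]

lemma sum_cupCoboundaries_append_add_cons {S : Finset I} {p : I → List X}
    (hcycle : ∀ f : List X → R, IsGlued B T f → ∑ i ∈ S, coboundary f (p i) = 0)
    {as bs : List (X → R)} {a h : X → R} (has : ∀ a ∈ as, IsGluedUpToConst B T a)
    (hbs : ∀ b ∈ bs, IsGluedUpToConst B T b) (hh : ∀ j u, B j u → h (T j u) = h u)
    (hlen : ∀ i ∈ S, (p i).length = as.length + bs.length + 2) :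
    ∑ i ∈ S, cupCoboundaries (as ++ (a + h) :: bs) (p i) =
      ∑ i ∈ S, cupCoboundaries (as ++ a :: bs) (p i) := by
  have hsplit : ∀ i ∈ S, cupCoboundaries (as ++ (a + h) :: bs) (p i) =
      cupCoboundaries (as ++ a :: bs) (p i) + coboundary (cupCoboundariesInsert h bs as) (p i) :=
    fun i hi ↦ by
      rw [cupCoboundaries_append_add_cons, coboundary_cupCoboundariesInsert h bs as _ (hlen i hi)]
  rw [Finset.sum_congr rfl hsplit, Finset.sum_add_distrib,
    hcycle _ (isGlued_cupCoboundariesInsert hh hbs has), add_zero]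

lemma sum_cupCoboundaries_map_add {S : Finset I} {p : I → List X}
    (hcycle : ∀ f : List X → R, IsGlued B T f → ∑ i ∈ S, coboundary f (p i) = 0)
    {as : List ((X → R) × (X → R))} (has : ∀ a ∈ as, IsGluedUpToConst B T a.1)
    (hinv : ∀ a ∈ as, ∀ j u, B j u → a.2 (T j u) = a.2 u)
    {cs : List (X → R)} (hcs : ∀ c ∈ cs, IsGluedUpToConst B T c)
    (hlen : ∀ i ∈ S, (p i).length = cs.length + as.length + 1) :
    ∑ i ∈ S, cupCoboundaries (cs ++ as.map fun a ↦ a.1 + a.2) (p i) =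
      ∑ i ∈ S, cupCoboundaries (cs ++ as.map Prod.fst) (p i) := by
  induction as generalizing cs with
  | nil => rfl
  | cons a as ih =>
    obtain ⟨ha, has⟩ := List.forall_mem_cons.1 has
    obtain ⟨hainv, hinv⟩ := List.forall_mem_cons.1 hinv
    have htail := ih has hinv (cs := cs ++ [a.1 + a.2])
      (by simpa [or_imp, forall_and] using ⟨hcs, ha.add_of_invariant hainv⟩)
      (fun i hi ↦ by rw [hlen i hi]; simp only [List.length_append, List.length_cons]; grind)
    simp only [List.append_assoc, List.singleton_append] at htail
    simp only [List.map_cons]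
    rw [htail]
    refine sum_cupCoboundaries_append_add_cons hcycle hcs ?_ hainv fun i hi ↦ ?_
    · simpa using fun b h hb ↦ has (b, h) hb
    · rw [hlen i hi, List.length_map, List.length_cons]; omega

end Gluing

/-! ### The mirrored Kuhn triangulation of a cube -/

section Lattice

variable {ι J : Type*} [DecidableEq J]

/-- The reflection of `ℤ^ι` that negates all coordinates of block `j`. -/
def negBlock (block : ι → J) (j : J) (u : ι → ℤ) : ι → ℤ :=
  fun c ↦ if block c = j then -u c else u c

/-- The points `u` lying on the part of the boundary of `[-m, m]^ι` where some coordinate of block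
`j` is extreme. -/
def OnBlockBoundary (block : ι → J) (m : ℕ) (j : J) (u : ι → ℤ) : Prop :=
  ∃ c, block c = j ∧ |u c| = m

end Lattice

/-- A simplex of the triangulation of `ℤ^(n+1)` obtained by reflecting the Kuhn triangulation of the
positive orthant in the coordinate hyperplanes. It lies in the orthant given by `sign`, in the unit
cube whose vertex nearest to the origin has absolute values `corner`, and is reached by increasing
the absolute values one after the other, that of coordinate `c` at time `time c`. -/
@[ext] structure KuhnSimplex (n : ℕ) where
  sign : Fin (n + 1) → ℤˣ
  corner : Fin (n + 1) → ℕ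
  time : Equiv.Perm (Fin (n + 1))

namespace KuhnSimplex

variable {n : ℕ}

/-- The vertices of a Kuhn simplex, meaningful for `t ≤ n + 1`. -/
def vertex (I : KuhnSimplex n) (t : ℕ) : Fin (n + 1) → ℤ :=
  fun c ↦ I.sign c * (I.corner c + if (I.time c : ℕ) < t then 1 else 0)

/-- The ordered list of all `n + 2` vertices. -/
def vertices (I : KuhnSimplex n) : List (Fin (n + 1) → ℤ) := (List.range (n + 2)).map I.vertex

/-- The neighbour across the face opposite to vertex `t + 1`, where `a = t` and `b = t + 1`: the
increments at times `a` and `b` are made in the other order. -/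
def swapTimes (I : KuhnSimplex n) (a b : Fin (n + 1)) : KuhnSimplex n :=
  { I with time := I.time.trans (Equiv.swap a b) }

/-- The mirror image in the coordinate hyperplane orthogonal to direction `c`. -/
def mirror (I : KuhnSimplex n) (c : Fin (n + 1)) : KuhnSimplex n :=
  { I with sign := Function.update I.sign c (-I.sign c) }

/-- The mirror image under `negBlock`. -/
def mirrorBlock {J : Type*} [DecidableEq J] (I : KuhnSimplex n) (block : Fin (n + 1) → J) (j : J) :
    KuhnSimplex n :=
  { I with sign := fun c ↦ if block c = j then -I.sign c else I.sign c }

/-- The neighbour across the face opposite to vertex `0`, away from the origin. -/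
def next (I : KuhnSimplex n) : KuhnSimplex n where
  sign := I.sign
  corner := Function.update I.corner (I.time.symm 0) (I.corner (I.time.symm 0) + 1)
  time := I.time.trans (finRotate (n + 1)).symm

/-- The neighbour across the face opposite to the last vertex, towards the origin, if it lies in the
same orthant. -/
def prev (I : KuhnSimplex n) : KuhnSimplex n where
  sign := I.sign
  corner := Function.update I.corner (I.time.symm (Fin.last n))
    (I.corner (I.time.symm (Fin.last n)) - 1)
  time := I.time.trans (finRotate (n + 1))

/-- The Kuhn simplices that subdivide the cube `[-m, m]^(n+1)`. -/
def inCube (n m : ℕ) : Finset (KuhnSimplex n) :=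
  (Finset.univ ×ˢ Fintype.piFinset (fun _ ↦ Finset.range m) ×ˢ Finset.univ).map
    ⟨fun I ↦ ⟨I.1, I.2.1, I.2.2⟩, fun I I' h ↦ by
      simpa only [KuhnSimplex.mk.injEq, Prod.ext_iff] using h⟩

@[simp] lemma mem_inCube {m : ℕ} {I : KuhnSimplex n} : I ∈ inCube n m ↔ ∀ c, I.corner c < m := by
  simp only [inCube, Finset.mem_map, Finset.mem_product, Fintype.mem_piFinset, Finset.mem_range]
  exact ⟨by rintro ⟨I', ⟨-, h, -⟩, rfl⟩; exact h, fun h ↦ ⟨⟨_, _, _⟩, by simpa using h, rfl⟩⟩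

@[simp] lemma length_vertices (I : KuhnSimplex n) : I.vertices.length = n + 2 := by simp [vertices]

lemma abs_sign (I : KuhnSimplex n) (c : Fin (n + 1)) : |(I.sign c : ℤ)| = 1 :=
  Int.isUnit_iff_abs_eq.1 (I.sign c).isUnit

lemma abs_vertex (I : KuhnSimplex n) (t : ℕ) (c : Fin (n + 1)) :
    |I.vertex t c| = I.corner c + if (I.time c : ℕ) < t then 1 else 0 := by
  rw [vertex, abs_mul, abs_sign, one_mul, abs_of_nonneg (by positivity)]

lemma vertex_succ_of_ne (I : KuhnSimplex n) {t c : Fin (n + 1)} (hc : c ≠ I.time.symm t) :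
    I.vertex (t + 1) c = I.vertex t c := by
  have htime : (I.time c : ℕ) ≠ t := by
    rwa [Ne, ← Fin.ext_iff, ← Equiv.eq_symm_apply]
  have : (I.time c : ℕ) < t + 1 ↔ (I.time c : ℕ) < t := by omega
  simp only [vertex, this]

lemma vertex_mirrorBlock {J : Type*} [DecidableEq J] (I : KuhnSimplex n) (block : Fin (n + 1) → J)
    (j : J) (t : ℕ) : (I.mirrorBlock block j).vertex t = negBlock block j (I.vertex t) := by
  funext c
  by_cases hc : block c = j <;>
    simp only [vertex, mirrorBlock, negBlock, hc, if_true, if_false, Units.val_neg, neg_mul] <;> rfl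

lemma next_prev (I : KuhnSimplex n) (hI : I.corner (I.time.symm (Fin.last n)) ≠ 0) :
    I.prev.next = I := by
  have h0 : (finRotate (n + 1)).symm 0 = Fin.last n := by rw [Equiv.symm_apply_eq, finRotate_last]
  ext c
  · rfl
  · simp [prev, next, h0, Nat.sub_add_cancel (Nat.pos_of_ne_zero hI)]
  · simp [prev, next]

lemma prev_next (I : KuhnSimplex n) : I.next.prev = I := by
  ext c <;> simp [prev, next]

lemma vertex_next (I : KuhnSimplex n) {t : ℕ} (ht : t ≤ n) :
    I.next.vertex t = I.vertex (t + 1) := by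
  have h0 : (finRotate (n + 1)).symm 0 = Fin.last n := by rw [Equiv.symm_apply_eq, finRotate_last]
  funext c
  obtain ⟨s, rfl⟩ := I.time.symm.surjective c
  rcases eq_or_ne s 0 with rfl | hs
  · simp [vertex, next, h0, not_lt.2 ht]
  · obtain ⟨s', rfl⟩ := (finRotate (n + 1)).surjective s
    have hs' : s' ≠ Fin.last n := by rintro rfl; simp at hs
    have hc : I.time.symm (finRotate (n + 1) s') ≠ I.time.symm 0 := I.time.symm.injective.ne hs
    simp only [vertex, next, Equiv.trans_apply, Equiv.apply_symm_apply, Equiv.symm_apply_apply,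
      Function.update_of_ne hc, coe_finRotate_of_ne_last hs', add_lt_add_iff_right]

section Faces

variable {R : Type*}

lemma coboundary_vertices [AddCommMonoid R] (f : List (Fin (n + 1) → ℤ) → R) (I : KuhnSimplex n) :
    coboundary f I.vertices = f ((List.range (n + 1)).map fun t ↦ I.vertex (t + 1))
      + ∑ t ∈ Finset.range n, f (((List.range (n + 2)).eraseIdx (t + 1)).map I.vertex)
      + f ((List.range (n + 1)).map I.vertex) := by
  have hfirst : I.vertices.eraseIdx 0 = (List.range (n + 1)).map fun t ↦ I.vertex (t + 1) := by
    rw [vertices, List.range_succ_eq_map]; simp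
  have hlast : I.vertices.eraseIdx (n + 1) = (List.range (n + 1)).map I.vertex := by
    rw [vertices, List.eraseIdx_map, List.range_succ,
      List.eraseIdx_append_of_length_le (by simp)]
    simp
  rw [coboundary, length_vertices, Finset.sum_range_succ, Finset.sum_range_succ', hfirst, hlast]
  simp only [vertices, List.eraseIdx_map, add_comm]

variable [CommRing R] [CharP R 2]

lemma sum_middle_face (m : ℕ) (f : List (Fin (n + 1) → ℤ) → R) {t : ℕ} (ht : t < n) :
    ∑ I ∈ inCube n m, f (((List.range (n + 2)).eraseIdx (t + 1)).map I.vertex) = 0 := by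
  let a : Fin (n + 1) := ⟨t, by omega⟩
  let b : Fin (n + 1) := ⟨t + 1, by omega⟩
  refine Finset.sum_involution (fun I _ ↦ I.swapTimes a b) (fun I _ ↦ ?_) (fun I _ _ h ↦ ?_)
    (fun I hI ↦ by simpa [swapTimes] using hI) (fun I _ ↦ by ext <;> simp [swapTimes])
  · have hface : ((List.range (n + 2)).eraseIdx (t + 1)).map (I.swapTimes a b).vertex =
        ((List.range (n + 2)).eraseIdx (t + 1)).map I.vertex := by
      refine List.map_congr_left fun x hx ↦ ?_
      have hxt : x ≠ t + 1 := by
        rintro rfl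
        obtain ⟨i, hi, hit, hget⟩ := List.mem_eraseIdx_iff_getElem.1 hx
        exact hit (by simpa using hget)
      funext c
      have : ((Equiv.swap a b (I.time c) : Fin (n + 1)) : ℕ) < x ↔ (I.time c : ℕ) < x := by
        rw [Equiv.swap_apply_def]
        split_ifs with ha hb
        · rw [ha]; simp only [a, b]; omega
        · rw [hb]; simp only [a, b]; omega
        · rfl
      simp only [vertex, swapTimes, Equiv.trans_apply, this]
    rw [hface, CharTwo.add_self_eq_zero]
  · have hswap := congrArg (fun I' : KuhnSimplex n ↦ I'.time (I.time.symm a)) h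
    simp [swapTimes, a, b] at hswap

lemma sum_first_face_on_boundary {J : Type*} [DecidableEq J] {block : Fin (n + 1) → J} {m : ℕ}
    {f : List (Fin (n + 1) → ℤ) → R} (hf : IsGlued (OnBlockBoundary block m) (negBlock block) f) :
    ∑ I ∈ inCube n m with I.corner (I.time.symm 0) + 1 = m,
      f ((List.range (n + 1)).map fun t ↦ I.vertex (t + 1)) = 0 := by
  refine Finset.sum_involution (fun I _ ↦ I.mirrorBlock block (block (I.time.symm 0)))
    (fun I hI ↦ ?_) (fun I _ _ h ↦ ?_) (fun I hI ↦ by simpa [mirrorBlock] using hI)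
    (fun I _ ↦ ?_)
  · have hbdry : ∀ u ∈ (List.range (n + 1)).map fun t ↦ I.vertex (t + 1),
        OnBlockBoundary block m (block (I.time.symm 0)) u := by
      intro u hu
      obtain ⟨t, -, rfl⟩ := List.mem_map.1 hu
      refine ⟨I.time.symm 0, rfl, ?_⟩
      rw [abs_vertex, ← (Finset.mem_filter.1 hI).2]
      simp
    simp only [vertex_mirrorBlock]
    rw [← hf _ _ hbdry, List.map_map]
    exact CharTwo.add_self_eq_zero _
  · have hsign := congrArg (fun I' : KuhnSimplex n ↦ I'.sign (I.time.symm 0)) h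
    simp [mirrorBlock, neg_units_ne_self] at hsign
  · ext c <;> simp [mirrorBlock]
    split_ifs <;> simp

lemma sum_last_face_on_hyperplane (m : ℕ) (f : List (Fin (n + 1) → ℤ) → R) :
    ∑ I ∈ inCube n m with I.corner (I.time.symm (Fin.last n)) = 0,
      f ((List.range (n + 1)).map I.vertex) = 0 := by
  refine Finset.sum_involution (fun I _ ↦ I.mirror (I.time.symm (Fin.last n)))
    (fun I hI ↦ ?_) (fun I _ _ h ↦ ?_) (fun I hI ↦ by simpa [mirror] using hI)
    (fun I _ ↦ by ext <;> simp [mirror])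
  · have hface : (List.range (n + 1)).map (I.mirror (I.time.symm (Fin.last n))).vertex =
        (List.range (n + 1)).map I.vertex := by
      refine List.map_congr_left fun t ht ↦ ?_
      rw [List.mem_range] at ht
      funext c
      rcases eq_or_ne c (I.time.symm (Fin.last n)) with rfl | hc
      · have htn : ¬ n < t := by omega
        simp [vertex, mirror, (Finset.mem_filter.1 hI).2, htn]
      · simp only [vertex, mirror, Function.update_of_ne hc]; rfl
    rw [hface, CharTwo.add_self_eq_zero]
  · have hsign := congrArg (fun I' : KuhnSimplex n ↦ I'.sign (I.time.symm (Fin.last n))) h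
    simp [mirror, neg_units_ne_self] at hsign

omit [CharP R 2] in
lemma sum_first_face_eq_sum_last_face (m : ℕ) (f : List (Fin (n + 1) → ℤ) → R) :
    ∑ I ∈ inCube n m with ¬ I.corner (I.time.symm 0) + 1 = m,
      f ((List.range (n + 1)).map fun t ↦ I.vertex (t + 1)) =
    ∑ I ∈ inCube n m with ¬ I.corner (I.time.symm (Fin.last n)) = 0,
      f ((List.range (n + 1)).map I.vertex) := by
  refine Finset.sum_nbij' next prev (fun I hI ↦ ?_) (fun I hI ↦ ?_) (fun I _ ↦ prev_next I)
    (fun I hI ↦ next_prev I (Finset.mem_filter.1 hI).2) (fun I _ ↦ ?_)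
  · simp only [Finset.mem_filter, mem_inCube] at hI ⊢
    refine ⟨fun c ↦ ?_, by simp [next]⟩
    have := hI.1 c
    rcases eq_or_ne c (I.time.symm 0) with rfl | hc
    · simp only [next, Function.update_self]; omega
    · simpa [next, hc]
  · simp only [Finset.mem_filter, mem_inCube] at hI ⊢
    have h0 : (finRotate (n + 1)).symm 0 = Fin.last n := by rw [Equiv.symm_apply_eq, finRotate_last]
    have hlast := hI.1 (I.time.symm (Fin.last n))
    refine ⟨fun c ↦ ?_, by simp [prev, h0]; omega⟩
    rcases eq_or_ne c (I.time.symm (Fin.last n)) with rfl | hc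
    · simp only [prev, Function.update_self]; omega
    · simpa [prev, hc] using hI.1 c
  · refine congrArg f (List.map_congr_left fun t ht ↦ ?_)
    rw [vertex_next I (Nat.le_of_lt_succ (List.mem_range.1 ht))]

-- Each interior face cancels against itself, as a face of the simplex on its other side, and each
-- boundary face against the face to which it is glued.
theorem sum_coboundary_vertices {J : Type*} [DecidableEq J] {block : Fin (n + 1) → J} {m : ℕ}
    {f : List (Fin (n + 1) → ℤ) → R} (hf : IsGlued (OnBlockBoundary block m) (negBlock block) f) :
    ∑ I ∈ inCube n m, coboundary f I.vertices = 0 := by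
  have hmiddle : ∑ t ∈ Finset.range n, ∑ I ∈ inCube n m,
      f (((List.range (n + 2)).eraseIdx (t + 1)).map I.vertex) = 0 :=
    Finset.sum_eq_zero fun t ht ↦ sum_middle_face m f (Finset.mem_range.1 ht)
  simp only [coboundary_vertices, Finset.sum_add_distrib]
  rw [Finset.sum_comm, hmiddle,
    ← Finset.sum_filter_add_sum_filter_not (inCube n m) (fun I ↦ I.corner (I.time.symm 0) + 1 = m),
    sum_first_face_on_boundary hf, sum_first_face_eq_sum_last_face,
    ← Finset.sum_filter_add_sum_filter_not (inCube n m)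
      (fun I ↦ I.corner (I.time.symm (Fin.last n)) = 0), sum_last_face_on_hyperplane]
  simp [CharTwo.add_self_eq_zero]

end Faces

end KuhnSimplex

/-! ### Evaluation of the cycle on sign classes -/

section BlockSign

variable {ι J : Type*} [LinearOrder ι] {block : ι → J} {j : J} {u u' : ι → ℤ} {c c' : ι}

/-- `c` is the last index of block `j` at which `u` does not vanish. -/
def IsLastNonzero (block : ι → J) (j : J) (u : ι → ℤ) (c : ι) : Prop :=
  block c = j ∧ u c ≠ 0 ∧ ∀ c' > c, block c' = j → u c' = 0

open Classical in
/-- The sign of the last nonzero entry of block `j`, written additively: `1` if it is negative and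
`0` otherwise, in particular if the block vanishes. -/
noncomputable def blockSign (block : ι → J) (j : J) (u : ι → ℤ) : ZMod 2 :=
  if ∃ c, IsLastNonzero block j u c ∧ u c < 0 then 1 else 0

/-- The product of the signs `blockSign` over the blocks in `α`, written additively. -/
noncomputable def signSum (block : ι → J) (α : Finset J) (u : ι → ℤ) : ZMod 2 :=
  ∑ j ∈ α, blockSign block j u

lemma IsLastNonzero.unique (h : IsLastNonzero block j u c) (h' : IsLastNonzero block j u c') :
    c = c' := by
  rcases lt_trichotomy c c' with hc | hc | hc
  · exact absurd (h.2.2 c' hc h'.1) h'.2.1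
  · exact hc
  · exact absurd (h'.2.2 c hc h.1) h.2.1

lemma IsLastNonzero.blockSign_eq (h : IsLastNonzero block j u c) :
    blockSign block j u = if u c < 0 then 1 else 0 := by
  have : (∃ c, IsLastNonzero block j u c ∧ u c < 0) ↔ u c < 0 :=
    ⟨fun ⟨_, h', hneg⟩ ↦ h.unique h' ▸ hneg, fun hneg ↦ ⟨c, h, hneg⟩⟩
  simp only [blockSign, this]

lemma blockSign_eq_zero (h : ∀ c, block c = j → u c = 0) : blockSign block j u = 0 :=
  if_neg fun ⟨c, hc, _⟩ ↦ hc.2.1 (h c hc.1)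

lemma IsLastNonzero.of_sign_eq (h : IsLastNonzero block j u c)
    (hsign : ∀ c' ≥ c, block c' = j → (u c').sign = (u' c').sign) : IsLastNonzero block j u' c := by
  have hzero : ∀ c' ≥ c, block c' = j → (u c' = 0 ↔ u' c' = 0) := fun c' hcc' hc' ↦ by
    rw [← Int.sign_eq_zero_iff_zero, hsign c' hcc' hc', Int.sign_eq_zero_iff_zero]
  exact ⟨h.1, mt (hzero c le_rfl h.1).2 h.2.1, fun c' hcc' hc' ↦
    (hzero c' hcc'.le hc').1 (h.2.2 c' hcc' hc')⟩

lemma IsLastNonzero.blockSign_congr (h : IsLastNonzero block j u c)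
    (hsign : ∀ c' ≥ c, block c' = j → (u c').sign = (u' c').sign) :
    blockSign block j u = blockSign block j u' := by
  rw [h.blockSign_eq, (h.of_sign_eq hsign).blockSign_eq]
  simp only [← Int.sign_eq_neg_one_iff_neg, hsign c le_rfl h.1]

variable [Finite ι]

lemma exists_isLastNonzero_ge (hc : block c = j) (hu : u c ≠ 0) :
    ∃ c' ≥ c, IsLastNonzero block j u c' := by
  obtain ⟨c', hcc', ⟨hc', hu'⟩, hmax⟩ :=
    (Set.toFinite {c | block c = j ∧ u c ≠ 0}).exists_le_maximal ⟨hc, hu⟩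
  refine ⟨c', hcc', hc', hu', fun d hd hbd ↦ ?_⟩
  by_contra hud
  exact hd.not_ge (hmax ⟨hbd, hud⟩ hd.le)

lemma blockSign_congr (hsign : ∀ c, block c = j → (u c).sign = (u' c).sign) :
    blockSign block j u = blockSign block j u' := by
  by_cases h : ∃ c, block c = j ∧ u c ≠ 0
  · obtain ⟨c, hc, hu⟩ := h
    obtain ⟨c', -, hc'⟩ := exists_isLastNonzero_ge hc hu
    exact hc'.blockSign_congr fun d _ hd ↦ hsign d hd
  · push Not at h
    rw [blockSign_eq_zero h, blockSign_eq_zero fun c hc ↦ ?_]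
    rw [← Int.sign_eq_zero_iff_zero, ← hsign c hc, h c hc, Int.sign_zero]

variable [DecidableEq J]

lemma blockSign_negBlock_self (hc : block c = j) (hu : u c ≠ 0) :
    blockSign block j (negBlock block j u) = blockSign block j u + 1 := by
  obtain ⟨c', -, hc'⟩ := exists_isLastNonzero_ge hc hu
  have hneg : IsLastNonzero block j (negBlock block j u) c' :=
    ⟨hc'.1, by simp [negBlock, hc'.1, hc'.2.1], fun d hd hbd ↦ by
      simp [negBlock, hc'.2.2 d hd hbd]⟩
  rw [hc'.blockSign_eq, hneg.blockSign_eq]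
  rcases hc'.2.1.lt_or_gt with h | h
  · rw [if_pos h, if_neg (by simp [negBlock, hc'.1, h.le])]; rfl
  · rw [if_neg h.not_gt, if_pos (by simpa [negBlock, hc'.1])]; rfl

lemma signSum_negBlock (α : Finset J) (hc : block c = j) (hu : u c ≠ 0) :
    signSum block α (negBlock block j u) = signSum block α u + if j ∈ α then 1 else 0 := by
  have hterm (i : J) : blockSign block i (negBlock block j u) =
      blockSign block i u + if i = j then 1 else 0 := by
    split_ifs with hij
    · subst hij; exact blockSign_negBlock_self hc hu
    · rw [add_zero]
      exact blockSign_congr fun d hd ↦ by simp [negBlock, hd, hij]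
  simp [signSum, hterm, Finset.sum_add_distrib]

end BlockSign

lemma apply_perm_eq_of_le {ι J : Type*} [Finite ι] [PartialOrder J] {f : ι → J}
    {ρ : Equiv.Perm ι} (h : ∀ t, f (ρ t) ≤ f t) (t : ι) : f (ρ t) = f t := by
  have hpow : ∀ m : ℕ, f ((ρ ^ (m + 1)) t) ≤ f (ρ t) := by
    intro m
    induction m with
    | zero => simp
    | succ m ih => rw [pow_succ', Equiv.Perm.mul_apply]; exact (h _).trans ih
  refine (h t).antisymm ?_
  simpa [Nat.sub_add_cancel (orderOf_pos ρ), pow_orderOf_eq_one] using hpow (orderOf ρ - 1)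

lemma perm_eq_one_of_strictMono_on_fibers {ι J : Type*} [LinearOrder ι] [WellFoundedLT ι]
    {f : ι → J} {ρ : Equiv.Perm ι} (hf : ∀ t, f (ρ.symm t) = f t)
    (hρ : ∀ c c', c < c' → f c = f c' → ρ c < ρ c') : ρ = 1 := by
  ext c
  induction c using WellFoundedLT.induction with
  | _ c ih =>
    simp only [Equiv.Perm.one_apply] at ih ⊢
    rcases lt_trichotomy (ρ.symm c) c with hc | hc | hc
    · exact absurd hc (by rw [← ih _ hc, Equiv.apply_symm_apply]; exact lt_irrefl _)
    · exact (ρ.symm_apply_eq.1 hc).symm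
    · have hlt : ρ c < c := by simpa using hρ _ _ hc (hf c).symm
      exact ρ.injective (ih _ hlt)

/-- The map `s ↦ (g t s + [s t = -1])ₜ` is triangular, hence a bijection from signs to bits, so
exactly one summand is nonzero. -/
lemma sum_prod_add_sign_of_triangular {ι : Type*} [LinearOrder ι] [Fintype ι]
    {g : ι → (ι → ℤˣ) → ZMod 2} (hg : ∀ t s s', (∀ t' < t, s t' = s' t') → g t s = g t s') :
    ∑ s : ι → ℤˣ, ∏ t, (g t s + if s t = -1 then 1 else 0) = 1 := by
  let Φ : (ι → ℤˣ) → ι → ZMod 2 := fun s t ↦ g t s + if s t = -1 then 1 else 0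
  have hinj : Function.Injective Φ := by
    intro s s' h
    funext t
    induction t using WellFoundedLT.induction with
    | _ t ih =>
      have ht := congrFun h t
      simp only [Φ, hg t s s' ih, add_right_inj] at ht
      rcases Int.units_eq_one_or (s t) with h₁ | h₁ <;>
        rcases Int.units_eq_one_or (s' t) with h₂ | h₂ <;> simp [h₁, h₂] at ht ⊢
  have hbij : Function.Bijective Φ :=
    (Fintype.bijective_iff_injective_and_card Φ).2 ⟨hinj, by simp [ZMod.card]⟩
  calc ∑ s : ι → ℤˣ, ∏ t, (g t s + if s t = -1 then 1 else 0)
      = ∑ τ : ι → ZMod 2, ∏ t, τ t := hbij.sum_comp fun τ ↦ ∏ t, τ t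
    _ = ∏ _t : ι, ∑ x : ZMod 2, x := (Fintype.prod_sum fun _ (x : ZMod 2) ↦ x).symm
    _ = 1 := Finset.prod_eq_one fun _ _ ↦ by decide

namespace KuhnSimplex

variable {n : ℕ} {J : Type*} {block : Fin (n + 1) → J}

/-- The simplex at the origin in the orthant `s` whose coordinates grow in their natural order. -/
def initial (s : Fin (n + 1) → ℤˣ) : KuhnSimplex n := ⟨s, 0, 1⟩

lemma blockSign_vertex_succ_of_ne (I : KuhnSimplex n) {t : Fin (n + 1)} {j : J}
    (hj : block (I.time.symm t) ≠ j) :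
    blockSign block j (I.vertex t) = blockSign block j (I.vertex (t + 1)) :=
  blockSign_congr fun c hc ↦ by rw [I.vertex_succ_of_ne]; rintro rfl; exact hj hc

lemma corner_eq_zero_of_blockSign_ne {I : KuhnSimplex n} {t : Fin (n + 1)} {j : J}
    (h : blockSign block j (I.vertex t) ≠ blockSign block j (I.vertex (t + 1))) :
    I.corner (I.time.symm t) = 0 := by
  contrapose! h
  refine blockSign_congr fun c _ ↦ ?_
  rcases eq_or_ne c (I.time.symm t) with rfl | hc
  · have hpos : ∀ (p : Prop) [Decidable p],
        ((I.corner (I.time.symm t) : ℤ) + if p then 1 else 0).sign = 1 := fun p _ ↦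
      Int.sign_eq_one_of_pos (by split_ifs <;> omega)
    simp only [vertex, Int.sign_mul, hpos]
  · rw [vertex_succ_of_ne I hc]

lemma lt_time_of_blockSign_ne {I : KuhnSimplex n} {t c : Fin (n + 1)} {j : J}
    (h : blockSign block j (I.vertex t) ≠ blockSign block j (I.vertex (t + 1)))
    (hc : I.time.symm t < c) (hj : block c = j) : t < I.time c := by
  contrapose! h
  have htime : (I.time c : ℕ) < t := by
    refine lt_of_le_of_ne h fun heq ↦ hc.ne ?_
    rw [Equiv.symm_apply_eq, Fin.ext heq]
  have hu : I.vertex t c ≠ 0 := by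
    rw [← abs_pos, abs_vertex, if_pos htime]; positivity
  obtain ⟨c', hcc', hc'⟩ := exists_isLastNonzero_ge hj hu
  exact hc'.blockSign_congr fun d hd _ ↦ by
    rw [I.vertex_succ_of_ne ((hc.trans_le hcc').trans_le hd).ne']

lemma signSum_vertex_add_succ [DecidableEq J] (α : Finset J) (I : KuhnSimplex n) (t : Fin (n + 1)) :
    signSum block α (I.vertex t) + signSum block α (I.vertex (t + 1)) =
      if block (I.time.symm t) ∈ α then blockSign block (block (I.time.symm t)) (I.vertex t) +
        blockSign block (block (I.time.symm t)) (I.vertex (t + 1)) else 0 := by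
  simp only [signSum]
  rw [← Finset.sum_add_distrib, ← Finset.sum_ite_eq' α (block (I.time.symm t))
    fun j ↦ blockSign block j (I.vertex t) + blockSign block j (I.vertex (t + 1))]
  refine Finset.sum_congr rfl fun j _ ↦ ?_
  split_ifs with hj
  · rfl
  · rw [blockSign_vertex_succ_of_ne I (Ne.symm hj), CharTwo.add_self_eq_zero]

lemma signSum_initial_vertex_add_succ {α : Finset J} (s : Fin (n + 1) → ℤˣ) {t : Fin (n + 1)}
    (ht : block t ∈ α) :
    signSum block α ((initial s).vertex t) + signSum block α ((initial s).vertex (t + 1)) =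
      blockSign block (block t) ((initial s).vertex t) + if s t = -1 then 1 else 0 := by
  have hlast : IsLastNonzero block (block t) ((initial s).vertex (t + 1)) t := by
    refine ⟨rfl, by simp [vertex, initial], fun c hc _ ↦ ?_⟩
    have : ¬ (c : ℕ) < t + 1 := by have := Fin.lt_def.1 hc; omega
    simp [vertex, initial, this]
  have htime : (initial s).time.symm t = t := rfl
  classical
  rw [signSum_vertex_add_succ, htime, if_pos ht, hlast.blockSign_eq]
  congr 1
  rcases Int.units_eq_one_or (s t) with h | h <;> simp [vertex, initial, h]

variable [PartialOrder J]

lemma eq_initial_of_signSum_ne {α : Fin (n + 1) → Finset J} (hα : ∀ t, ∀ j ∈ α t, j ≤ block t)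
    {I : KuhnSimplex n} (hI : ∀ t : Fin (n + 1),
      signSum block (α t) (I.vertex t) + signSum block (α t) (I.vertex (t + 1)) ≠ 0) :
    initial I.sign = I := by
  classical
  simp only [signSum_vertex_add_succ, ne_eq, ite_eq_right_iff, not_forall, exists_prop,
    CharTwo.add_eq_zero] at hI
  have hblock : ∀ t, block (I.time.symm t) = block t :=
    apply_perm_eq_of_le fun t ↦ hα t _ (hI t).1
  have htime : I.time = 1 := perm_eq_one_of_strictMono_on_fibers hblock fun c c' hc hcc' ↦
    lt_time_of_blockSign_ne (hI (I.time c)).2 (by simpa using hc) (by simpa using hcc'.symm)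
  have hcorner : I.corner = 0 := funext fun c ↦ by
    simpa using corner_eq_zero_of_blockSign_ne (hI (I.time c)).2
  rw [initial, ← hcorner, ← htime]

theorem sum_prod_signSum_vertex {m : ℕ} (hm : 1 ≤ m) {α : Fin (n + 1) → Finset J}
    (hmem : ∀ t, block t ∈ α t) (hle : ∀ t, ∀ j ∈ α t, j ≤ block t) :
    ∑ I ∈ inCube n m, ∏ t : Fin (n + 1),
      (signSum block (α t) (I.vertex t) + signSum block (α t) (I.vertex (t + 1))) = 1 := by
  classical
  have hsub : Finset.univ.image initial ⊆ inCube n m := by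
    simp only [Finset.image_subset_iff, mem_inCube]
    exact fun _ _ _ ↦ hm
  have hinj : Function.Injective (initial (n := n)) := fun s s' h ↦ congrArg sign h
  rw [← Finset.sum_subset hsub, Finset.sum_image hinj.injOn]
  · simp only [signSum_initial_vertex_add_succ _ (hmem _)]
    refine sum_prod_add_sign_of_triangular fun t s s' h ↦ congrArg _ (funext fun c ↦ ?_)
    by_cases hc : c < t
    · simp [vertex, initial, h c hc]
    · simp [vertex, initial, hc]
  · intro I _ hI
    by_contra hprod
    refine hI (Finset.mem_image.2 ⟨I.sign, Finset.mem_univ _, eq_initial_of_signSum_ne hle ?_⟩)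
    simpa [Finset.prod_eq_zero_iff] using hprod

end KuhnSimplex

/-! ### A Borsuk–Ulam theorem for products of spheres -/

lemma OnBlockBoundary.exists_ne_zero {ι J : Type*} {block : ι → J} {m : ℕ} (hm : 1 ≤ m) {j : J}
    {u : ι → ℤ} (h : OnBlockBoundary block m j u) : ∃ c, block c = j ∧ u c ≠ 0 := by
  obtain ⟨c, hc, hu⟩ := h
  exact ⟨c, hc, abs_pos.1 (by omega)⟩

theorem KuhnSimplex.exists_forall_label_ne {n m : ℕ} (hm : 1 ≤ m) {J : Type*} [PartialOrder J]
    [DecidableEq J] {block : Fin (n + 1) → J} {α : Fin (n + 1) → Finset J}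
    (hmem : ∀ t, block t ∈ α t) (hle : ∀ t, ∀ j ∈ α t, j ≤ block t)
    {label : Fin (n + 1) → (Fin (n + 1) → ℤ) → ZMod 2}
    (hlabel : ∀ t j u, OnBlockBoundary block m j u →
      label t (negBlock block j u) = label t u + if j ∈ α t then 1 else 0) :
    ∃ I ∈ inCube n m, ∀ t : Fin (n + 1),
      label t (I.vertex t) ≠ label t (I.vertex (t + 1)) := by
  have hsign : ∀ t j u, OnBlockBoundary block m j u → signSum block (α t) (negBlock block j u) =
      signSum block (α t) u + if j ∈ α t then 1 else 0 := fun t j u hu ↦ by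
    obtain ⟨c, hc, hcu⟩ := hu.exists_ne_zero hm
    exact signSum_negBlock (α t) hc hcu
  have hglue := sum_cupCoboundaries_map_add (S := inCube n m) (p := vertices) (cs := [])
    (fun _ hf ↦ sum_coboundary_vertices hf)
    (as := List.ofFn fun t ↦ (signSum block (α t), signSum block (α t) + label t))
    (List.forall_mem_ofFn_iff.2 fun t j ↦ ⟨_, hsign t j⟩)
    (List.forall_mem_ofFn_iff.2 fun t j u hu ↦ by
      simp only [Pi.add_apply, hsign t j u hu, hlabel t j u hu]
      linear_combination CharTwo.add_self_eq_zero (if j ∈ α t then (1 : ZMod 2) else 0))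
    (by simp) (by simp)
  simp only [List.nil_append, List.map_ofFn, vertices] at hglue
  simp only [cupCoboundaries_ofFn, Function.comp_apply, ← add_assoc, CharTwo.add_self_eq_zero,
    zero_add, sum_prod_signSum_vertex hm hmem hle] at hglue
  obtain ⟨I, hI, hprod⟩ := Finset.exists_ne_zero_of_sum_ne_zero (hglue.trans_ne one_ne_zero)
  refine ⟨I, hI, fun t h ↦ Finset.prod_ne_zero_iff.1 hprod t (Finset.mem_univ t) ?_⟩
  exact CharTwo.add_eq_zero.2 h

section BlockSpace

variable {ι J : Type*} [DecidableEq J]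

/-- The space `∏ⱼ ℝ^(bⱼ + 1)`, where `bⱼ` is the size of block `j`: the first component holds the
coordinates belonging to the blocks, the second one extra coordinate for each block. -/
abbrev BlockSpace (ι J : Type*) : Type _ := (ι → ℝ) × (J → ℝ)

/-- The antipodal map in factor `j` of a product of spheres. -/
def flipBlock (block : ι → J) (j : J) (x : BlockSpace ι J) : BlockSpace ι J :=
  (fun c ↦ if block c = j then -x.1 c else x.1 c, fun i ↦ if i = j then -x.2 i else x.2 i)

variable [Fintype ι] {block : ι → J}

/-- A compact neighbourhood of a product of spheres on which every factor stays away from `0`. -/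
def blockShell [Fintype J] (block : ι → J) : Set (BlockSpace ι J) :=
  {x | ‖x‖ ≤ 1 ∧ ∀ j, 1 ≤ |x.2 j| + ∑ c with block c = j, |x.1 c|}

/-- The sup norm of block `j`. -/
def blockSup (block : ι → J) (u : ι → ℤ) (j : J) : ℕ :=
  Finset.sup {c | block c = j} fun c ↦ (u c).natAbs

/-- Folds each block of the cube `[-m, m]^ι` to the upper half of a sphere. -/
noncomputable def cubeToShell (block : ι → J) (m : ℕ) (u : ι → ℤ) : BlockSpace ι J :=
  (fun c ↦ (u c : ℝ) / m, fun j ↦ ((m - blockSup block u j : ℕ) : ℝ) / m)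

lemma isCompact_blockShell [Fintype J] (block : ι → J) : IsCompact (blockShell block) := by
  refine Metric.isCompact_of_isClosed_isBounded ?_
    ((Metric.isBounded_closedBall (x := 0) (r := 1)).subset fun x hx ↦ by simpa using hx.1)
  simp only [blockShell, Set.ofPred_and, Set.ofPred_forall]
  exact (isClosed_le continuous_norm continuous_const).inter
    (isClosed_iInter fun j ↦ isClosed_le continuous_const (by fun_prop))

lemma natAbs_le_blockSup (block : ι → J) (u : ι → ℤ) (c : ι) :
    (u c).natAbs ≤ blockSup block u (block c) :=
  Finset.le_sup (f := fun c ↦ (u c).natAbs) (by simp)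

lemma blockSup_negBlock (u : ι → ℤ) (i j : J) :
    blockSup block (negBlock block j u) i = blockSup block u i := by
  refine Finset.sup_congr rfl fun c _ ↦ ?_
  simp only [negBlock]
  split_ifs <;> simp

lemma blockSup_le_add_one {u u' : ι → ℤ} (h : ∀ c, |u c - u' c| ≤ 1) (j : J) :
    blockSup block u j ≤ blockSup block u' j + 1 := by
  refine Finset.sup_le fun c hc ↦ ?_
  obtain rfl := (Finset.mem_filter.1 hc).2
  have := natAbs_le_blockSup block u' c
  have := abs_le.1 (h c)
  omega

lemma cubeToShell_mem_blockShell [Fintype J] {m : ℕ} (hm : 1 ≤ m) {u : ι → ℤ}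
    (hu : ∀ c, |u c| ≤ m) : cubeToShell block m u ∈ blockShell block := by
  have hm' : (0 : ℝ) < m := by exact_mod_cast hm
  refine ⟨?_, fun j ↦ ?_⟩
  · rw [cubeToShell, Prod.norm_def, max_le_iff, pi_norm_le_iff_of_nonneg zero_le_one,
      pi_norm_le_iff_of_nonneg zero_le_one]
    simp only [norm_div, Real.norm_eq_abs, Nat.abs_cast, div_le_one hm']
    exact ⟨fun c ↦ by exact_mod_cast hu c, fun j ↦ by exact_mod_cast Nat.sub_le _ _⟩
  · have hsup : blockSup block u j ≤ ∑ c with block c = j, (u c).natAbs := Finset.sup_le fun c hc ↦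
      Finset.single_le_sum (f := fun c ↦ (u c).natAbs) (fun _ _ ↦ Nat.zero_le _) hc
    have hsup' : (blockSup block u j : ℤ) ≤ ∑ c with block c = j, |u c| := by
      simpa using (Nat.cast_le (α := ℤ)).2 hsup
    have hle : (m : ℤ) ≤ (m - blockSup block u j : ℕ) + ∑ c with block c = j, |u c| := by omega
    simp only [cubeToShell, abs_div, Nat.abs_cast]
    rw [← Finset.sum_div, ← add_div, one_le_div hm']
    exact_mod_cast hle

lemma cubeToShell_negBlock {m : ℕ} {u : ι → ℤ} {j : J} (h : OnBlockBoundary block m j u) :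
    cubeToShell block m (negBlock block j u) = flipBlock block j (cubeToShell block m u) := by
  refine Prod.ext (funext fun c ↦ ?_) (funext fun i ↦ ?_)
  · simp only [cubeToShell, flipBlock, negBlock]
    split_ifs <;> simp [neg_div]
  · simp only [cubeToShell, flipBlock, blockSup_negBlock]
    split_ifs with hi
    · obtain ⟨c, rfl, hc⟩ := h
      have := natAbs_le_blockSup block u c
      rw [← Int.natCast_natAbs] at hc
      have hsup : m - blockSup block u i = 0 := by subst hi; omega
      simp [hsup]
    · rfl

lemma dist_cubeToShell_le [Fintype J] {m : ℕ} {u u' : ι → ℤ}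
    (h : ∀ c, |u c - u' c| ≤ 1) :
    dist (cubeToShell block m u) (cubeToShell block m u') ≤ 1 / m := by
  rw [cubeToShell, cubeToShell, Prod.dist_eq, max_le_iff, dist_pi_le_iff (by positivity),
    dist_pi_le_iff (by positivity)]
  simp only [Real.dist_eq, ← sub_div, abs_div, Nat.abs_cast]
  refine ⟨fun c ↦ ?_, fun j ↦ ?_⟩
  · gcongr
    exact_mod_cast h c
  · gcongr
    have h₁ := blockSup_le_add_one (block := block) h j
    have h₂ := blockSup_le_add_one (block := block) (fun c ↦ by rw [abs_sub_comm]; exact h c) j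
    have hdiff : |((m - blockSup block u j : ℕ) : ℤ) - (m - blockSup block u' j : ℕ)| ≤ 1 := by
      rw [abs_le]; omega
    exact_mod_cast hdiff

end BlockSpace

lemma ne_zero_and_neg_iff_of_abs_sub_lt {a b ε : ℝ} (ha : ε ≤ |a|) (hab : |a - b| < ε) :
    b ≠ 0 ∧ (b < 0 ↔ a < 0) := by
  obtain ⟨h₁, h₂⟩ := abs_lt.1 hab
  rcases le_abs.1 ha with h | h
  · exact ⟨by linarith, by constructor <;> intro <;> linarith⟩
  · exact ⟨by linarith, by constructor <;> intro <;> linarith⟩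

namespace KuhnSimplex

variable {n : ℕ}

lemma abs_vertex_le {m : ℕ} {I : KuhnSimplex n} (hI : I ∈ inCube n m) (t : ℕ) (c : Fin (n + 1)) :
    |I.vertex t c| ≤ m := by
  have := mem_inCube.1 hI c
  rw [abs_vertex]
  split_ifs <;> omega

lemma abs_vertex_zero_sub_le (I : KuhnSimplex n) (t : ℕ) (c : Fin (n + 1)) :
    |I.vertex 0 c - I.vertex t c| ≤ 1 := by
  simp only [vertex]
  rw [← mul_sub, abs_mul, abs_sign]
  split_ifs <;> simp

end KuhnSimplex

theorem exists_mem_blockShell_forall_eq_zero {n : ℕ} {J : Type*} [Fintype J] [PartialOrder J]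
    [DecidableEq J] {block : Fin (n + 1) → J} {α : Fin (n + 1) → Finset J}
    (hmem : ∀ t, block t ∈ α t) (hle : ∀ t, ∀ j ∈ α t, j ≤ block t)
    {F : Fin (n + 1) → BlockSpace (Fin (n + 1)) J → ℝ} (hF : ∀ t, Continuous (F t))
    (hflip : ∀ t j x, F t (flipBlock block j x) = if j ∈ α t then -F t x else F t x) :
    ∃ x ∈ blockShell block, ∀ t, F t x = 0 := by
  by_contra! hne
  have hG : Continuous fun x t ↦ F t x := continuous_pi hF
  obtain ⟨ε, hε, hmin⟩ := (isCompact_blockShell block).exists_forall_le' (a := 0)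
    hG.norm.continuousOn fun x hx ↦ norm_pos_iff.2 fun h ↦ (hne x hx).elim fun t ht ↦
      ht (congrFun h t)
  obtain ⟨δ, hδ, huc⟩ := Metric.uniformContinuousOn_iff.1
    ((isCompact_blockShell block).uniformContinuousOn_of_continuous hG.continuousOn) ε hε
  obtain ⟨m, hm⟩ := exists_nat_one_div_lt hδ
  let lift := cubeToShell block (m + 1)
  let label (t : Fin (n + 1)) (u : Fin (n + 1) → ℤ) : ZMod 2 :=
    if F t (lift u) = 0 then signSum block (α t) u else if F t (lift u) < 0 then 1 else 0
  obtain ⟨I, hI, hlabel⟩ := KuhnSimplex.exists_forall_label_ne (Nat.le_add_left 1 m) hmem hle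
    (label := label) fun t j u hu ↦ by
      obtain ⟨c, hc, hcu⟩ := hu.exists_ne_zero (Nat.le_add_left 1 m)
      simp only [label, lift, cubeToShell_negBlock hu, hflip, signSum_negBlock (α t) hc hcu]
      by_cases hj : j ∈ α t
      · rcases lt_trichotomy (F t (cubeToShell block (m + 1) u)) 0 with h | h | h
        · simp [hj, h, h.ne, h.le, CharTwo.add_self_eq_zero]
        · simp [hj, h]
        · simp [hj, h, h.ne', h.not_gt]
      · simp [hj]
  have hlift (s : ℕ) : lift (I.vertex s) ∈ blockShell block :=
    cubeToShell_mem_blockShell (Nat.le_add_left 1 m) (I.abs_vertex_le hI s)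
  obtain ⟨t, ht⟩ : ∃ t, ε ≤ |F t (lift (I.vertex 0))| := by
    by_contra! hlt
    exact ((pi_norm_lt_iff hε).2 hlt).not_ge (hmin _ (hlift 0))
  have hval (s : ℕ) : label t (I.vertex s) = if F t (lift (I.vertex 0)) < 0 then 1 else 0 := by
    have hdist : dist (lift (I.vertex 0)) (lift (I.vertex s)) < δ :=
      (dist_cubeToShell_le (I.abs_vertex_zero_sub_le s)).trans_lt (by exact_mod_cast hm)
    obtain ⟨hs, hsign⟩ := ne_zero_and_neg_iff_of_abs_sub_lt ht
      ((dist_pi_lt_iff hε).1 (huc _ (hlift 0) _ (hlift s) hdist) t)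
    simp only [label, if_neg hs, hsign]
  exact hlabel t ((hval t).trans (hval (t + 1)).symm)

open Filter Topology MeasureTheory

/-! ### A Bézout-type bound for the number of common zeros -/

lemma eq_zero_of_forall_aeval_C_mul_X_eq_zero {R ω : Type*} [CommRing R] [IsDomain R] [Infinite R]
    {W : MvPolynomial ω R}
    (h : ∀ v : ω → R, aeval (fun i ↦ Polynomial.C (v i) * Polynomial.X) W = 0) : W = 0 := by
  refine MvPolynomial.funext fun v ↦ ?_
  simpa [comp_aeval_apply, ← Polynomial.coe_aeval_eq_eval] using
    congrArg (Polynomial.aeval (1 : R)) (h v)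

lemma exists_eq_X_pow_mul_of_ne_zero {R ν : Type*} [Semiring R] {w : ν → Polynomial R}
    (hw : ∃ n, w n ≠ 0) :
    ∃ (o : ℕ) (q : ν → Polynomial R),
      (∀ n, w n = Polynomial.X ^ o * q n) ∧ ∃ n, (q n).eval 0 ≠ 0 := by
  classical
  have hex : ∃ o n, (w n).coeff o ≠ 0 := by
    obtain ⟨n, hn⟩ := hw
    exact ⟨_, n, fun h ↦ hn (Polynomial.trailingCoeff_eq_zero.1 h)⟩
  have hdvd (n : ν) : Polynomial.X ^ Nat.find hex ∣ w n :=
    Polynomial.X_pow_dvd_iff.2 fun e he ↦ by simpa using not_exists.1 (Nat.find_min hex he) n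
  choose q hq using hdvd
  obtain ⟨n, hn⟩ := Nat.find_spec hex
  refine ⟨_, q, hq, n, ?_⟩
  rw [hq n, Polynomial.coeff_X_pow_mul'] at hn
  simpa [Polynomial.coeff_zero_eq_eval_zero] using hn

lemma exists_map_eq_smul_and_ne_zero {X V : Type*} [TopologicalSpace X] [AddCommGroup V]
    [Module ℝ V] [TopologicalSpace V] [ContinuousSMul ℝ V] {G : X → V} {p : X}
    (hG : 𝓝 0 ≤ map G (𝓝 p)) {Ψ : ℝ × X → ℝ} (hΨ : Continuous Ψ) (hΨp : Ψ (0, p) ≠ 0) (v : V) :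
    ∃ t ≠ 0, ∃ x, G x = t • v ∧ Ψ (t, x) ≠ 0 := by
  have hne := hΨ.continuousAt.eventually_ne hΨp
  rw [nhds_prod_eq] at hne
  obtain ⟨P, hP, Q, hQ, hPQ⟩ := eventually_prod_iff.1 hne
  have himage : ∀ᶠ y in 𝓝 (0 : V), ∃ x, Q x ∧ G x = y :=
    hG (mem_map.2 (by filter_upwards [hQ] with x hx using ⟨x, hx, rfl⟩))
  have hline : Tendsto (fun t : ℝ ↦ t • v) (𝓝 0) (𝓝 0) := by
    have : Continuous fun t : ℝ ↦ t • v := by fun_prop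
    simpa using this.tendsto 0
  have hpunctured : ∀ᶠ t in 𝓝[≠] (0 : ℝ), (P t ∧ ∃ x, Q x ∧ G x = t • v) ∧ t ≠ 0 :=
    ((hP.and (hline.eventually himage)).filter_mono nhdsWithin_le_nhds).and self_mem_nhdsWithin
  obtain ⟨t, ⟨hPt, x, hQx, hx⟩, ht⟩ := hpunctured.exists
  exact ⟨t, ht, x, hx, hPQ hPt hQx⟩

section Bezout

variable {τ ω ν : Type*} {F : ω → MvPolynomial τ ℝ} {p : ν → τ → ℝ}
  {s : ν → MvPolynomial τ ℝ}

lemma eq_zero_of_sum_aeval_mul_eq_zero [Fintype ν]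
    (hF : ∀ n, 𝓝 0 ≤ map (fun x i ↦ eval x (F i)) (𝓝 (p n)))
    (hs : ∀ n, eval (p n) (s n) ≠ 0) (hs' : ∀ n n', n' ≠ n → eval (p n) (s n') = 0)
    {W : ν → MvPolynomial ω ℝ} (hW : ∑ n, aeval F (W n) * s n = 0) (n : ν) : W n = 0 := by
  refine eq_zero_of_forall_aeval_C_mul_X_eq_zero fun v ↦ ?_
  by_contra hn
  obtain ⟨o, q, hq, n₀, hn₀⟩ := exists_eq_X_pow_mul_of_ne_zero
    (w := fun n ↦ aeval (fun i ↦ Polynomial.C (v i) * Polynomial.X) (W n)) ⟨n, hn⟩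
  let Ψ : ℝ × (τ → ℝ) → ℝ := fun z ↦ ∑ n, (q n).eval z.1 * eval z.2 (s n)
  have hΨ : Continuous Ψ := continuous_finsetSum _ fun n _ ↦
    ((q n).continuous.comp continuous_fst).mul ((continuous_eval (s n)).comp continuous_snd)
  have hΨp : Ψ (0, p n₀) ≠ 0 := by
    simp only [Ψ]
    rw [Finset.sum_eq_single n₀ (fun n _ h ↦ by rw [hs' n₀ n h, mul_zero]) (by simp)]
    exact mul_ne_zero hn₀ (hs n₀)
  obtain ⟨t, ht, x, hx, hΨx⟩ := exists_map_eq_smul_and_ne_zero (hF n₀) hΨ hΨp v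
  have heval (n : ν) : eval x (aeval F (W n)) = t ^ o * (q n).eval t := calc
    eval x (aeval F (W n)) = eval (t • v) (W n) := by
      rw [← coe_aeval_eq_eval, ← coe_aeval_eq_eval, RingHom.coe_coe, RingHom.coe_coe,
        comp_aeval_apply, ← hx]
      rfl
    _ = (aeval (fun i ↦ Polynomial.C (v i) * Polynomial.X) (W n)).eval t := by
      rw [← Polynomial.coe_aeval_eq_eval, comp_aeval_apply, ← coe_aeval_eq_eval, RingHom.coe_coe]
      congr 2 with i
      rw [map_mul, Polynomial.aeval_C, Polynomial.aeval_X, mul_comm]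
      rfl
    _ = t ^ o * (q n).eval t := by simp [hq n]
  refine mul_ne_zero (pow_ne_zero o ht) hΨx ?_
  have heval_sum := congrArg (eval x) hW
  simp only [map_sum, map_mul, map_zero, heval] at heval_sum
  simpa only [Ψ, Finset.mul_sum, mul_assoc] using heval_sum

lemma card_le_prod_of_linearIndependent_of_degreeOf_le {K κ : Type*} [Field K] [Fintype κ]
    [Fintype τ] {f : κ → MvPolynomial τ K} (hf : LinearIndependent K f) {L : τ → ℕ}
    (hL : ∀ z j, (f z).degreeOf j ≤ L j) : Fintype.card κ ≤ ∏ j, (L j + 1) := by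
  classical
  let mons : Finset (MvPolynomial τ K) := Finset.univ.image fun m : ∀ j, Fin (L j + 1) ↦
    monomial (Finsupp.equivFunOnFinite.symm fun j ↦ (m j : ℕ)) 1
  have hspan : Submodule.span K (Set.range f) ≤
      Submodule.span K (mons : Set (MvPolynomial τ K)) := by
    rw [Submodule.span_le]
    rintro _ ⟨z, rfl⟩
    rw [SetLike.mem_coe, (f z).as_sum]
    refine Submodule.sum_mem _ fun m hm ↦ ?_
    rw [← mul_one (coeff m (f z)), ← smul_eq_mul, ← smul_monomial]
    refine Submodule.smul_mem _ _ (Submodule.subset_span ?_)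
    simp only [mons, Finset.coe_image, Finset.coe_univ, Set.image_univ, Set.mem_range]
    refine ⟨fun j ↦ ⟨m j, Nat.lt_succ_of_le ((monomial_le_degreeOf j hm).trans (hL z j))⟩, ?_⟩
    exact congrArg (monomial · 1) (Finsupp.ext fun _ ↦ rfl)
  calc Fintype.card κ = Module.finrank K (Submodule.span K (Set.range f)) :=
        (finrank_span_eq_card hf).symm
    _ ≤ Module.finrank K (Submodule.span K (mons : Set (MvPolynomial τ K))) :=
        Submodule.finrank_mono hspan
    _ ≤ mons.card := finrank_span_finset_le_card mons
    _ ≤ ∏ j, (L j + 1) := Finset.card_image_le.trans (by simp)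

lemma linearIndependent_prod_pow_mul [Finite ν] [Fintype ω]
    (hF : ∀ n, 𝓝 0 ≤ map (fun x i ↦ eval x (F i)) (𝓝 (p n)))
    (hs : ∀ n, eval (p n) (s n) ≠ 0) (hs' : ∀ n n', n' ≠ n → eval (p n) (s n') = 0)
    (A : ω → ℕ) : LinearIndependent ℝ
      fun z : ν × ∀ i, Fin (A i) ↦ (∏ i, F i ^ (z.2 i : ℕ)) * s z.1 := by
  classical
  cases nonempty_fintype ν
  let e : (∀ i, Fin (A i)) → (ω →₀ ℕ) := fun a ↦
    Finsupp.equivFunOnFinite.symm fun i ↦ (a i : ℕ)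
  have he : Function.Injective e := fun a a' h ↦
    funext fun i ↦ Fin.ext (DFunLike.congr_fun h i)
  refine Fintype.linearIndependent_iff.2 fun g hg ⟨n, a⟩ ↦ ?_
  have hW := eq_zero_of_sum_aeval_mul_eq_zero hF hs hs'
    (W := fun n ↦ ∑ a, monomial (e a) (g (n, a))) (by
      rw [← hg, Fintype.sum_prod_type]
      refine Finset.sum_congr rfl fun n _ ↦ ?_
      simp only [map_sum, Finset.sum_mul]
      refine Finset.sum_congr rfl fun a _ ↦ ?_
      rw [aeval_monomial, Finsupp.prod_fintype _ _ (by simp), Algebra.smul_def]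
      simp [e, mul_assoc])
  simpa [coeff_sum, coeff_monomial, he.eq_iff] using congrArg (coeff (e a)) (hW n)

theorem card_mul_prod_le_of_nhds_le_map [Fintype ν] [Fintype τ] [Fintype ω] {c : ω → ℝ}
    (hF : ∀ n, 𝓝 c ≤ map (fun x i ↦ eval x (F i)) (𝓝 (p n)))
    (hs : ∀ n, eval (p n) (s n) ≠ 0) (hs' : ∀ n n', n' ≠ n → eval (p n) (s n') = 0)
    {A : ω → ℕ} {L : τ → ℕ}
    (hL : ∀ n j, ∑ i, A i * (F i).degreeOf j + (s n).degreeOf j ≤ L j) :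
    Fintype.card ν * ∏ i, A i ≤ ∏ j, (L j + 1) := by
  classical
  let G : ω → MvPolynomial τ ℝ := fun i ↦ F i - C (c i)
  have hG (n : ν) : 𝓝 0 ≤ map (fun x i ↦ eval x (G i)) (𝓝 (p n)) := by
    have h := map_mono (m := (· - c)) (hF n)
    rw [map_map] at h
    simpa [G, Function.comp_def, Pi.sub_def] using
      ((Homeomorph.subRight c).map_nhds_eq c).ge.trans h
  have hGF (i : ω) (j : τ) : (G i).degreeOf j ≤ (F i).degreeOf j :=
    (degreeOf_sub_le _ _ _).trans (by simp [degreeOf_C])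
  have hdeg (z : ν × ∀ i, Fin (A i)) (j : τ) :
      ((∏ i, G i ^ (z.2 i : ℕ)) * s z.1).degreeOf j ≤ L j := calc
    _ ≤ ∑ i, (G i ^ (z.2 i : ℕ)).degreeOf j + (s z.1).degreeOf j :=
      (degreeOf_mul_le _ _ _).trans (by gcongr; exact degreeOf_prod_le _ _ _)
    _ ≤ ∑ i, A i * (F i).degreeOf j + (s z.1).degreeOf j := by
      gcongr with i
      exact (degreeOf_pow_le _ _ _).trans (Nat.mul_le_mul (z.2 i).2.le (hGF i j))
    _ ≤ L j := hL z.1 j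
  simpa using card_le_prod_of_linearIndependent_of_degreeOf_le
    (linearIndependent_prod_pow_mul hG hs hs' A) hdeg

end Bezout

/-! ### Polynomial maps: derivatives, openness, regular values -/

section Jacobian

variable {σ τ : Type*} [Fintype τ]

/-- The differential at `x` of the polynomial function `p`, built from formal partial
derivatives. -/
noncomputable def evalFDeriv (p : MvPolynomial τ ℝ) (x : τ → ℝ) : (τ → ℝ) →L[ℝ] ℝ :=
  ∑ i, eval x (pderiv i p) • ContinuousLinearMap.proj i

/-- The Jacobian matrix at `x` of the polynomial map with components `f a`. -/
noncomputable def jacobian (f : σ → MvPolynomial τ ℝ) (x : τ → ℝ) : Matrix σ τ ℝ :=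
  Matrix.of fun a b ↦ eval x (pderiv b (f a))

lemma evalFDeriv_apply (p : MvPolynomial τ ℝ) (x v : τ → ℝ) :
    evalFDeriv p x v = ∑ i, eval x (pderiv i p) * v i := by
  simp [evalFDeriv]

lemma hasStrictFDerivAt_eval (p : MvPolynomial τ ℝ) (x : τ → ℝ) :
    HasStrictFDerivAt (fun x ↦ eval x p) (evalFDeriv p x) x := by
  classical
  induction p using MvPolynomial.induction_on with
  | C a =>
    simp only [eval_C]
    convert! hasStrictFDerivAt_const a x
    ext v
    simp [evalFDeriv_apply]
  | add p q hp hq =>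
    simp only [map_add]
    convert! hp.add hq
    ext v
    simp [evalFDeriv_apply, Finset.sum_add_distrib, add_mul]
  | mul_X p i hp =>
    simp only [map_mul, eval_X]
    convert! hp.mul (hasStrictFDerivAt_apply (𝕜 := ℝ) i x)
    ext v
    simp [evalFDeriv_apply, Derivation.leibniz, pderiv_X, Pi.single_apply, apply_ite, add_mul,
      Finset.sum_add_distrib, Finset.mul_sum, mul_assoc]

lemma hasStrictFDerivAt_eval_pi [Finite σ] [DecidableEq τ] (f : σ → MvPolynomial τ ℝ)
    (x : τ → ℝ) : HasStrictFDerivAt (fun x a ↦ eval x (f a))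
      (Matrix.toLin' (jacobian f x)).toContinuousLinearMap x := by
  cases nonempty_fintype σ
  rw [hasStrictFDerivAt_pi']
  intro a
  convert! hasStrictFDerivAt_eval (f a) x
  ext v
  simp [evalFDeriv_apply, jacobian, Matrix.mulVec, dotProduct]

lemma nhds_le_map_of_det_jacobian_ne_zero [DecidableEq τ] {f : τ → MvPolynomial τ ℝ} {x : τ → ℝ}
    (h : (jacobian f x).det ≠ 0) :
    𝓝 (fun a ↦ eval x (f a)) ≤ map (fun x a ↦ eval x (f a)) (𝓝 x) := by
  refine ((hasStrictFDerivAt_eval_pi f x).map_nhds_eq_of_surj ?_).ge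
  refine LinearMap.range_eq_top.2 fun y ↦ ⟨(jacobian f x)⁻¹.mulVec y, ?_⟩
  simp [Matrix.mulVec_mulVec, Matrix.mul_nonsing_inv _ (isUnit_iff_ne_zero.2 h)]

end Jacobian

section Sum

variable {ι κ : Type*}

lemma ae_ae_det_jacobian_ne_zero [Fintype ι] [Fintype κ] [DecidableEq (ι ⊕ κ)]
    (f : ι ⊕ κ → MvPolynomial (ι ⊕ κ) ℝ) :
    ∀ᵐ δ : ι → ℝ, ∀ᵐ u : κ → ℝ, ∀ x, (∀ i, eval x (f (Sum.inl i)) = δ i) →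
      (∀ i, eval x (f (Sum.inr i)) = u i) → (jacobian f x).det ≠ 0 := by
  have hcrit : volume ((fun x a ↦ eval x (f a)) '' {x | (jacobian f x).det = 0}) = 0 := by
    refine addHaar_image_eq_zero_of_det_fderivWithin_eq_zero volume
      (fun x _ ↦ (hasStrictFDerivAt_eval_pi f x).hasFDerivAt.hasFDerivWithinAt) fun x hx ↦ ?_
    simpa [ContinuousLinearMap.det, LinearMap.det_toLin'] using hx
  have hae := measure_eq_zero_iff_ae_notMem.1
    ((volume_measurePreserving_sumPiEquivProdPi_symm
      fun _ : ι ⊕ κ ↦ ℝ).quasiMeasurePreserving.preimage_null hcrit)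
  filter_upwards [Measure.ae_ae_of_ae_prod hae] with δ hδ
  filter_upwards [hδ] with u hu x hxδ hxu hdet
  exact hu ⟨x, hdet, funext (Sum.rec hxδ hxu)⟩

lemma continuous_sumElim_prod {X : Type*} [TopologicalSpace X] :
    Continuous fun w : (ι → X) × (κ → X) ↦ (Sum.elim w.1 w.2 : ι ⊕ κ → X) :=
  continuous_pi (Sum.rec (fun i ↦ (continuous_apply i).comp continuous_fst)
    fun i ↦ (continuous_apply i).comp continuous_snd)

lemma hasFDerivAt_eval_sumElim [Fintype ι] [Finite κ] (Q : MvPolynomial (ι ⊕ κ) ℝ) (z : ι → ℝ)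
    (y : κ → ℝ) :
    HasFDerivAt (fun z ↦ eval (Sum.elim z y) Q)
      (∑ l, eval (Sum.elim z y) (pderiv (Sum.inl l) Q) •
        ContinuousLinearMap.proj (R := ℝ) (φ := fun _ : ι ↦ ℝ) l) z := by
  cases nonempty_fintype κ
  have hinl : HasFDerivAt (fun z : ι → ℝ ↦ (Sum.elim z y : ι ⊕ κ → ℝ)) (ContinuousLinearMap.pi
      (Sum.rec (ContinuousLinearMap.proj (R := ℝ) (φ := fun _ : ι ↦ ℝ)) fun _ ↦ 0)) z :=
    hasFDerivAt_pi'.2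
      (Sum.rec (fun i ↦ hasFDerivAt_apply i z) fun i ↦ hasFDerivAt_const (y i) z)
  convert! (hasStrictFDerivAt_eval Q (Sum.elim z y)).hasFDerivAt.comp z hinl
  ext v
  simp [evalFDeriv_apply]

end Sum

lemma eventually_exists_isLocalMin_of_forall_sphere_lt {A E : Type*} [TopologicalSpace A]
    [PseudoMetricSpace E] [ProperSpace E] {f : A → E → ℝ}
    (hf : Continuous fun w : A × E ↦ f w.1 w.2)
    {a₀ : A} {z₀ : E} {s : ℝ} (hs : 0 < s) (hsphere : ∀ z ∈ Metric.sphere z₀ s, f a₀ z₀ < f a₀ z) :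
    ∀ᶠ a in 𝓝 a₀, ∃ z ∈ Metric.ball z₀ s, IsLocalMin (f a) z := by
  have hlt : ∀ᶠ a in 𝓝 a₀, ∀ z ∈ Metric.sphere z₀ s, f a z₀ < f a z :=
    (isCompact_sphere z₀ s).eventually_forall_of_forall_eventually fun z hz ↦
      ContinuousAt.eventually_lt (f := fun w : A × E ↦ f w.1 z₀)
        (hf.comp (by fun_prop : Continuous fun w : A × E ↦ (w.1, z₀))).continuousAt
        hf.continuousAt (hsphere z hz)
  filter_upwards [hlt] with a ha
  have hz₀ : z₀ ∈ Metric.closedBall z₀ s := Metric.mem_closedBall_self hs.le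
  obtain ⟨z, hz, hmin⟩ := (isCompact_closedBall z₀ s).exists_isMinOn ⟨z₀, hz₀⟩
    (hf.comp (by fun_prop : Continuous fun z ↦ (a, z))).continuousOn
  have hball : z ∈ Metric.ball z₀ s := lt_of_le_of_ne hz fun h ↦ (ha z h).not_ge (hmin hz₀)
  exact ⟨z, hball, hmin.isLocalMin (mem_of_superset (Metric.isOpen_ball.mem_nhds hball)
    Metric.ball_subset_closedBall)⟩

lemma eventually_exists_forall_eval_pderiv_eq {ι κ : Type*} [Fintype ι] [Finite κ]
    {Q : MvPolynomial (ι ⊕ κ) ℝ} {U : Set (ι ⊕ κ → ℝ)} (hU : IsOpen U) {z₀ : ι → ℝ} {y₀ : κ → ℝ}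
    {s : ℝ} (hs : 0 < s)
    (hball : ∀ z ∈ Metric.closedBall z₀ s, Sum.elim z y₀ ∈ U)
    (hsphere : ∀ z ∈ Metric.sphere z₀ s, eval (Sum.elim z₀ y₀) Q < eval (Sum.elim z y₀) Q) :
    ∀ᶠ a : (ι → ℝ) × (κ → ℝ) in 𝓝 (0, y₀), ∃ z, Sum.elim z a.2 ∈ U ∧
      ∀ l, eval (Sum.elim z a.2) (pderiv (Sum.inl l) Q) = a.1 l := by
  cases nonempty_fintype κ
  let f : (ι → ℝ) × (κ → ℝ) → (ι → ℝ) → ℝ := fun a z ↦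
    eval (Sum.elim z a.2) Q - ∑ l, a.1 l * z l
  have hf : Continuous fun w : ((ι → ℝ) × (κ → ℝ)) × (ι → ℝ) ↦ f w.1 w.2 :=
    ((continuous_eval Q).comp (continuous_sumElim_prod.comp (by fun_prop :
      Continuous fun w : ((ι → ℝ) × (κ → ℝ)) × (ι → ℝ) ↦ (w.2, w.1.2)))).sub (by fun_prop)
  have hmem : ∀ᶠ a : (ι → ℝ) × (κ → ℝ) in 𝓝 (0, y₀), ∀ z ∈ Metric.closedBall z₀ s,
      Sum.elim z a.2 ∈ U :=
    (isCompact_closedBall z₀ s).eventually_forall_of_forall_eventually fun z hz ↦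
      (continuous_sumElim_prod.comp (by fun_prop : Continuous
        fun w : ((ι → ℝ) × (κ → ℝ)) × (ι → ℝ) ↦ (w.2, w.1.2))).continuousAt.eventually_mem
        (hU.mem_nhds (hball z hz))
  filter_upwards [hmem, eventually_exists_isLocalMin_of_forall_sphere_lt hf hs
    fun z hz ↦ by simpa [f] using hsphere z hz] with a haU ⟨z, hz, hmin⟩
  refine ⟨z, haU z (Metric.ball_subset_closedBall hz), fun l ↦ ?_⟩
  classical
  have hlin : HasFDerivAt (fun z : ι → ℝ ↦ ∑ l, a.1 l * z l)
      (∑ l, a.1 l • ContinuousLinearMap.proj (R := ℝ) (φ := fun _ : ι ↦ ℝ) l) z :=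
    HasFDerivAt.fun_sum fun l _ ↦ (hasFDerivAt_apply l z).const_mul (a.1 l)
  have h := congrArg (· (Pi.single l 1))
    (hmin.hasFDerivAt_eq_zero ((hasFDerivAt_eval_sumElim Q z a.2).sub hlin))
  simpa [Pi.single_apply, sub_eq_zero] using h

/-! ### Critical points on perturbed fibrewise critical loci -/

lemma totalDegree_pderiv_le {R σ : Type*} [CommSemiring R] (i : σ) (p : MvPolynomial σ R) :
    (pderiv i p).totalDegree ≤ p.totalDegree := by
  conv_lhs => rw [p.as_sum, map_sum]
  refine totalDegree_finsetSum_le fun m hm ↦ ?_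
  rw [pderiv_monomial]
  exact (totalDegree_monomial_le _ _).trans
    ((Finsupp.degree_mono tsub_le_self).trans (le_totalDegree hm))

lemma totalDegree_det_le {R σ ι : Type*} [CommRing R] [Fintype ι] [DecidableEq ι]
    {M : Matrix ι ι (MvPolynomial σ R)} {e : ℕ} (h : ∀ i j, (M i j).totalDegree ≤ e) :
    M.det.totalDegree ≤ Fintype.card ι * e := by
  rw [Matrix.det_apply]
  refine totalDegree_finsetSum_le fun π _ ↦ ?_
  calc (Equiv.Perm.sign π • ∏ i, M (π i) i).totalDegree ≤ (∏ i, M (π i) i).totalDegree := by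
        rcases Int.units_eq_one_or (Equiv.Perm.sign π) with hπ | hπ <;> simp [hπ]
    _ ≤ ∑ i, (M (π i) i).totalDegree := totalDegree_finsetProd _ _
    _ ≤ Fintype.card ι * e := by
        simpa using Finset.sum_le_card_nsmul Finset.univ _ e fun i _ ↦ h (π i) i

section FiberHessian

variable {R ι κ : Type*} [CommRing R]

/-- The polynomial map consisting of the partial derivatives of `Q` in the fibre variables `ι`
and of the coordinates of the base variables `κ`. -/
noncomputable def fiberGradient (Q : MvPolynomial (ι ⊕ κ) R) : ι ⊕ κ → MvPolynomial (ι ⊕ κ) R :=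
  Sum.elim (fun l ↦ pderiv (Sum.inl l) Q) fun i ↦ X (Sum.inr i)

/-- The determinant of the Hessian of `Q` in the fibre variables `ι`. -/
noncomputable def fiberHessian [Fintype ι] [DecidableEq ι] (Q : MvPolynomial (ι ⊕ κ) R) :
    MvPolynomial (ι ⊕ κ) R :=
  (Matrix.of fun l l' ↦ pderiv (Sum.inl l') (pderiv (Sum.inl l) Q)).det

variable [Fintype ι] [DecidableEq ι]

lemma eval_fiberHessian (Q : MvPolynomial (ι ⊕ κ) R) (x : ι ⊕ κ → R) :
    eval x (fiberHessian Q) =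
      (Matrix.of fun l l' ↦ eval x (pderiv (Sum.inl l') (pderiv (Sum.inl l) Q))).det := by
  rw [fiberHessian, RingHom.map_det]
  rfl

lemma totalDegree_fiberHessian_le (Q : MvPolynomial (ι ⊕ κ) R) :
    (fiberHessian Q).totalDegree ≤ Fintype.card ι * Q.totalDegree :=
  totalDegree_det_le fun _ _ ↦ (totalDegree_pderiv_le _ _).trans (totalDegree_pderiv_le _ _)

lemma det_jacobian_fiberGradient [Fintype κ] [DecidableEq κ] (Q : MvPolynomial (ι ⊕ κ) ℝ)
    (x : ι ⊕ κ → ℝ) : (jacobian (fiberGradient Q) x).det = eval x (fiberHessian Q) := by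
  have hblocks : jacobian (fiberGradient Q) x = Matrix.fromBlocks
      (Matrix.of fun l l' ↦ eval x (pderiv (Sum.inl l') (pderiv (Sum.inl l) Q)))
      (Matrix.of fun l i ↦ eval x (pderiv (Sum.inr i) (pderiv (Sum.inl l) Q))) 0 1 := by
    ext (a | a) (b | b) <;>
      simp [jacobian, fiberGradient, pderiv_X, Matrix.one_apply, Pi.single_apply]
  rw [hblocks, Matrix.det_fromBlocks_zero₂₁, Matrix.det_one, mul_one, eval_fiberHessian]

end FiberHessian

section Lagrange

variable {ι κ : Type*} [Fintype ι]

/-- The Lagrange system for the critical points of `Φ` on a common level set of the fibre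
derivatives of `Q`. Its variables are the multipliers `ι` and the point `ι ⊕ κ`; its first
components are the fibre derivatives, its last components the entries of the gradient of the
Lagrangian. -/
noncomputable def lagrangeSystem (Q Φ : MvPolynomial (ι ⊕ κ) ℝ) :
    ι ⊕ (ι ⊕ κ) → MvPolynomial (ι ⊕ (ι ⊕ κ)) ℝ :=
  Sum.elim (fun l ↦ rename Sum.inr (pderiv (Sum.inl l) Q)) fun c ↦
    rename Sum.inr (pderiv c Φ) -
      ∑ l, X (Sum.inl l) * rename Sum.inr (pderiv c (pderiv (Sum.inl l) Q))

lemma eval_sumElim_lagrangeSystem (Q Φ : MvPolynomial (ι ⊕ κ) ℝ) (lam : ι → ℝ) (q : ι ⊕ κ → ℝ) :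
    (fun a ↦ eval (Sum.elim lam q) (lagrangeSystem Q Φ a)) =
      Sum.elim (fun l ↦ eval q (pderiv (Sum.inl l) Q)) fun c ↦ eval q (pderiv c Φ) -
        ∑ l, lam l * eval q (pderiv c (pderiv (Sum.inl l) Q)) := by
  ext (l | c) <;> simp [lagrangeSystem, eval_rename]

variable [DecidableEq ι] [DecidableEq κ]

lemma exists_multipliers_of_isLocalMaxOn [Finite κ] {Q : MvPolynomial (ι ⊕ κ) ℝ}
    {g : (ι ⊕ κ → ℝ) → ℝ}
    {g' : (ι ⊕ κ → ℝ) →L[ℝ] ℝ} {q : ι ⊕ κ → ℝ} (hg : HasStrictFDerivAt g g' q)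
    (hmax : IsLocalMaxOn g
      {x | ∀ l, eval x (pderiv (Sum.inl l) Q) = eval q (pderiv (Sum.inl l) Q)} q)
    (hQ : eval q (fiberHessian Q) ≠ 0) :
    ∃ lam : ι → ℝ, ∀ c,
      g' (Pi.single c 1) = ∑ l, lam l * eval q (pderiv c (pderiv (Sum.inl l) Q)) := by
  cases nonempty_fintype κ
  obtain ⟨Λ, Λ₀, hne, hsum⟩ := IsLocalExtrOn.exists_multipliers_of_hasStrictFDerivAt
    (f := fun l x ↦ eval x (pderiv (Sum.inl l) Q)) (Or.inr hmax)
    (fun l ↦ hasStrictFDerivAt_eval (pderiv (Sum.inl l) Q) q) hg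
  have hcoord (c) : ∑ l, Λ l * eval q (pderiv c (pderiv (Sum.inl l) Q)) +
      Λ₀ * g' (Pi.single c 1) = 0 := by
    simpa [evalFDeriv_apply, Pi.single_apply] using congrArg (· (Pi.single c 1)) hsum
  have hΛ₀ : Λ₀ ≠ 0 := by
    rintro rfl
    rw [eval_fiberHessian] at hQ
    refine hne (Prod.ext (Matrix.eq_zero_of_vecMul_eq_zero hQ (funext fun l' ↦ ?_)) rfl)
    simpa [Matrix.vecMul, dotProduct] using hcoord (Sum.inl l')
  refine ⟨fun l ↦ -Λ l / Λ₀, fun c ↦ mul_left_cancel₀ hΛ₀ ?_⟩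
  calc Λ₀ * g' (Pi.single c 1) = -∑ l, Λ l * eval q (pderiv c (pderiv (Sum.inl l) Q)) := by
        linarith [hcoord c]
    _ = Λ₀ * ∑ l, -Λ l / Λ₀ * eval q (pderiv c (pderiv (Sum.inl l) Q)) := by
        rw [Finset.mul_sum, ← Finset.sum_neg_distrib]
        exact Finset.sum_congr rfl fun l _ ↦ by field_simp

lemma exists_nhds_le_map_lagrangeSystem [Fintype κ] {Q Φ : MvPolynomial (ι ⊕ κ) ℝ} {δ : ι → ℝ}
    {u : ι ⊕ κ → ℝ}
    (hreg : ∀ x, (∀ i, eval x (lagrangeSystem Q Φ (Sum.inl i)) = δ i) →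
      (∀ i, eval x (lagrangeSystem Q Φ (Sum.inr i)) = u i) →
      (jacobian (lagrangeSystem Q Φ) x).det ≠ 0)
    {q : ι ⊕ κ → ℝ} (hqδ : ∀ l, eval q (pderiv (Sum.inl l) Q) = δ l)
    (hmax : IsLocalMaxOn (fun x ↦ eval x Φ - ∑ c, u c * x c)
      {x | ∀ l, eval x (pderiv (Sum.inl l) Q) = δ l} q)
    (hQ : eval q (fiberHessian Q) ≠ 0) :
    ∃ lam : ι → ℝ, 𝓝 (Sum.elim δ u) ≤
      map (fun x i ↦ eval x (lagrangeSystem Q Φ i)) (𝓝 (Sum.elim lam q)) := by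
  have hlin : HasStrictFDerivAt (fun x : ι ⊕ κ → ℝ ↦ ∑ c, u c * x c)
      (∑ c, u c • ContinuousLinearMap.proj (R := ℝ) (φ := fun _ : ι ⊕ κ ↦ ℝ) c) q :=
    HasStrictFDerivAt.fun_sum fun c _ ↦ (hasStrictFDerivAt_apply c q).const_mul (u c)
  obtain ⟨lam, hlam⟩ := exists_multipliers_of_isLocalMaxOn
    ((hasStrictFDerivAt_eval Φ q).sub hlin) (by simpa only [hqδ, Pi.sub_def] using hmax) hQ
  have hvalue : (fun i ↦ eval (Sum.elim lam q) (lagrangeSystem Q Φ i)) = Sum.elim δ u := by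
    rw [eval_sumElim_lagrangeSystem, funext hqδ]
    congr 1 with c
    have hc : eval q (pderiv c Φ) - u c =
        ∑ l, lam l * eval q (pderiv c (pderiv (Sum.inl l) Q)) := by
      simpa [-Fintype.sum_sum_type, evalFDeriv_apply, Pi.single_apply] using hlam c
    linarith
  refine ⟨lam, hvalue ▸ nhds_le_map_of_det_jacobian_ne_zero (hreg _ ?_ ?_)⟩
  · exact fun i ↦ congrFun hvalue (Sum.inl i)
  · exact fun i ↦ congrFun hvalue (Sum.inr i)

end Lagrange

/-! ### Counting open sets by their critical points -/

section Degree

lemma degreeOf_inl_rename_inr {R α β : Type*} [CommSemiring R] (p : MvPolynomial β R) (a : α) :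
    degreeOf (Sum.inl a) (rename Sum.inr p) = 0 := by
  classical
  by_contra h
  simpa using vars_rename Sum.inr p (mem_vars_iff_degreeOf_ne_zero.2 h)

lemma degreeOf_inr_rename_inr_le {R α β : Type*} [CommSemiring R] (p : MvPolynomial β R) (b : β) :
    degreeOf (Sum.inr b : α ⊕ β) (rename Sum.inr p) ≤ p.totalDegree :=
  (degreeOf_rename_of_injective Sum.inr_injective b).trans_le (degreeOf_le_totalDegree _ _)

variable {ι κ : Type*} [Fintype ι] (Q Φ : MvPolynomial (ι ⊕ κ) ℝ)

lemma degreeOf_inl_lagrangeSystem_inl (l a : ι) :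
    (lagrangeSystem Q Φ (Sum.inl l)).degreeOf (Sum.inl a) = 0 :=
  degreeOf_inl_rename_inr _ _

lemma degreeOf_inr_lagrangeSystem_inl_le (l : ι) (b : ι ⊕ κ) :
    (lagrangeSystem Q Φ (Sum.inl l)).degreeOf (Sum.inr b) ≤ Q.totalDegree :=
  (degreeOf_inr_rename_inr_le _ _).trans (totalDegree_pderiv_le _ _)

lemma degreeOf_inl_lagrangeSystem_inr_le (c : ι ⊕ κ) (a : ι) :
    (lagrangeSystem Q Φ (Sum.inr c)).degreeOf (Sum.inl a) ≤ 1 := by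
  classical
  refine (degreeOf_sub_le _ _ _).trans (max_le (by simp [degreeOf_inl_rename_inr]) ?_)
  refine (degreeOf_sum_le _ _ _).trans (Finset.sup_le fun l _ ↦ (degreeOf_mul_le _ _ _).trans ?_)
  rw [degreeOf_inl_rename_inr, degreeOf_X]
  split_ifs <;> simp

lemma degreeOf_inr_lagrangeSystem_inr_le (c b : ι ⊕ κ) :
    (lagrangeSystem Q Φ (Sum.inr c)).degreeOf (Sum.inr b) ≤ max Φ.totalDegree Q.totalDegree := by
  classical
  refine (degreeOf_sub_le _ _ _).trans (max_le_max ?_ ?_)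
  · exact (degreeOf_inr_rename_inr_le _ _).trans (totalDegree_pderiv_le _ _)
  · refine (degreeOf_sum_le _ _ _).trans (Finset.sup_le fun l _ ↦ (degreeOf_mul_le _ _ _).trans ?_)
    rw [degreeOf_X, if_neg Sum.inr_ne_inl, zero_add]
    exact (degreeOf_inr_rename_inr_le _ _).trans
      ((totalDegree_pderiv_le _ _).trans (totalDegree_pderiv_le _ _))

end Degree

section Separator

variable {ν τ : Type*} [Fintype ν] [DecidableEq ν] [Fintype τ]

/-- A polynomial vanishing at all the points `q n'` with `n' ≠ n` and nowhere else. -/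
noncomputable def separator (q : ν → τ → ℝ) (n : ν) : MvPolynomial τ ℝ :=
  ∏ n' ∈ Finset.univ.erase n, ∑ c, (X c - C (q n' c)) ^ 2

lemma eval_separator_ne_zero {q : ν → τ → ℝ} (hq : Function.Injective q) (n : ν) :
    eval (q n) (separator q n) ≠ 0 := by
  simp only [separator, map_prod, map_sum, map_pow, map_sub, eval_X, eval_C]
  refine Finset.prod_ne_zero_iff.2 fun n' hn' h ↦
    Finset.ne_of_mem_erase hn' (hq (funext fun c ↦ ?_))
  have hc := (Finset.sum_eq_zero_iff_of_nonneg fun c _ ↦ sq_nonneg _).1 h c (Finset.mem_univ c)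
  exact (sub_eq_zero.1 (pow_eq_zero_iff two_ne_zero |>.1 hc)).symm

lemma eval_separator_of_ne (q : ν → τ → ℝ) {n n' : ν} (h : n' ≠ n) :
    eval (q n) (separator q n') = 0 := by
  simp only [separator, map_prod]
  exact Finset.prod_eq_zero (Finset.mem_erase.2 ⟨h.symm, Finset.mem_univ n⟩) (by simp)

lemma totalDegree_separator_le (q : ν → τ → ℝ) (n : ν) :
    (separator q n).totalDegree ≤ 2 * Fintype.card ν := by
  have hfactor (n' : ν) : (∑ c, (X c - C (q n' c)) ^ 2 : MvPolynomial τ ℝ).totalDegree ≤ 2 :=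
    totalDegree_finsetSum_le fun c _ ↦ (totalDegree_pow _ _).trans
      (by simpa using (totalDegree_sub_C_le (X c : MvPolynomial τ ℝ) (q n' c)))
  calc (separator q n).totalDegree ≤ (Finset.univ.erase n).card • 2 :=
        (totalDegree_finsetProd _ _).trans (Finset.sum_le_card_nsmul _ _ 2 fun n' _ ↦ hfactor n')
    _ ≤ 2 * Fintype.card ν := by
        rw [smul_eq_mul, mul_comm]
        gcongr
        exact Finset.card_le_univ _

end Separator

lemma le_of_weighted_monomial_count {N D m k e g : ℕ} (hD : 1 ≤ D)
    (h : N * ((D * (N + 1)) ^ m * (N + 1) ^ (m + k)) ≤ ((m + k) * (N + 1) + 1) ^ m *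
      (m * (D * (N + 1) * e) + (m + k) * ((N + 1) * (D * g)) + 2 * N + 1) ^ (m + k)) :
    N ≤ (m + k + 1) ^ m * (m * e + (m + k) * g + 2) ^ (m + k) * D ^ k := by
  set K := m * e + (m + k) * g + 2 with hK
  have hmultiplier : (m + k) * (N + 1) + 1 ≤ (m + k + 1) * (N + 1) := by nlinarith
  have hpoint : m * (D * (N + 1) * e) + (m + k) * ((N + 1) * (D * g)) + 2 * N + 1 ≤
      K * (D * (N + 1)) := by
    have hexpand : K * (D * (N + 1)) =
        m * (D * (N + 1) * e) + (m + k) * ((N + 1) * (D * g)) + 2 * (D * (N + 1)) := by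
      rw [hK]; ring
    rw [hexpand]
    nlinarith
  refine Nat.le_of_mul_le_mul_right (c := (D * (N + 1)) ^ m * (N + 1) ^ (m + k)) ?_ (by positivity)
  calc N * ((D * (N + 1)) ^ m * (N + 1) ^ (m + k))
      ≤ ((m + k + 1) * (N + 1)) ^ m * (K * (D * (N + 1))) ^ (m + k) :=
        h.trans (by gcongr)
    _ = (m + k + 1) ^ m * K ^ (m + k) * D ^ k * ((D * (N + 1)) ^ m * (N + 1) ^ (m + k)) := by
        simp only [mul_pow, pow_add]; ring

/-- An upper bound for the number of isolated solutions of a Lagrange system with `m` fibre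
variables, `k` base variables and degrees at most `e` and `D * g`, after division by `D ^ k`. -/
def lagrangeBound (m k e g : ℕ) : ℕ :=
  (m + k + 1) ^ m * (m * e + (m + k) * g + 2) ^ (m + k)

lemma exists_mem_isLocalMaxOn_sub {X : Type*} [TopologicalSpace X] {U K : Set X} (hU : IsOpen U)
    (hUc : IsCompact (closure U)) (hK : IsClosed K) {f g : X → ℝ} (hf : Continuous f)
    (hg : Continuous g) (hfrontier : ∀ x ∈ frontier U, f x ≤ 0) {x : X} (hxU : x ∈ U) (hxK : x ∈ K)
    (hsmall : ∀ y ∈ closure U, |g y| < f x / 2) :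
    ∃ q ∈ U, q ∈ K ∧ 0 < f q ∧ IsLocalMaxOn (fun y ↦ f y - g y) K q := by
  obtain ⟨q, ⟨hqU, hqK⟩, hmax⟩ := (hUc.inter_right hK).exists_isMaxOn
    ⟨x, subset_closure hxU, hxK⟩ (hf.sub hg).continuousOn
  have hfq : 0 < f q := by
    have hle : f x - g x ≤ f q - g q := hmax ⟨subset_closure hxU, hxK⟩
    linarith [abs_lt.1 (hsmall x (subset_closure hxU)), abs_lt.1 (hsmall q hqU)]
  have hqU' : q ∈ U := by
    by_contra h
    exact (hfrontier q (hU.frontier_eq ▸ ⟨hqU, h⟩)).not_gt hfq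
  refine ⟨q, hqU', hqK, hfq, ?_⟩
  filter_upwards [mem_nhdsWithin_of_mem_nhds (hU.mem_nhds hqU'), self_mem_nhdsWithin] with y hyU hyK
  exact hmax ⟨subset_closure hyU, hyK⟩

lemma eventually_forall_closure_abs_sum_mul_lt {ι : Type*} [Fintype ι] {U : Set (ι → ℝ)}
    (hU : Bornology.IsBounded U) {r : ℝ} (hr : 0 < r) :
    ∀ᶠ u : ι → ℝ in 𝓝 0, ∀ x ∈ closure U, |∑ c, u c * x c| < r := by
  refine hU.isCompact_closure.eventually_forall_of_forall_eventually fun x _ ↦ ?_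
  have hcont : Continuous fun w : (ι → ℝ) × (ι → ℝ) ↦ |∑ c, w.1 c * w.2 c| := by fun_prop
  exact hcont.continuousAt.eventually_lt continuousAt_const (by simpa using hr)

section Counting

variable {ι κ ν : Type*} [Fintype ι] [Fintype κ] [Fintype ν]

-- With `N` solutions, multipliers are cheap: weight `D * (N + 1)` on the fibre equations, which do
-- not involve them, against `N + 1` on the others makes the power of `D` in the Bézout bound `k`.
lemma card_le_of_nhds_le_map_lagrangeSystem {Q Φ : MvPolynomial (ι ⊕ κ) ℝ} {c : ι ⊕ (ι ⊕ κ) → ℝ}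
    {D e g : ℕ} (hD : 1 ≤ D) (hQ : Q.totalDegree ≤ e)
    (hQΦ : max Φ.totalDegree Q.totalDegree ≤ D * g)
    {q : ν → ι ⊕ κ → ℝ} (hq : Function.Injective q) {lam : ν → ι → ℝ}
    (hopen : ∀ n, 𝓝 c ≤
      map (fun x i ↦ eval x (lagrangeSystem Q Φ i)) (𝓝 (Sum.elim (lam n) (q n)))) :
    Fintype.card ν ≤
      lagrangeBound (Fintype.card ι) (Fintype.card κ) e g * D ^ Fintype.card κ := by
  classical
  have heval (n : ν) (p : MvPolynomial (ι ⊕ κ) ℝ) :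
      eval (Sum.elim (lam n) (q n)) (rename Sum.inr p) = eval (q n) p := by
    simp [eval_rename]
  set N := Fintype.card ν
  set m := Fintype.card ι
  set d := m + Fintype.card κ
  let A : ι ⊕ (ι ⊕ κ) → ℕ := Sum.elim (fun _ ↦ D * (N + 1)) fun _ ↦ N + 1
  let L : ι ⊕ (ι ⊕ κ) → ℕ := Sum.elim (fun _ ↦ d * (N + 1))
    fun _ ↦ m * (D * (N + 1) * e) + d * ((N + 1) * (D * g)) + 2 * N
  have hL (n : ν) (j : ι ⊕ (ι ⊕ κ)) : ∑ i, A i * (lagrangeSystem Q Φ i).degreeOf j +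
      (rename Sum.inr (separator q n)).degreeOf j ≤ L j := by
    rw [Fintype.sum_sum_type]
    rcases j with a | b
    · simpa [-Fintype.sum_sum_type, A, L, degreeOf_inl_lagrangeSystem_inl, degreeOf_inl_rename_inr,
        m, d] using Finset.sum_le_card_nsmul Finset.univ _ ((N + 1) * 1) fun c _ ↦
          Nat.mul_le_mul_left (N + 1) (degreeOf_inl_lagrangeSystem_inr_le Q Φ c a)
    · refine add_le_add (add_le_add ?_ ?_)
        ((degreeOf_inr_rename_inr_le _ _).trans (totalDegree_separator_le q n))
      · simpa [A, m] using Finset.sum_le_card_nsmul Finset.univ _ (D * (N + 1) * e) fun l _ ↦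
          Nat.mul_le_mul_left _ ((degreeOf_inr_lagrangeSystem_inl_le Q Φ l b).trans hQ)
      · simpa [-Fintype.sum_sum_type, A, m, d] using
          Finset.sum_le_card_nsmul Finset.univ _ ((N + 1) * (D * g)) fun c _ ↦
            Nat.mul_le_mul_left _ ((degreeOf_inr_lagrangeSystem_inr_le Q Φ c b).trans hQΦ)
  have hcount := card_mul_prod_le_of_nhds_le_map hopen
    (s := fun n ↦ rename Sum.inr (separator q n))
    (fun n ↦ by rw [heval]; exact eval_separator_ne_zero hq n)
    (fun n n' h ↦ by rw [heval]; exact eval_separator_of_ne q h) hL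
  refine le_of_weighted_monomial_count hD ?_
  simpa [A, L, Fintype.prod_sum_type, pow_add, mul_assoc] using hcount

omit [Fintype ν] in
lemma exists_mem_isLocalMaxOn_fiber_level [DecidableEq ι] {Q Φ₀ : MvPolynomial (ι ⊕ κ) ℝ}
    {U : Set (ι ⊕ κ → ℝ)} (hU : IsOpen U) (hUb : Bornology.IsBounded U)
    (hfrontier : ∀ x ∈ frontier U, eval x Φ₀ = 0) {x : ι ⊕ κ → ℝ} (hx : x ∈ U) {δ : ι → ℝ}
    (hxδ : ∀ l, eval x (pderiv (Sum.inl l) Q) = δ l)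
    (hpos : 0 < eval x (Φ₀ * fiberHessian Q ^ 2)) :
    ∀ᶠ u : ι ⊕ κ → ℝ in 𝓝 0, ∃ q ∈ U, (∀ l, eval q (pderiv (Sum.inl l) Q) = δ l) ∧
      eval q (fiberHessian Q) ≠ 0 ∧
      IsLocalMaxOn (fun x ↦ eval x (Φ₀ * fiberHessian Q ^ 2) - ∑ c, u c * x c)
        {x | ∀ l, eval x (pderiv (Sum.inl l) Q) = δ l} q := by
  filter_upwards [eventually_forall_closure_abs_sum_mul_lt hUb (half_pos hpos)] with u hu
  have hclosed : IsClosed {x : ι ⊕ κ → ℝ | ∀ l, eval x (pderiv (Sum.inl l) Q) = δ l} := by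
    simp only [Set.ofPred_forall]
    exact isClosed_iInter fun l ↦ isClosed_eq (continuous_eval _) continuous_const
  obtain ⟨q, hqU, hqδ, hqpos, hmax⟩ := exists_mem_isLocalMaxOn_sub hU hUb.isCompact_closure hclosed
    (continuous_eval (Φ₀ * fiberHessian Q ^ 2)) (by fun_prop)
    (fun y hy ↦ by rw [map_mul, hfrontier y hy, zero_mul]) hx hxδ hu
  refine ⟨q, hqU, hqδ, fun h ↦ hqpos.ne' ?_, hmax⟩
  rw [map_mul, map_pow, h, zero_pow two_ne_zero, mul_zero]

-- Multiplying `Φ₀` by the squared fibre Hessian keeps it nonnegative on the sets, and makes the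
-- perturbed maximum on each of them avoid the degenerate points of the fibre critical locus.
theorem card_le_of_forall_exists_fiber_min {Q Φ₀ : MvPolynomial (ι ⊕ κ) ℝ}
    {e D : ℕ} (hD : 1 ≤ D) (hQ : Q.totalDegree ≤ e) (hΦ₀ : Φ₀.totalDegree ≤ D)
    {U : ν → Set (ι ⊕ κ → ℝ)} (hU : ∀ n, IsOpen (U n)) (hUb : ∀ n, Bornology.IsBounded (U n))
    (hdisj : Pairwise (Function.onFun Disjoint U)) (hpos : ∀ n, ∀ x ∈ U n, 0 < eval x Φ₀)
    (hfrontier : ∀ n, ∀ x ∈ frontier (U n), eval x Φ₀ = 0)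
    (hmin : ∀ n, ∃ (z₀ : ι → ℝ) (y₀ : κ → ℝ), ∃ s > 0,
      (∀ z ∈ Metric.closedBall z₀ s, Sum.elim z y₀ ∈ U n) ∧
      ∀ z ∈ Metric.sphere z₀ s, eval (Sum.elim z₀ y₀) Q < eval (Sum.elim z y₀) Q) :
    Fintype.card ν ≤ lagrangeBound (Fintype.card ι) (Fintype.card κ) e
      (1 + 2 * (Fintype.card ι * e) + e) * D ^ Fintype.card κ := by
  classical
  choose z₀ y₀ s hs hball hsphere using hmin
  have hcrit : ∀ᶠ δ : ι → ℝ in 𝓝 0, ∀ n, ∀ᶠ y in 𝓝 (y₀ n), ∃ z, Sum.elim z y ∈ U n ∧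
      ∀ l, eval (Sum.elim z y) (pderiv (Sum.inl l) Q) = δ l :=
    eventually_all.2 fun n ↦
      (eventually_exists_forall_eval_pderiv_eq (hU n) (hs n) (hball n) (hsphere n)).curry_nhds
  obtain ⟨δ, ⟨hδ, hδ'⟩, hδcrit⟩ := (Measure.dense_of_ae
    ((ae_ae_det_jacobian_ne_zero (fiberGradient Q)).and (ae_ae_det_jacobian_ne_zero
      (lagrangeSystem Q (Φ₀ * fiberHessian Q ^ 2))))).inter_nhds_nonempty hcrit
  have hlevel (n : ν) : ∃ x ∈ U n, (∀ l, eval x (pderiv (Sum.inl l) Q) = δ l) ∧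
      0 < eval x (Φ₀ * fiberHessian Q ^ 2) := by
    obtain ⟨y, hy, z, hz, hzδ⟩ := (Measure.dense_of_ae hδ).inter_nhds_nonempty (hδcrit n)
    have hne := hy (Sum.elim z y) hzδ fun i ↦ by simp [fiberGradient]
    rw [det_jacobian_fiberGradient] at hne
    have := hpos n _ hz
    exact ⟨_, hz, hzδ, by rw [map_mul, map_pow]; positivity⟩
  choose x hxU hxδ hxpos using hlevel
  obtain ⟨u, hu, hmax⟩ := (Measure.dense_of_ae hδ').inter_nhds_nonempty (eventually_all.2
    fun n ↦ exists_mem_isLocalMaxOn_fiber_level (hU n) (hUb n) (hfrontier n) (hxU n) (hxδ n)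
      (hxpos n))
  choose q hqU hqδ hqne hqmax using hmax
  choose lam hlam using fun n ↦
    exists_nhds_le_map_lagrangeSystem hu (hqδ n) (hqmax n) (hqne n)
  have hinj : Function.Injective q := fun n n' h ↦ by
    by_contra hne
    exact Set.disjoint_left.1 (hdisj hne) (hqU n) (h ▸ hqU n')
  refine card_le_of_nhds_le_map_lagrangeSystem hD hQ (max_le ?_ ?_) hinj hlam
  · have hmul := totalDegree_mul Φ₀ (fiberHessian Q ^ 2)
    have hpow := totalDegree_pow (fiberHessian Q) 2
    have hhess := totalDegree_fiberHessian_le Q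
    nlinarith [Nat.zero_le (Fintype.card ι * e)]
  · nlinarith [Nat.zero_le (Fintype.card ι * e)]

end Counting

lemma volume_image_eq_zero_of_dimH_lt {E ι : Type*} [NormedAddCommGroup E] [NormedSpace ℝ E]
    [SecondCountableTopology E] [Fintype ι] {f : E → ι → ℝ} {s : Set E}
    (hf : ∀ x ∈ s, ContDiffAt ℝ 1 f x) (hs : dimH s < Fintype.card ι) : volume (f '' s) = 0 := by
  have hlip : ∀ x ∈ s, ∃ C, ∃ t ∈ 𝓝[s] x, LipschitzOnWith C f t := fun x hx ↦
    let ⟨C, t, ht, hC⟩ := (hf x hx).exists_lipschitzOnWith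
    ⟨C, t, mem_nhdsWithin_of_mem_nhds ht, hC⟩
  refine measure_zero_of_dimH_lt (d := (Fintype.card ι : NNReal)) ?_
    ((dimH_image_le_of_locally_lipschitzOn hlip).trans_lt (mod_cast hs))
  rw [← hausdorffMeasure_pi_real]
  exact Measure.AbsolutelyContinuous.rfl

lemma isSigmaCompact_inter_isOpen {E : Type*} [PseudoEMetricSpace E] {K O : Set E}
    (hK : IsSigmaCompact K) (hO : IsOpen O) : IsSigmaCompact (K ∩ O) := by
  obtain ⟨G, hG, -, rfl, -⟩ := hO.exists_iUnion_isClosed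
  obtain ⟨L, hL, rfl⟩ := hK
  simp only [Set.iUnion_inter_iUnion]
  exact isSigmaCompact_iUnion _ fun i ↦ isSigmaCompact_iUnion_of_isCompact _
    fun j ↦ (hL i).inter_right (hG j)

section Transversality

open Matrix

variable {ι κ : Type*} [Fintype ι]

/-- The pairs of a slope matrix `B` and a number `s` such that the graph of `B` meets `K` in a
point whose `l`-th base coordinate has absolute value `s`. -/
def graphHits (K : Set (ι ⊕ κ → ℝ)) (l : ι) : Set ((κ → ι → ℝ) × ℝ) :=
  {p | ∃ t ∈ K, t ∘ Sum.inr = of p.1 *ᵥ (t ∘ Sum.inl) ∧ |t (Sum.inl l)| = p.2}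

lemma isClosed_graphHits {K : Set (ι ⊕ κ → ℝ)} (hK : IsCompact K) (l : ι) :
    IsClosed (graphHits K l) := by
  have hclosed : IsClosed {q : (ι ⊕ κ → ℝ) × ((κ → ι → ℝ) × ℝ) |
      q.1 ∘ Sum.inr = of q.2.1 *ᵥ (q.1 ∘ Sum.inl) ∧ |q.1 (Sum.inl l)| = q.2.2} := by
    refine (isClosed_eq ?_ ?_).and (isClosed_eq (by fun_prop) (by fun_prop))
    · fun_prop
    · refine continuous_pi fun i ↦ ?_
      simp only [mulVec, dotProduct, of_apply, Function.comp_apply]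
      fun_prop
  have := isCompact_iff_compactSpace.1 hK
  convert isClosedMap_snd_of_compactSpace (X := K) _ (hclosed.preimage
    (continuous_subtype_val.prodMap continuous_id)) using 1
  ext p
  simp [graphHits, and_left_comm]

/-- The change of slope matrix that adds a vector to its `l`-th column, together with a change of
radius. -/
noncomputable def columnShift [DecidableEq ι] (l : ι) : (Option κ → ℝ) →ₗ[ℝ] (κ → ι → ℝ) × ℝ :=
  (LinearMap.pi fun i ↦ LinearMap.single ℝ (fun _ ↦ ℝ) l ∘ₗ LinearMap.proj (some i)).prod
    (LinearMap.proj none)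

lemma mulVec_add_columnShift [DecidableEq ι] (l : ι) (p : (κ → ι → ℝ) × ℝ) (g : Option κ → ℝ)
    (v : ι → ℝ) (i : κ) :
    (of (p + columnShift l g).1 *ᵥ v) i = (of p.1 *ᵥ v) i + g (some i) * v l := by
  have hcolumn : of (p + columnShift l g).1 i = of p.1 i + Pi.single l (g (some i)) := rfl
  rw [mulVec, hcolumn, add_dotProduct, single_dotProduct, mulVec]

variable [Fintype κ]

lemma volume_preimage_columnShift_graphHits [DecidableEq ι] {K : Set (ι ⊕ κ → ℝ)} {l : ι}
    (hl : ∀ t ∈ K, t (Sum.inl l) ≠ 0) (hdim : dimH K ≤ Fintype.card κ) (p : (κ → ι → ℝ) × ℝ) :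
    volume {g | p + columnShift l g ∈ graphHits K l} = 0 := by
  -- A point `t` with `t l ≠ 0` lies on the shifted graph for exactly one shift `g = f t`.
  let f (t : ι ⊕ κ → ℝ) : Option κ → ℝ
    | none => |t (Sum.inl l)| - p.2
    | some i => (t (Sum.inr i) - (of p.1 *ᵥ (t ∘ Sum.inl)) i) / t (Sum.inl l)
  have hf : ∀ t ∈ K, ContDiffAt ℝ 1 f t := by
    refine fun t ht ↦ contDiffAt_pi.2 fun o ↦ ?_
    rcases o with _ | i
    · exact ((contDiffAt_apply ℝ ℝ (Sum.inl l) t).abs (hl t ht)).sub contDiffAt_const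
    · simp only [f, mulVec, dotProduct, of_apply, Function.comp_apply]
      exact ContDiffAt.div (by fun_prop) (by fun_prop) (hl t ht)
  refine measure_mono_null ?_ (volume_image_eq_zero_of_dimH_lt hf (hdim.trans_lt ?_))
  · rintro g ⟨t, ht, hgraph, hs⟩
    refine ⟨t, ht, funext fun o ↦ ?_⟩
    rcases o with _ | i
    · simp [f, hs, columnShift]
    · simp only [f, div_eq_iff (hl t ht), sub_eq_iff_eq_add']
      exact (congrFun hgraph i).trans (mulVec_add_columnShift l p g _ i)
  · rw [Fintype.card_option]
    exact_mod_cast Nat.lt_succ_self _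

lemma ae_notMem_graphHits {K : Set (ι ⊕ κ → ℝ)} (hK : IsSigmaCompact K) {l : ι}
    (hl : ∀ t ∈ K, t (Sum.inl l) ≠ 0) (hdim : dimH K ≤ Fintype.card κ) :
    ∀ᵐ p : (κ → ι → ℝ) × ℝ, p ∉ graphHits K l := by
  classical
  obtain ⟨L, hL, rfl⟩ := hK
  have hn (n : ℕ) : ∀ᵐ p : (κ → ι → ℝ) × ℝ, p ∈ (graphHits (L n) l)ᶜ := by
    have : (volume : Measure (κ → ι → ℝ)).IsAddHaarMeasure :=
      Measure.pi.isAddHaarMeasure fun _ : κ ↦ (volume : Measure (ι → ℝ))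
    have : (volume : Measure ((κ → ι → ℝ) × ℝ)).IsAddHaarMeasure := by
      rw [Measure.volume_eq_prod]
      infer_instance
    refine ae_mem_of_ae_add_linearMap_mem (columnShift l) volume volume
      (isClosed_graphHits (hL n) l).measurableSet.compl fun p ↦ ?_
    simpa [ae_iff] using volume_preimage_columnShift_graphHits
      (fun t ht ↦ hl t (Set.mem_iUnion_of_mem n ht))
      ((dimH_mono (Set.subset_iUnion L n)).trans hdim) p
  filter_upwards [ae_all_iff.2 hn] with p hp ⟨t, ht, h⟩
  obtain ⟨n, htn⟩ := Set.mem_iUnion.1 ht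
  exact hp n ⟨t, htn, h⟩

lemma ae_ae_forall_sphere_sumElim_notMem {K : Set (ι ⊕ κ → ℝ)} (hK : IsSigmaCompact K)
    (hdim : dimH K ≤ Fintype.card κ) : ∀ᵐ B : κ → ι → ℝ, ∀ᵐ s : ℝ, 0 < s →
      ∀ ζ ∈ Metric.sphere (0 : ι → ℝ) s, Sum.elim ζ (of B *ᵥ ζ) ∉ K := by
  have hl (l : ι) : ∀ᵐ p : (κ → ι → ℝ) × ℝ, p ∉ graphHits (K ∩ {t | t (Sum.inl l) ≠ 0}) l :=
    ae_notMem_graphHits (isSigmaCompact_inter_isOpen hK (isOpen_ne_fun (by fun_prop) (by fun_prop)))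
      (fun t ht ↦ ht.2) ((dimH_mono Set.inter_subset_left).trans hdim)
  have hprod := ae_all_iff.2 hl
  rw [Measure.volume_eq_prod] at hprod
  filter_upwards [Measure.ae_ae_of_ae_prod hprod] with B hB
  filter_upwards [hB] with s hs hs0 ζ hζ hmem
  rw [mem_sphere_zero_iff_norm] at hζ
  obtain ⟨l, hls⟩ : ∃ l, |ζ l| = s := by
    by_contra! hne
    exact (((pi_norm_lt_iff hs0).2 fun l ↦
      ((norm_le_pi_norm ζ l).trans_eq hζ).lt_of_ne (hne l)).ne hζ)
  exact hs l ⟨_, ⟨hmem, abs_pos.1 (hls ▸ hs0)⟩, rfl, hls⟩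

theorem ae_ae_forall_sphere_add_sumElim_notMem {K : Set (ι ⊕ κ → ℝ)} (hK : IsSigmaCompact K)
    (hdim : dimH K ≤ Fintype.card κ) (x : ι ⊕ κ → ℝ) : ∀ᵐ B : κ → ι → ℝ, ∀ᵐ s : ℝ, 0 < s →
      ∀ ζ ∈ Metric.sphere (0 : ι → ℝ) s, x + Sum.elim ζ (of B *ᵥ ζ) ∉ K := by
  have htranslate := ae_ae_forall_sphere_sumElim_notMem (hK.image (continuous_sub_right x))
    (((IsometryEquiv.subRight x).dimH_image K).trans_le hdim)
  filter_upwards [htranslate] with B hB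
  filter_upwards [hB] with s hs hs0 ζ hζ hmem
  exact hs hs0 ζ hζ ⟨_, hmem, add_sub_cancel_left _ _⟩

end Transversality

/-! ### Counting sign cells on a semi-algebraic set -/

section SignCells

variable {σ τ J : Type*}

/-- The sign encoded by a Boolean, with the convention of `StrictRealization`. -/
def boolSign (b : Bool) : ℝ := if b then 1 else -1

lemma boolSign_not (b : Bool) : boolSign (!b) = -boolSign b := by cases b <;> simp [boolSign]

/-- The realization of a strict sign condition, for variables and polynomials indexed by arbitrary
types. -/
def signCell (P : J → MvPolynomial σ ℝ) (ν : J → Bool) : Set (σ → ℝ) :=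
  {x | ∀ j, 0 < boolSign (ν j) * eval x (P j)}

lemma strictRealization_eq_signCell {d k : ℕ} (P : Fin k → MvPolynomial (Fin d) ℝ)
    (ν : Fin k → Bool) : StrictRealization P ν = signCell P ν := by
  ext x
  refine forall_congr' fun j ↦ ?_
  cases ν j <;> simp [boolSign]

lemma isOpen_signCell [Finite J] (P : J → MvPolynomial σ ℝ) (ν : J → Bool) :
    IsOpen (signCell P ν) := by
  simp only [signCell, Set.ofPred_forall]
  exact isOpen_iInter_of_finite fun j ↦
    isOpen_lt continuous_const (continuous_const.mul (MvPolynomial.continuous_eval _))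

lemma eval_ne_zero_of_mem_signCell {P : J → MvPolynomial σ ℝ} {ν : J → Bool} {x : σ → ℝ}
    (hx : x ∈ signCell P ν) (j : J) : eval x (P j) ≠ 0 :=
  right_ne_zero_of_mul (hx j).ne'

lemma disjoint_signCell (P : J → MvPolynomial σ ℝ) {ν ν' : J → Bool} (h : ν ≠ ν') :
    Disjoint (signCell P ν) (signCell P ν') := by
  obtain ⟨j, hj⟩ := Function.ne_iff.1 h
  refine Set.disjoint_left.2 fun x hx hx' ↦ ?_
  have hneg : boolSign (ν' j) = -boolSign (ν j) := by
    rw [← boolSign_not, Bool.eq_not_of_ne hj.symm]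
  have hpos := hx j
  have hpos' := hx' j
  rw [hneg] at hpos'
  linarith

lemma exists_eval_eq_zero_of_mem_frontier_signCell [Finite J] {P : J → MvPolynomial σ ℝ}
    {ν : J → Bool} {x : σ → ℝ} (hx : x ∈ frontier (signCell P ν)) : ∃ j, eval x (P j) = 0 := by
  rw [(isOpen_signCell P ν).frontier_eq] at hx
  obtain ⟨j, hj⟩ : ∃ j, boolSign (ν j) * eval x (P j) ≤ 0 := by
    simpa [signCell] using hx.2
  have hnonneg : closure (signCell P ν) ⊆ {y | 0 ≤ boolSign (ν j) * eval y (P j)} :=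
    closure_minimal (fun y hy ↦ (hy j).le)
      (isClosed_le continuous_const (continuous_const.mul (MvPolynomial.continuous_eval _)))
  have hsign : boolSign (ν j) ≠ 0 := by cases ν j <;> simp [boolSign]
  exact ⟨j, (mul_eq_zero.1 (hj.antisymm (hnonneg hx.1))).resolve_left hsign⟩

lemma signCell_rename (f : σ → τ) (P : J → MvPolynomial σ ℝ) (ν : J → Bool) :
    signCell (fun j ↦ rename f (P j)) ν = (fun x ↦ x ∘ f) ⁻¹' signCell P ν := by
  ext x
  simp [signCell, eval_rename]

end SignCells

section CellCounting

open Matrix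

variable {ι κ σ τ J : Type*} [Fintype J]

lemma totalDegree_aeval_le_of_totalDegree_le_one [Finite σ] {g : σ → MvPolynomial τ ℝ}
    (hg : ∀ i, (g i).totalDegree ≤ 1) (p : MvPolynomial σ ℝ) :
    (aeval g p).totalDegree ≤ p.totalDegree := by
  cases nonempty_fintype σ
  rw [aeval_def, eval₂_eq']
  refine totalDegree_finsetSum_le fun m hm ↦ ?_
  calc (algebraMap ℝ (MvPolynomial τ ℝ) (coeff m p) * ∏ i, g i ^ m i).totalDegree
      ≤ 0 + (∏ i, g i ^ m i).totalDegree :=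
        (totalDegree_mul _ _).trans_eq (congrArg (· + _) (totalDegree_C _))
    _ ≤ ∑ i, m i * 1 := by
        rw [zero_add]
        exact (totalDegree_finsetProd _ _).trans (Finset.sum_le_sum fun i _ ↦
          (totalDegree_pow _ _).trans (Nat.mul_le_mul_left _ (hg i)))
    _ ≤ p.totalDegree := by
        simpa [Finsupp.sum_fintype] using le_totalDegree hm

lemma exists_eval_eq_eval_mulVec [Finite σ] [Fintype τ] (A : Matrix σ τ ℝ)
    (p : MvPolynomial σ ℝ) : ∃ p' : MvPolynomial τ ℝ, p'.totalDegree ≤ p.totalDegree ∧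
      ∀ x, eval x p' = eval (A *ᵥ x) p := by
  refine ⟨aeval (fun i ↦ ∑ j, C (A i j) * X j) p,
    totalDegree_aeval_le_of_totalDegree_le_one (fun i ↦ totalDegree_finsetSum_le fun j _ ↦ ?_) p,
    fun x ↦ ?_⟩
  · exact (totalDegree_mul _ _).trans (by simp)
  · rw [← coe_aeval_eq_eval, RingHom.coe_coe, comp_aeval_apply]
    simp only [aeval_eq_eval, map_sum, map_mul, eval_C, eval_X]
    rfl

lemma exists_eval_pos_and_isBounded_setOf_eval_pos {ν : Type*} [Finite ν] [Finite σ]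
    (w : ν → σ → ℝ) : ∃ G : MvPolynomial σ ℝ, G.totalDegree ≤ 2 ∧ (∀ n, 0 < eval (w n) G) ∧
      Bornology.IsBounded {x | 0 < eval x G} := by
  cases nonempty_fintype σ
  obtain ⟨ρ, hρ⟩ := (Set.finite_range fun n ↦ ∑ c, w n c ^ 2).bddAbove
  have heval (x : σ → ℝ) : eval x (C (ρ + 1) - ∑ c, X c ^ 2) = ρ + 1 - ∑ c, x c ^ 2 := by simp
  refine ⟨C (ρ + 1) - ∑ c, X c ^ 2, ?_, fun n ↦ ?_, ?_⟩
  · refine (totalDegree_sub _ _).trans (max_le ((totalDegree_C _).trans_le (Nat.zero_le _))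
      (totalDegree_finsetSum_le fun c _ ↦ ?_))
    exact (totalDegree_pow _ _).trans (by simp)
  · rw [heval]
    linarith [hρ ⟨n, rfl⟩]
  · refine (Metric.isBounded_closedBall (x := (0 : σ → ℝ)) (r := √(ρ + 1))).subset fun x hx ↦ ?_
    rw [Set.mem_ofPred_eq, heval] at hx
    rw [mem_closedBall_zero_iff, pi_norm_le_iff_of_nonneg (Real.sqrt_nonneg _)]
    intro c
    have hle := Finset.single_le_sum (f := fun c ↦ x c ^ 2) (fun c _ ↦ sq_nonneg _)
      (Finset.mem_univ c)
    exact Real.abs_le_sqrt (hle.trans (by linarith))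

/-- The factor in the bound `cellBound m r e * D ^ r` on the number of sign cells of a family of
polynomials of total degree at most `D` that an `r`-dimensional piece of the zero set in
`ℝ ^ (m + r)` of a nonnegative polynomial of degree at most `e` can meet. -/
def cellBound (m r e : ℕ) : ℕ := lagrangeBound m r e (1 + 2 * (m * e) + e) * 6 ^ r

variable [Fintype ι] [Fintype κ] {Q : MvPolynomial (ι ⊕ κ) ℝ} {e D : ℕ}
  {P : J → MvPolynomial (ι ⊕ κ) ℝ}

lemma card_le_of_forall_isBounded_signCell {ν : Type*} [Fintype ν] (hD : 1 ≤ D)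
    (hQ : Q.totalDegree ≤ e) (hP : ∑ j, (P j).totalDegree ≤ D) {ε : ν → J → Bool}
    (hε : Function.Injective ε) (hb : ∀ n, Bornology.IsBounded (signCell P (ε n)))
    {w : ν → ι ⊕ κ → ℝ} (hw : ∀ n, w n ∈ signCell P (ε n))
    (hmin : ∀ n, ∃ᶠ s in 𝓝[>] (0 : ℝ), ∀ ζ ∈ Metric.sphere (0 : ι → ℝ) s,
      eval (w n) Q < eval (w n + Sum.elim ζ 0) Q) :
    Fintype.card ν ≤ lagrangeBound (Fintype.card ι) (Fintype.card κ) e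
      (1 + 2 * (Fintype.card ι * e) + e) * (2 * D) ^ Fintype.card κ := by
  have hdeg : (∏ j, P j ^ 2).totalDegree ≤ 2 * D := calc
    (∏ j, P j ^ 2).totalDegree ≤ ∑ j, 2 * (P j).totalDegree :=
      (totalDegree_finsetProd _ _).trans (Finset.sum_le_sum fun j _ ↦ totalDegree_pow _ _)
    _ ≤ 2 * D := by rw [← Finset.mul_sum]; omega
  refine card_le_of_forall_exists_fiber_min (by omega) hQ hdeg (U := fun n ↦ signCell P (ε n))
    (fun n ↦ isOpen_signCell _ _) hb (fun n n' hne ↦ disjoint_signCell _ (hε.ne hne))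
    (fun n x hx ↦ ?_) (fun n x hx ↦ ?_) fun n ↦ ?_
  · simp only [map_prod, map_pow]
    exact Finset.prod_pos fun j _ ↦ sq_pos_of_ne_zero (eval_ne_zero_of_mem_signCell hx j)
  · obtain ⟨j, hj⟩ := exists_eval_eq_zero_of_mem_frontier_signCell hx
    rw [map_prod]
    exact Finset.prod_eq_zero (Finset.mem_univ j) (by simp [hj])
  · have hnhds : (fun z ↦ Sum.elim z (w n ∘ Sum.inr)) ⁻¹' signCell P (ε n) ∈
        𝓝 (w n ∘ Sum.inl) := by
      refine ((isOpen_signCell P (ε n)).preimage ?_).mem_nhds ?_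
      · exact continuous_sumElim_prod.comp (Continuous.prodMk_left _)
      · simpa using hw n
    have hball := (eventually_closedBall_subset hnhds).filter_mono
      (nhdsWithin_le_nhds (s := Set.Ioi 0))
    obtain ⟨s, hlt, hs, hs0⟩ := ((hmin n).and_eventually (hball.and self_mem_nhdsWithin)).exists
    refine ⟨w n ∘ Sum.inl, w n ∘ Sum.inr, s, hs0, hs, fun z hz ↦ ?_⟩
    have hshift : w n + Sum.elim (z - w n ∘ Sum.inl) 0 = Sum.elim z (w n ∘ Sum.inr) := by
      ext (i | i) <;> simp
    simpa [hshift] using hlt (z - w n ∘ Sum.inl) (by simpa [dist_eq_norm] using hz)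

lemma card_le_of_forall_mem_signCell_of_frequently_lt {ν : Type*} [Fintype ν]
    (hD : 1 ≤ D) (hQ : Q.totalDegree ≤ e) (hP : ∑ j, (P j).totalDegree ≤ D)
    {ε : ν → J → Bool} (hε : Function.Injective ε) {w : ν → ι ⊕ κ → ℝ}
    (hw : ∀ n, w n ∈ signCell P (ε n))
    (hmin : ∀ n, ∃ᶠ s in 𝓝[>] (0 : ℝ), ∀ ζ ∈ Metric.sphere (0 : ι → ℝ) s,
      eval (w n) Q < eval (w n + Sum.elim ζ 0) Q) :
    Fintype.card ν ≤ cellBound (Fintype.card ι) (Fintype.card κ) e * D ^ Fintype.card κ := by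
  obtain ⟨G, hG, hGw, hGb⟩ := exists_eval_pos_and_isBounded_setOf_eval_pos w
  -- Adjoining `G` to the family makes the cells under consideration bounded.
  refine (card_le_of_forall_isBounded_signCell (D := 3 * D) (P := fun o : Option J ↦ o.elim G P)
    (ε := fun n o ↦ o.elim true (ε n)) (by omega) hQ ?_
    (fun n n' h ↦ hε (funext fun j ↦ congrFun h (some j)))
    (fun n ↦ hGb.subset fun x hx ↦ by simpa [boolSign] using hx none) ?_ hmin).trans_eq ?_
  · simp only [Fintype.sum_option, Option.elim]
    omega
  · rintro n (_ | j)
    · simpa [boolSign] using hGw n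
    · exact hw n j
  · rw [cellBound, show 2 * (3 * D) = 6 * D by ring, mul_pow, mul_assoc]

lemma frequently_nhdsGT_of_ae {p : ℝ → Prop} (hp : ∀ᵐ s, p s) (a : ℝ) : ∃ᶠ s in 𝓝[>] a, p s := by
  refine frequently_iff.2 fun {U} hU ↦ ?_
  obtain ⟨u, hu, hsub⟩ := mem_nhdsGT_iff_exists_Ioo_subset.1 hU
  obtain ⟨s, hs, hs'⟩ := (Measure.dense_of_ae hp).exists_between hu
  exact ⟨s, hsub hs', hs⟩

theorem ncard_setOf_inter_signCell_nonempty_le_of_nonneg (hD : 1 ≤ D) (hQ : Q.totalDegree ≤ e)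
    (hQ₀ : ∀ x, 0 ≤ eval x Q) {O : Set (ι ⊕ κ → ℝ)} (hO : IsOpen O)
    (hdim : dimH ({x | eval x Q = 0} ∩ O) ≤ Fintype.card κ)
    (hP : ∑ j, (P j).totalDegree ≤ D) :
    {ε | ({x | eval x Q = 0} ∩ O ∩ signCell P ε).Nonempty}.ncard ≤
      cellBound (Fintype.card ι) (Fintype.card κ) e * D ^ Fintype.card κ := by
  classical
  rw [← Nat.card_coe_set_eq, Nat.card_eq_fintype_card]
  choose x hxK hxP using fun ε : {ε | ({x | eval x Q = 0} ∩ O ∩ signCell P ε).Nonempty} ↦ ε.2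
  have hsigma : IsSigmaCompact ({x | eval x Q = 0} ∩ O) := isSigmaCompact_inter_isOpen
    (isSigmaCompact_univ.of_isClosed_subset
      (isClosed_eq (MvPolynomial.continuous_eval Q) continuous_const) (Set.subset_univ _)) hO
  obtain ⟨B, hB⟩ := (ae_all_iff.2 fun ε ↦
    ae_ae_forall_sphere_add_sumElim_notMem hsigma hdim (x ε)).exists
  -- Shearing by `B` turns the graph of `B` through `x ε` into a horizontal subspace, on which the
  -- sphere of almost every radius avoids the zeros of the sheared `Q` inside `O`.
  let L : Matrix (ι ⊕ κ) (ι ⊕ κ) ℝ := fromBlocks 1 0 (of B) 1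
  have hL (v : ι ⊕ κ → ℝ) : L *ᵥ (fromBlocks 1 0 (-of B) 1 *ᵥ v) = v := by
    simp [L, mulVec_mulVec, fromBlocks_multiply]
  have hLζ (ζ : ι → ℝ) : L *ᵥ Sum.elim ζ 0 = Sum.elim ζ (of B *ᵥ ζ) := by
    simp [L, fromBlocks_mulVec]
  obtain ⟨Q', hQ'deg, hQ'⟩ := exists_eval_eq_eval_mulVec L Q
  choose P' hP'deg hP' using fun j ↦ exists_eval_eq_eval_mulVec L (P j)
  refine card_le_of_forall_mem_signCell_of_frequently_lt (P := P') hD (hQ'deg.trans hQ)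
    ((Finset.sum_le_sum fun j _ ↦ hP'deg j).trans hP) Subtype.val_injective
    (w := fun ε ↦ fromBlocks 1 0 (-of B) 1 *ᵥ x ε) (fun ε j ↦ ?_) fun ε ↦ ?_
  · rw [hP', hL]
    exact hxP ε j
  · have hnhds : (fun ζ ↦ x ε + Sum.elim ζ (of B *ᵥ ζ)) ⁻¹' O ∈ 𝓝 0 := by
      refine (hO.preimage (continuous_const.add (continuous_sumElim_prod.comp
        (continuous_id.prodMk (continuous_const.matrix_mulVec continuous_id))))).mem_nhds ?_
      simpa using (hxK ε).2
    have hball := (eventually_closedBall_subset hnhds).filter_mono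
      (nhdsWithin_le_nhds (s := Set.Ioi 0))
    refine ((frequently_nhdsGT_of_ae (hB ε) 0).and_eventually
      (hball.and self_mem_nhdsWithin)).mono fun s ⟨hs, hsO, hs0⟩ ζ hζ ↦ ?_
    have hQx : eval (x ε) Q = 0 := (hxK ε).1
    rw [hQ', hQ', mulVec_add, hL, hLζ, hQx]
    exact (hQ₀ _).lt_of_ne' fun h ↦ hs hs0 ζ hζ ⟨h, hsO (Metric.sphere_subset_closedBall hζ)⟩

end CellCounting

section SignLoci

variable {σ τ ι κ I J : Type*}

/-- The set of points at which the polynomials `p i` have the prescribed signs, zero included. -/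
def signLocus (p : I → MvPolynomial σ ℝ) (s : I → SignType) : Set (σ → ℝ) :=
  {x | ∀ i, SignType.sign (eval x (p i)) = s i}

lemma signLocus_rename (f : σ → τ) (p : I → MvPolynomial σ ℝ) (s : I → SignType) :
    signLocus (fun i ↦ rename f (p i)) s = (fun x ↦ x ∘ f) ⁻¹' signLocus p s := by
  ext x
  simp [signLocus, eval_rename]

lemma signLocus_eq_inter [Fintype I] (p : I → MvPolynomial σ ℝ) (s : I → SignType) :
    signLocus p s = {x | eval x (∑ i with s i = 0, p i ^ 2) = 0} ∩
      {x | ∀ i, s i ≠ 0 → SignType.sign (eval x (p i)) = s i} := by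
  ext x
  have hsum : eval x (∑ i with s i = 0, p i ^ 2) = 0 ↔ ∀ i, s i = 0 → eval x (p i) = 0 := by
    simp only [map_sum, map_pow]
    rw [Finset.sum_eq_zero_iff_of_nonneg fun i _ ↦ sq_nonneg _]
    simp
  simp only [signLocus, Set.mem_ofPred_eq, Set.mem_inter_iff, hsum]
  refine ⟨fun h ↦ ⟨fun i hi ↦ sign_eq_zero_iff.1 ((h i).trans hi), fun i _ ↦ h i⟩, fun h i ↦ ?_⟩
  by_cases hi : s i = 0
  · rw [hi, h.1 i hi, sign_zero]
  · exact h.2 i hi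

lemma isOpen_setOf_sign_eq {E : Type*} [TopologicalSpace E] {f : E → ℝ} (hf : Continuous f)
    {s : SignType} (hs : s ≠ 0) : IsOpen {x | SignType.sign (f x) = s} := by
  cases s with
  | zero => exact absurd rfl hs
  | neg => simpa [sign_eq_neg_one_iff] using isOpen_lt hf continuous_const
  | pos => simpa [sign_eq_one_iff] using isOpen_lt continuous_const hf

variable [Finite I] [Fintype J] {b D : ℕ} {s : I → SignType}

lemma ncard_setOf_signLocus_inter_signCell_nonempty_le [Fintype ι] [Fintype κ] (hD : 1 ≤ D)
    {p : I → MvPolynomial (ι ⊕ κ) ℝ} (hp : ∀ i, (p i).totalDegree ≤ b)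
    (hdim : dimH (signLocus p s) ≤ Fintype.card κ)
    {P : J → MvPolynomial (ι ⊕ κ) ℝ} (hP : ∑ j, (P j).totalDegree ≤ D) :
    {ε | (signLocus p s ∩ signCell P ε).Nonempty}.ncard ≤
      cellBound (Fintype.card ι) (Fintype.card κ) (2 * b) * D ^ Fintype.card κ := by
  cases nonempty_fintype I
  rw [signLocus_eq_inter] at hdim ⊢
  refine ncard_setOf_inter_signCell_nonempty_le_of_nonneg hD (totalDegree_finsetSum_le fun i _ ↦
    (totalDegree_pow _ _).trans (Nat.mul_le_mul_left _ (hp i))) (fun x ↦ ?_) ?_ hdim hP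
  · simp only [map_sum, map_pow]
    positivity
  · simp only [Set.ofPred_forall]
    exact isOpen_iInter_of_finite fun i ↦ isOpen_iInter_of_finite fun hi ↦
      isOpen_setOf_sign_eq (MvPolynomial.continuous_eval _) hi

lemma ncard_setOf_signLocus_inter_signCell_nonempty_le_of_dimH_le [Fintype σ] {r : ℕ}
    (hr : r ≤ Fintype.card σ) (hD : 1 ≤ D) {p : I → MvPolynomial σ ℝ}
    (hp : ∀ i, (p i).totalDegree ≤ b) (hdim : dimH (signLocus p s) ≤ r)
    {P : J → MvPolynomial σ ℝ} (hP : ∑ j, (P j).totalDegree ≤ D) :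
    {ε | (signLocus p s ∩ signCell P ε).Nonempty}.ncard ≤
      cellBound (Fintype.card σ - r) r (2 * b) * D ^ r := by
  let f : σ ≃ Fin (Fintype.card σ - r) ⊕ Fin r :=
    Fintype.equivOfCardEq (by simp [Nat.sub_add_cancel hr])
  have hdim' : dimH (signLocus (fun i ↦ rename f (p i)) s) ≤ Fintype.card (Fin r) := by
    rw [signLocus_rename, Fintype.card_fin]
    exact ((LinearEquiv.funCongrLeft ℝ ℝ f).toContinuousLinearEquiv.dimH_preimage _).trans_le hdim
  have hsurj : Function.Surjective fun x : Fin (Fintype.card σ - r) ⊕ Fin r → ℝ ↦ x ∘ f :=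
    (LinearEquiv.funCongrLeft ℝ ℝ f).surjective
  have hcount := ncard_setOf_signLocus_inter_signCell_nonempty_le hD
    (fun i ↦ (totalDegree_rename_le f _).trans (hp i)) hdim'
    ((Finset.sum_le_sum fun j _ ↦ totalDegree_rename_le f (P j)).trans hP)
  simpa only [signLocus_rename, signCell_rename, ← Set.preimage_inter, hsurj.nonempty_preimage,
    Fintype.card_fin] using hcount

lemma exists_eq_biUnion_signLocus {d : ℕ} {T : Set (Fin d → ℝ)}
    (hT : IsSemiAlgebraicOfComplexity d b T) :
    ∃ (p : Fin b → MvPolynomial (Fin d) ℝ) (S : Finset (Fin b → SignType)),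
      (∀ i, (p i).totalDegree ≤ b) ∧ T = ⋃ s ∈ S, signLocus p s := by
  classical
  obtain ⟨p, τ, φ, hp, rfl⟩ := hT
  refine ⟨p, Finset.univ.filter fun s ↦ φ fun i ↦ if τ i then s i = -1 else s i = 0, hp, ?_⟩
  ext x
  have hx (s : Fin b → SignType) :
      x ∈ signLocus p s ↔ (fun i ↦ SignType.sign (eval x (p i))) = s := funext_iff.symm
  simp [hx, sign_eq_neg_one_iff, sign_eq_zero_iff]

theorem ncard_setOf_inter_signCell_nonempty_le {d r : ℕ} (hr : r ≤ d) {T : Set (Fin d → ℝ)}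
    (hT : IsSemiAlgebraicOfComplexity d b T) (hdim : dimH T ≤ r) (hD : 1 ≤ D)
    {P : J → MvPolynomial (Fin d) ℝ} (hP : ∑ j, (P j).totalDegree ≤ D) :
    {ε | (T ∩ signCell P ε).Nonempty}.ncard ≤ 3 ^ b * cellBound (d - r) r (2 * b) * D ^ r := by
  obtain ⟨p, S, hp, rfl⟩ := exists_eq_biUnion_signLocus hT
  have hunion : {ε | ((⋃ s ∈ S, signLocus p s) ∩ signCell P ε).Nonempty} =
      ⋃ s ∈ S, {ε | (signLocus p s ∩ signCell P ε).Nonempty} := by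
    ext ε
    simp [Set.iUnion_inter, Set.nonempty_iUnion]
  calc {ε | ((⋃ s ∈ S, signLocus p s) ∩ signCell P ε).Nonempty}.ncard
      ≤ ∑ s ∈ S, {ε | (signLocus p s ∩ signCell P ε).Nonempty}.ncard := by
        rw [hunion]
        exact Finset.set_ncard_biUnion_le _ _
    _ ≤ S.card • (cellBound (d - r) r (2 * b) * D ^ r) := Finset.sum_le_card_nsmul _ _ _ fun s hs ↦
        (ncard_setOf_signLocus_inter_signCell_nonempty_le_of_dimH_le (by simpa using hr) hD hp
          ((dimH_mono (Set.subset_biUnion_of_mem hs)).trans hdim) hP).trans_eq (by simp)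
    _ ≤ 3 ^ b * (cellBound (d - r) r (2 * b) * D ^ r) := Nat.mul_le_mul_right _
        ((Finset.card_le_univ S).trans_eq (by simp [show Fintype.card SignType = 3 from rfl]))
    _ = _ := (mul_assoc _ _ _).symm

end SignLoci

/-! ### Balancing weights on the sign conditions -/

section SignCharacters

variable {J : Type*}

lemma prod_one_add_boolSign_mul_boolSign [Fintype J] (μ ν : J → Bool) :
    ∏ j, (1 + boolSign (μ j) * boolSign (ν j)) = if ν = μ then (2 : ℝ) ^ Fintype.card J else 0 := by
  have hfactor (j : J) : 1 + boolSign (μ j) * boolSign (ν j) = if ν j = μ j then 2 else 0 := by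
    cases μ j <;> cases ν j <;> norm_num [boolSign]
  simp only [hfactor, funext_iff]
  rw [Finset.prod_ite_zero]
  simp

variable [DecidableEq J]

/-- The sign condition obtained from `ν` by reversing its `j`-th sign. -/
def flipSign (j : J) (ν : J → Bool) : J → Bool := Function.update ν j (!ν j)

lemma flipSign_involutive (j : J) : Function.Involutive (flipSign j) := fun ν ↦ by
  simp [flipSign]

lemma boolSign_flipSign (j i : J) (ν : J → Bool) :
    boolSign (flipSign j ν i) = if i = j then -boolSign (ν i) else boolSign (ν i) := by
  obtain rfl | h := eq_or_ne i j
  · simp [flipSign, boolSign_not]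
  · simp [flipSign, h]

lemma prod_boolSign_flipSign (j : J) (A : Finset J) (ν : J → Bool) :
    ∏ i ∈ A, boolSign (flipSign j ν i) =
      if j ∈ A then -∏ i ∈ A, boolSign (ν i) else ∏ i ∈ A, boolSign (ν i) := by
  have hfactor (i : J) :
      boolSign (flipSign j ν i) = (if i = j then -1 else 1) * boolSign (ν i) := by
    simp [boolSign_flipSign]
  simp only [hfactor, Finset.prod_mul_distrib, Finset.prod_ite_eq']
  split_ifs <;> simp

theorem two_pow_mul_eq_sum_of_forall_sum_prod_boolSign_mul_eq_zero [Fintype J]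
    {f : (J → Bool) → ℝ}
    (hf : ∀ A : Finset J, A.Nonempty → ∑ ν, (∏ j ∈ A, boolSign (ν j)) * f ν = 0) (μ : J → Bool) :
    2 ^ Fintype.card J * f μ = ∑ ν, f ν := calc
  2 ^ Fintype.card J * f μ = ∑ ν, (∏ j, (1 + boolSign (μ j) * boolSign (ν j))) * f ν := by
    simp [prod_one_add_boolSign_mul_boolSign]
  _ = ∑ A : Finset J, (∏ j ∈ A, boolSign (μ j)) * ∑ ν, (∏ j ∈ A, boolSign (ν j)) * f ν := by
    simp only [Finset.prod_one_add, Finset.sum_mul, Finset.prod_mul_distrib, Finset.mul_sum,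
      mul_assoc, Finset.powerset_univ]
    exact Finset.sum_comm
  _ = ∑ ν, f ν := by
    rw [Finset.sum_eq_single ∅ (fun A _ hA ↦ by
      rw [hf A (Finset.nonempty_iff_ne_empty.2 hA), mul_zero]) (by simp)]
    simp

end SignCharacters

section Balancing

variable {Γ J : Type*} [LinearOrder J] {n : ℕ}

/-- The block of the balancing condition `e t = (A, c)`, which says that the `A`-th Fourier
coefficient of the `c`-th function of the sign condition vanishes: the largest element of `A`. -/
def leadingIndex (e : Fin (n + 1) ≃ {A : Finset J // A.Nonempty} × Γ) (t : Fin (n + 1)) : J :=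
  (e t).1.1.max' (e t).1.2

lemma card_leadingIndex_eq_le [LocallyFiniteOrderBot J] [Fintype Γ]
    (e : Fin (n + 1) ≃ {A : Finset J // A.Nonempty} × Γ) (j : J) :
    Fintype.card {t // leadingIndex e t = j} ≤ 2 ^ (Finset.Iic j).card * Fintype.card Γ := by
  have hsub (t : {t // leadingIndex e t = j}) : (e t).1.1 ∈ (Finset.Iic j).powerset :=
    Finset.mem_powerset.2 fun i hi ↦ Finset.mem_Iic.2 (t.2 ▸ Finset.le_max' _ _ hi)
  have hinj : Function.Injective fun t : {t // leadingIndex e t = j} ↦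
      ((⟨(e t).1.1, hsub t⟩, (e t).2) : (Finset.Iic j).powerset × Γ) := fun t t' h ↦ by
    simp only [Prod.mk.injEq, Subtype.mk.injEq] at h
    exact Subtype.ext (e.injective (Prod.ext (Subtype.ext h.1) h.2))
  exact (Fintype.card_le_of_injective _ hinj).trans_eq (by simp [Finset.card_powerset])

theorem exists_mem_blockShell_forall_two_pow_mul_eq_sum [Fintype J]
    (e : Fin (n + 1) ≃ {A : Finset J // A.Nonempty} × Γ)
    {H : Γ → (J → Bool) → BlockSpace (Fin (n + 1)) J → ℝ} (hH : ∀ c ν, Continuous (H c ν))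
    (hflip : ∀ c ν j x, H c ν (flipBlock (leadingIndex e) j x) = H c (flipSign j ν) x) :
    ∃ x ∈ blockShell (leadingIndex e), ∀ c ν, 2 ^ Fintype.card J * H c ν x = ∑ μ, H c μ x := by
  obtain ⟨x, hx, hzero⟩ := exists_mem_blockShell_forall_eq_zero (block := leadingIndex e)
    (α := fun t ↦ (e t).1.1) (fun t ↦ Finset.max'_mem _ _) (fun t j hj ↦ Finset.le_max' _ _ hj)
    (F := fun t x ↦ ∑ ν, (∏ j ∈ (e t).1.1, boolSign (ν j)) * H (e t).2 ν x)
    (fun t ↦ continuous_finsetSum _ fun ν _ ↦ continuous_const.mul (hH _ _)) fun t j x ↦ by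
      simp only [hflip]
      rw [← Equiv.sum_comp (flipSign_involutive j).toPerm]
      simp only [Function.Involutive.coe_toPerm, flipSign_involutive j _, prod_boolSign_flipSign]
      split_ifs <;> simp
  refine ⟨x, hx, fun c ↦ two_pow_mul_eq_sum_of_forall_sum_prod_boolSign_mul_eq_zero fun A hA ↦ ?_⟩
  simpa using hzero (e.symm (⟨A, hA⟩, c))

end Balancing

/-! ### Polynomials in blocks of coefficients and their weights -/

section BlockPolynomials

variable {ι σ J : Type*} {block : ι → J}

/-- The part of a point of `BlockSpace ι J` in the block `j`, the second component being indexed by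
`none`. -/
def blockCoeff (block : ι → J) (x : BlockSpace ι J) (j : J) :
    Option {t // block t = j} → ℝ
  | none => x.2 j
  | some t => x.1 t

lemma blockCoeff_flipBlock [DecidableEq J] (x : BlockSpace ι J) (i j : J)
    (o : Option {t // block t = j}) : blockCoeff block (flipBlock block i x) j o =
      if j = i then -blockCoeff block x j o else blockCoeff block x j o := by
  rcases o with _ | t
  · simp [blockCoeff, flipBlock]
  · simp [blockCoeff, flipBlock, t.2]

lemma continuous_blockCoeff (j : J) (o : Option {t // block t = j}) :
    Continuous fun x ↦ blockCoeff block x j o := by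
  rcases o with _ | t <;> simp only [blockCoeff] <;> fun_prop

lemma exists_blockCoeff_ne_zero [Fintype ι] [Fintype J] [DecidableEq J] {x : BlockSpace ι J}
    (hx : x ∈ blockShell block) (j : J) : ∃ o, blockCoeff block x j o ≠ 0 := by
  by_contra! hzero
  have hshell := hx.2 j
  rw [show x.2 j = 0 from hzero none, Finset.sum_eq_zero fun t ht ↦ abs_eq_zero.2
    (hzero (some ⟨t, (Finset.mem_filter.1 ht).2⟩))] at hshell
  norm_num at hshell

variable [Fintype ι] [DecidableEq J] (m : ∀ j, Option {t // block t = j} → σ →₀ ℕ)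

/-- The family of polynomials whose `j`-th member has the monomials `m j` and, as coefficients, the
`j`-th block of `x`. -/
noncomputable def blockPolynomial (x : BlockSpace ι J) (j : J) : MvPolynomial σ ℝ :=
  ∑ o, monomial (m j o) (blockCoeff block x j o)

lemma blockPolynomial_flipBlock (x : BlockSpace ι J) (i j : J) :
    blockPolynomial m (flipBlock block i x) j =
      if j = i then -blockPolynomial m x j else blockPolynomial m x j := by
  simp only [blockPolynomial, blockCoeff_flipBlock]
  split_ifs <;> simp

lemma totalDegree_blockPolynomial_le {D : ℕ} {j : J} (hm : ∀ o, (m j o).degree ≤ D)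
    (x : BlockSpace ι J) : (blockPolynomial m x j).totalDegree ≤ D :=
  totalDegree_finsetSum_le fun o _ ↦ (totalDegree_monomial_le _ _).trans (hm o)

lemma continuous_eval_blockPolynomial (y : σ → ℝ) (j : J) :
    Continuous fun x ↦ eval y (blockPolynomial m x j) := by
  simp only [blockPolynomial, map_sum, eval_monomial]
  exact continuous_finsetSum _ fun o _ ↦ (continuous_blockCoeff j o).mul continuous_const

lemma blockPolynomial_ne_zero [Fintype J] {m : ∀ j, Option {t // block t = j} → σ →₀ ℕ} {j : J}
    (hm : Function.Injective (m j)) {x : BlockSpace ι J} (hx : x ∈ blockShell block) :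
    blockPolynomial m x j ≠ 0 := by
  classical
  obtain ⟨o, ho⟩ := exists_blockCoeff_ne_zero hx j
  refine ne_zero_iff.2 ⟨m j o, ?_⟩
  simpa only [blockPolynomial, coeff_sum, coeff_monomial, hm.eq_iff, Finset.sum_ite_eq',
    Finset.mem_univ, if_true] using ho

lemma exists_injective_forall_degree_le {α : Type*} [Fintype α] [Fintype σ] {q : ℕ}
    (h : Fintype.card α ≤ (q + 1) ^ Fintype.card σ) :
    ∃ m : α → σ →₀ ℕ, Function.Injective m ∧ ∀ o, (m o).degree ≤ Fintype.card σ * q := by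
  classical
  obtain ⟨f⟩ : Nonempty (α ↪ (σ → Fin (q + 1))) :=
    Function.Embedding.nonempty_of_card_le (by simpa using h)
  refine ⟨fun o ↦ Finsupp.equivFunOnFinite.symm fun i ↦ f o i, fun o o' hoo' ↦ ?_, fun o ↦ ?_⟩
  · refine f.injective (funext fun i ↦ Fin.ext ?_)
    exact congrFun (Finsupp.equivFunOnFinite.symm.injective hoo') i
  · rw [Finsupp.degree_eq_sum]
    exact (Finset.sum_le_card_nsmul _ _ q fun i _ ↦ Nat.lt_succ_iff.1 (f o i).2).trans_eq (by simp)

end BlockPolynomials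

section CellWeights

variable {σ J : Type*}

lemma exists_mem_signCell_of_forall_ne_zero {P : J → MvPolynomial σ ℝ} {y : σ → ℝ}
    (hy : ∀ j, eval y (P j) ≠ 0) : ∃ ν, y ∈ signCell P ν := by
  refine ⟨fun j ↦ decide (0 < eval y (P j)), fun j ↦ ?_⟩
  rcases (hy j).lt_or_gt with h | h <;> simp [boolSign, h, h.not_gt]

variable [Fintype J]

/-- A continuous substitute for the indicator function of `signCell P ν`: it is positive on the
cell and vanishes off it. -/
noncomputable def cellWeight (P : J → MvPolynomial σ ℝ) (ν : J → Bool) (y : σ → ℝ) : ℝ :=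
  ∏ j, max 0 (boolSign (ν j) * eval y (P j))

lemma cellWeight_nonneg (P : J → MvPolynomial σ ℝ) (ν : J → Bool) (y : σ → ℝ) :
    0 ≤ cellWeight P ν y :=
  Finset.prod_nonneg fun _ _ ↦ le_max_left _ _

lemma cellWeight_pos_iff {P : J → MvPolynomial σ ℝ} {ν : J → Bool} {y : σ → ℝ} :
    0 < cellWeight P ν y ↔ y ∈ signCell P ν := by
  refine ⟨fun h j ↦ ?_, fun h ↦ Finset.prod_pos fun j _ ↦ lt_max_of_lt_right (h j)⟩
  by_contra hj
  exact h.ne' (Finset.prod_eq_zero (Finset.mem_univ j) (max_eq_left (not_lt.1 hj)))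

lemma cellWeight_eq_zero_of_notMem {P : J → MvPolynomial σ ℝ} {ν : J → Bool} {y : σ → ℝ}
    (hy : y ∉ signCell P ν) : cellWeight P ν y = 0 :=
  ((cellWeight_nonneg P ν y).eq_of_not_lt fun h ↦ hy (cellWeight_pos_iff.1 h)).symm

lemma cellWeight_blockPolynomial_flipBlock {ι : Type*} [Fintype ι] [DecidableEq J] {block : ι → J}
    (m : ∀ j, Option {t // block t = j} → σ →₀ ℕ) (x : BlockSpace ι J) (j : J) (ν : J → Bool)
    (y : σ → ℝ) : cellWeight (blockPolynomial m (flipBlock block j x)) ν y =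
      cellWeight (blockPolynomial m x) (flipSign j ν) y := by
  refine Finset.prod_congr rfl fun i _ ↦ ?_
  rw [blockPolynomial_flipBlock, boolSign_flipSign]
  split_ifs <;> simp

lemma exists_finset_forall_exists_eval_ne_zero (σ : Type*) [Finite σ] (D : ℕ) :
    ∃ G : Finset (σ → ℝ), ∀ p : MvPolynomial σ ℝ, p ≠ 0 → p.totalDegree ≤ D →
      ∃ y ∈ G, eval y p ≠ 0 := by
  classical
  cases nonempty_fintype σ
  let s : Finset ℝ := (Finset.range (D + 1)).map Nat.castEmbedding
  refine ⟨Fintype.piFinset fun _ ↦ s, fun p hp hD ↦ ?_⟩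
  by_contra! hzero
  refine hp (eq_zero_of_eval_zero_at_prod_finset p (fun _ ↦ s) (fun i ↦ ?_) fun y hy ↦
    hzero y (Fintype.mem_piFinset.2 hy))
  simpa [s, Nat.lt_succ_iff] using (degreeOf_le_totalDegree p i).trans hD

lemma forall_signCell_nonempty_of_two_pow_mul_eq_sum [DecidableEq J] {P : J → MvPolynomial σ ℝ}
    (hP : ∀ j, P j ≠ 0) {G : Finset (σ → ℝ)} {D : ℕ}
    (hG : ∀ p : MvPolynomial σ ℝ, p ≠ 0 → p.totalDegree ≤ D → ∃ y ∈ G, eval y p ≠ 0)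
    (hdeg : ∑ j, (P j).totalDegree ≤ D)
    (hbal : ∀ ν, 2 ^ Fintype.card J * ∑ y ∈ G, cellWeight P ν y =
      ∑ μ, ∑ y ∈ G, cellWeight P μ y) (ν : J → Bool) : (signCell P ν).Nonempty := by
  obtain ⟨y, hyG, hy⟩ := hG (∏ j, P j) (Finset.prod_ne_zero_iff.2 fun j _ ↦ hP j)
    ((totalDegree_finsetProd _ _).trans hdeg)
  rw [map_prod, Finset.prod_ne_zero_iff] at hy
  obtain ⟨μ, hμ⟩ := exists_mem_signCell_of_forall_ne_zero fun j ↦ hy j (Finset.mem_univ j)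
  have hpos : 0 < ∑ μ, ∑ y ∈ G, cellWeight P μ y :=
    Finset.sum_pos' (fun μ _ ↦ Finset.sum_nonneg fun y _ ↦ cellWeight_nonneg P μ y)
      ⟨μ, Finset.mem_univ μ, Finset.sum_pos' (fun y _ ↦ cellWeight_nonneg P μ y)
        ⟨y, hyG, cellWeight_pos_iff.2 hμ⟩⟩
  rw [← hbal ν] at hpos
  obtain ⟨z, -, hz⟩ := Finset.exists_ne_zero_of_sum_ne_zero (right_ne_zero_of_mul hpos.ne')
  exact ⟨z, by_contra fun h ↦ hz (cellWeight_eq_zero_of_notMem h)⟩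

end CellWeights

section TruncatedWeights

variable {σ J : Type*} [Fintype J] {P : J → MvPolynomial σ ℝ} {ν : J → Bool} {g : ℕ → σ → ℝ}

/-- An approximation, improving with `N`, of the indicator that the sequence `g` meets
`signCell P ν`, by a continuous function of the coefficients of `P`. -/
noncomputable def truncatedWeight (N : ℕ) (g : ℕ → σ → ℝ) (P : J → MvPolynomial σ ℝ)
    (ν : J → Bool) : ℝ :=
  min 1 (N * ∑ i ∈ Finset.range N, cellWeight P ν (g i))

lemma truncatedWeight_nonneg (N : ℕ) (g : ℕ → σ → ℝ) (P : J → MvPolynomial σ ℝ) (ν : J → Bool) :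
    0 ≤ truncatedWeight N g P ν :=
  le_min zero_le_one (mul_nonneg N.cast_nonneg
    (Finset.sum_nonneg fun _ _ ↦ cellWeight_nonneg _ _ _))

lemma sum_truncatedWeight_le_ncard [DecidableEq J] (N : ℕ) {T : Set (σ → ℝ)} (hg : ∀ i, g i ∈ T) :
    ∑ ν, truncatedWeight N g P ν ≤ {ν | (T ∩ signCell P ν).Nonempty}.ncard := by
  classical
  calc ∑ ν, truncatedWeight N g P ν ≤ ∑ ν, if (T ∩ signCell P ν).Nonempty then 1 else 0 := by
        refine Finset.sum_le_sum fun ν _ ↦ ?_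
        split_ifs with h
        · exact min_le_left _ _
        · refine (min_le_right _ _).trans_eq (mul_eq_zero_of_right _ (Finset.sum_eq_zero fun i _ ↦
            cellWeight_eq_zero_of_notMem fun hi ↦ h ⟨g i, hg i, hi⟩))
    _ = _ := by rw [Finset.sum_boole, Set.ncard_eq_toFinset_card', Set.toFinset_ofPred]

lemma eventually_truncatedWeight_eq_one {T : Set (σ → ℝ)} (hT : T ⊆ closure (Set.range g))
    (hν : (T ∩ signCell P ν).Nonempty) {Q : ℕ → J → MvPolynomial σ ℝ}
    (hQ : ∀ j y, Tendsto (fun m ↦ eval y (Q m j)) atTop (𝓝 (eval y (P j)))) {N : ℕ → ℕ}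
    (hN : Tendsto N atTop atTop) : ∀ᶠ m in atTop, truncatedWeight (N m) g (Q m) ν = 1 := by
  obtain ⟨y, hyT, hyν⟩ := hν
  obtain ⟨-, hi, i, rfl⟩ := mem_closure_iff.1 (hT hyT) _ (isOpen_signCell P ν) hyν
  have hweight : Tendsto (fun m ↦ cellWeight (Q m) ν (g i)) atTop (𝓝 (cellWeight P ν (g i))) :=
    tendsto_finsetProd _ fun j _ ↦ tendsto_const_nhds.max ((hQ j (g i)).const_mul _)
  have hlarge : Tendsto (fun m ↦ (N m : ℝ) * cellWeight (Q m) ν (g i)) atTop atTop :=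
    (tendsto_natCast_atTop_atTop.comp hN).atTop_mul_pos (cellWeight_pos_iff.2 hi) hweight
  filter_upwards [hlarge.eventually_ge_atTop 1, hN.eventually_gt_atTop i] with m hm him
  refine min_eq_left (hm.trans (mul_le_mul_of_nonneg_left ?_ (N m).cast_nonneg))
  exact Finset.single_le_sum (fun i _ ↦ cellWeight_nonneg (Q m) ν (g i)) (Finset.mem_range.2 him)

theorem two_pow_mul_ncard_le_of_tendsto [DecidableEq J] {S : Finset (Set (σ → ℝ))} {R : ℝ}
    {g : Set (σ → ℝ) → ℕ → σ → ℝ} (hgT : ∀ T ∈ S, ∀ i, g T i ∈ T)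
    (hg : ∀ T ∈ S, T ⊆ closure (Set.range (g T))) {Q : ℕ → J → MvPolynomial σ ℝ}
    (hQ : ∀ j y, Tendsto (fun m ↦ eval y (Q m j)) atTop (𝓝 (eval y (P j)))) {N : ℕ → ℕ}
    (hN : Tendsto N atTop atTop)
    (hbal : ∀ m, 2 ^ Fintype.card J * ∑ T ∈ S, truncatedWeight (N m) (g T) (Q m) ν =
      ∑ μ, ∑ T ∈ S, truncatedWeight (N m) (g T) (Q m) μ)
    (hR : ∀ m, ∀ T ∈ S, ({μ | (T ∩ signCell (Q m) μ).Nonempty}.ncard : ℝ) ≤ R) :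
    (2 : ℝ) ^ Fintype.card J * {T | T ∈ S ∧ (T ∩ signCell P ν).Nonempty}.ncard ≤ S.card * R := by
  classical
  let S' := S.filter fun T ↦ (T ∩ signCell P ν).Nonempty
  have hone : ∀ᶠ m in atTop, ∀ T ∈ S', truncatedWeight (N m) (g T) (Q m) ν = 1 :=
    (Finset.eventually_all _).2 fun T hT ↦ eventually_truncatedWeight_eq_one
      (hg T (Finset.mem_filter.1 hT).1) (Finset.mem_filter.1 hT).2 hQ hN
  obtain ⟨m, hm⟩ := hone.exists
  have hncard : {T | T ∈ S ∧ (T ∩ signCell P ν).Nonempty}.ncard = S'.card := by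
    rw [← Set.ncard_coe_finset, Finset.coe_filter]
  calc (2 : ℝ) ^ Fintype.card J * {T | T ∈ S ∧ (T ∩ signCell P ν).Nonempty}.ncard
      = 2 ^ Fintype.card J * ∑ T ∈ S', truncatedWeight (N m) (g T) (Q m) ν := by
        rw [hncard, Finset.sum_congr rfl hm, Finset.sum_const, nsmul_one]
    _ ≤ 2 ^ Fintype.card J * ∑ T ∈ S, truncatedWeight (N m) (g T) (Q m) ν := by
        gcongr
        · exact fun _ _ _ ↦ truncatedWeight_nonneg _ _ _ _
        · exact Finset.filter_subset _ _
    _ = ∑ T ∈ S, ∑ μ, truncatedWeight (N m) (g T) (Q m) μ := by rw [hbal, Finset.sum_comm]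
    _ ≤ ∑ _ ∈ S, R := Finset.sum_le_sum fun T hT ↦
        (sum_truncatedWeight_le_ncard _ (hgT T hT)).trans (hR m T hT)
    _ = S.card * R := by simp

end TruncatedWeights

/-! ### The partition -/

section Partition

lemma exists_seq_subset_closure_range {X : Type*} [TopologicalSpace X] [SecondCountableTopology X]
    {T : Set X} (hT : T.Nonempty) : ∃ g : ℕ → X, (∀ i, g i ∈ T) ∧ T ⊆ closure (Set.range g) := by
  have : Nonempty T := hT.to_subtype
  refine ⟨(↑) ∘ TopologicalSpace.denseSeq T, fun i ↦ Subtype.coe_prop _, fun x hx ↦ ?_⟩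
  rw [Set.range_comp]
  exact image_closure_subset_closure_image continuous_subtype_val
    ⟨⟨x, hx⟩, TopologicalSpace.denseRange_denseSeq T _, rfl⟩

variable {σ J : Type*} [Fintype J]

section Block

variable {ι : Type*} [Fintype ι] [DecidableEq J] {block : ι → J}
  (m : ∀ j, Option {t // block t = j} → σ →₀ ℕ)

lemma continuous_cellWeight_blockPolynomial (ν : J → Bool) (y : σ → ℝ) :
    Continuous fun x ↦ cellWeight (blockPolynomial m x) ν y :=
  continuous_finsetProd _ fun j _ ↦
    continuous_const.max (continuous_const.mul (continuous_eval_blockPolynomial m y j))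

lemma continuous_truncatedWeight_blockPolynomial (N : ℕ) (g : ℕ → σ → ℝ) (ν : J → Bool) :
    Continuous fun x ↦ truncatedWeight N g (blockPolynomial m x) ν :=
  continuous_const.min (continuous_const.mul
    (continuous_finsetSum _ fun _ _ ↦ continuous_cellWeight_blockPolynomial m ν _))

end Block

variable [LinearOrder J] {n : ℕ} (e : Fin (n + 1) ≃ {A : Finset J // A.Nonempty} × Bool)
  (m : ∀ j, Option {t // leadingIndex e t = j} → σ →₀ ℕ) (G : Finset (σ → ℝ))

lemma exists_forall_two_pow_mul_eq_sum {τ : Type*} (S : Finset τ) (g : τ → ℕ → σ → ℝ) (N : ℕ) :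
    ∃ x ∈ blockShell (leadingIndex e),
      (∀ ν, 2 ^ Fintype.card J * ∑ y ∈ G, cellWeight (blockPolynomial m x) ν y =
        ∑ μ, ∑ y ∈ G, cellWeight (blockPolynomial m x) μ y) ∧
      ∀ ν, 2 ^ Fintype.card J * ∑ T ∈ S, truncatedWeight N (g T) (blockPolynomial m x) ν =
        ∑ μ, ∑ T ∈ S, truncatedWeight N (g T) (blockPolynomial m x) μ := by
  let H (c : Bool) (ν : J → Bool) (x : BlockSpace (Fin (n + 1)) J) : ℝ :=
    cond c (∑ T ∈ S, truncatedWeight N (g T) (blockPolynomial m x) ν)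
      (∑ y ∈ G, cellWeight (blockPolynomial m x) ν y)
  have hH (c ν) : Continuous (H c ν) := by
    cases c
    · exact continuous_finsetSum _ fun y _ ↦ continuous_cellWeight_blockPolynomial m ν y
    · exact continuous_finsetSum _ fun T _ ↦ continuous_truncatedWeight_blockPolynomial m N (g T) ν
  have hflip (c ν j x) : H c ν (flipBlock (leadingIndex e) j x) = H c (flipSign j ν) x := by
    simp only [H, truncatedWeight, cellWeight_blockPolynomial_flipBlock]
  obtain ⟨x, hx, hbal⟩ := exists_mem_blockShell_forall_two_pow_mul_eq_sum e hH hflip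
  exact ⟨x, hx, hbal false, hbal true⟩

theorem exists_forall_two_pow_mul_eq_sum_and_ncard_le [Finite σ] {S : Finset (Set (σ → ℝ))} {R : ℝ}
    (hS : ∀ T ∈ S, T.Nonempty)
    (hR : ∀ T ∈ S, ∀ x, ({μ | (T ∩ signCell (blockPolynomial m x) μ).Nonempty}.ncard : ℝ) ≤ R) :
    ∃ x ∈ blockShell (leadingIndex e),
      (∀ ν, 2 ^ Fintype.card J * ∑ y ∈ G, cellWeight (blockPolynomial m x) ν y =
        ∑ μ, ∑ y ∈ G, cellWeight (blockPolynomial m x) μ y) ∧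
      ∀ ν, (2 : ℝ) ^ Fintype.card J *
        {T | T ∈ S ∧ (T ∩ signCell (blockPolynomial m x) ν).Nonempty}.ncard ≤ S.card * R := by
  choose! g hgT hg using fun T (hT : T ∈ S) ↦ exists_seq_subset_closure_range (hS T hT)
  choose x hx hgrid hbal using exists_forall_two_pow_mul_eq_sum e m G S g
  obtain ⟨a, ha, φ, hφ, hlim⟩ := (isCompact_blockShell _).tendsto_subseq hx
  have hweight (ν : J → Bool) :
      Continuous fun x ↦ ∑ y ∈ G, cellWeight (blockPolynomial m x) ν y :=
    continuous_finsetSum _ fun y _ ↦ continuous_cellWeight_blockPolynomial m ν y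
  refine ⟨a, ha, fun ν ↦ ?_, fun ν ↦ ?_⟩
  · refine tendsto_nhds_unique (((hweight ν).const_mul _).tendsto a |>.comp hlim) ?_
    exact ((continuous_finsetSum _ fun μ _ ↦ hweight μ).tendsto a |>.comp hlim).congr
      fun i ↦ (hgrid (φ i) ν).symm
  · exact two_pow_mul_ncard_le_of_tendsto hgT hg
      (fun j y ↦ (continuous_eval_blockPolynomial m y j).tendsto a |>.comp hlim) hφ.tendsto_atTop
      (fun i ↦ hbal (φ i) ν) fun i T hT ↦ hR T hT (x (φ i))

theorem exists_forall_signCell_nonempty_and_ncard_le [Fintype σ] [LocallyFiniteOrderBot J]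
    [Nonempty J] {q : J → ℕ} (hq : ∀ j, 2 ^ ((Finset.Iic j).card + 1) < (q j + 1) ^ Fintype.card σ)
    {S : Finset (Set (σ → ℝ))} {R : ℝ} (hR₀ : 0 ≤ R)
    (hR : ∀ T ∈ S, ∀ P : J → MvPolynomial σ ℝ,
      (∀ j, (P j).totalDegree ≤ Fintype.card σ * q j) →
      ({ν | (T ∩ signCell P ν).Nonempty}.ncard : ℝ) ≤ R) :
    ∃ P : J → MvPolynomial σ ℝ, (∀ j, (P j).totalDegree ≤ Fintype.card σ * q j) ∧
      (∀ ν, (signCell P ν).Nonempty) ∧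
      ∀ ν, (2 : ℝ) ^ Fintype.card J * {T | T ∈ S ∧ (T ∩ signCell P ν).Nonempty}.ncard ≤
        S.card * R := by
  classical
  have : Nonempty {A : Finset J // A.Nonempty} := ⟨⟨_, Finset.univ_nonempty⟩⟩
  obtain ⟨n, hn⟩ := Nat.exists_eq_succ_of_ne_zero
    (Fintype.card_ne_zero (α := {A : Finset J // A.Nonempty} × Bool))
  let e := (Fintype.equivFinOfCardEq hn).symm
  have hcard (j : J) :
      Fintype.card (Option {t // leadingIndex e t = j}) ≤ (q j + 1) ^ Fintype.card σ := by
    rw [Fintype.card_option, Nat.succ_le_iff]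
    exact (card_leadingIndex_eq_le e j).trans_lt (by simpa [pow_succ] using hq j)
  choose m hm hmdeg using fun j ↦ exists_injective_forall_degree_le (hcard j)
  have hdeg (x) (j : J) : (blockPolynomial m x j).totalDegree ≤ Fintype.card σ * q j :=
    totalDegree_blockPolynomial_le m (hmdeg j) x
  obtain ⟨G, hG⟩ := exists_finset_forall_exists_eval_ne_zero σ (∑ j, Fintype.card σ * q j)
  obtain ⟨x, hx, hbal, hle⟩ := exists_forall_two_pow_mul_eq_sum_and_ncard_le e m G
    (S := {T ∈ S | T.Nonempty}) (R := R) (fun T hT ↦ (Finset.mem_filter.1 hT).2)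
    fun T hT x ↦ hR T (Finset.mem_filter.1 hT).1 _ (hdeg x)
  refine ⟨blockPolynomial m x, hdeg x, forall_signCell_nonempty_of_two_pow_mul_eq_sum
    (fun j ↦ blockPolynomial_ne_zero (hm j) hx) hG (Finset.sum_le_sum fun j _ ↦ hdeg x j) hbal,
    fun ν ↦ le_trans ?_ ((hle ν).trans (by gcongr; exact Finset.filter_subset _ _))⟩
  have hset : {T | T ∈ S ∧ (T ∩ signCell (blockPolynomial m x) ν).Nonempty} =
      {T | T ∈ {T ∈ S | T.Nonempty} ∧ (T ∩ signCell (blockPolynomial m x) ν).Nonempty} := by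
    ext T
    simpa using fun (h : (T ∩ _).Nonempty) _ ↦ h.mono Set.inter_subset_left
  rw [hset]

end Partition

section Degrees

/-- The degree in each variable which is allotted to the `j`-th polynomial: just large enough to
leave room for more than `2 ^ (j + 2)` monomials in `d` variables. -/
noncomputable def blockDegree (d j : ℕ) : ℕ :=
  ⌈(2 : ℝ) ^ (((j : ℝ) + 2) / d)⌉₊

variable {d : ℕ}

lemma two_pow_lt_succ_blockDegree_pow (hd : d ≠ 0) (j : ℕ) :
    2 ^ (j + 2) < (blockDegree d j + 1) ^ d := by
  have hlt : (2 : ℝ) ^ (((j : ℝ) + 2) / d) < (blockDegree d j : ℝ) + 1 :=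
    (Nat.le_ceil _).trans_lt (lt_add_one _)
  have hpow : (2 : ℝ) ^ (j + 2) = ((2 : ℝ) ^ (((j : ℝ) + 2) / d)) ^ d := by
    rw [← Real.rpow_mul_natCast zero_le_two, div_mul_cancel₀ _ (Nat.cast_ne_zero.2 hd)]
    exact_mod_cast (Real.rpow_natCast 2 (j + 2)).symm
  have hlt_pow := hpow.trans_lt (pow_lt_pow_left₀ hlt (by positivity) hd)
  exact_mod_cast hlt_pow

lemma mul_blockDegree_le (hd : d ≠ 0) (j : ℕ) :
    ((d * blockDegree d j : ℕ) : ℝ) ≤ 4 * d * 2 ^ (((j : ℝ) + 1) / d) := by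
  have hceil : (blockDegree d j : ℝ) ≤ (2 : ℝ) ^ (((j : ℝ) + 2) / d) + 1 :=
    (Nat.ceil_lt_add_one (by positivity)).le
  have hsplit : (2 : ℝ) ^ (((j : ℝ) + 2) / d) = 2 ^ (((j : ℝ) + 1) / d) * 2 ^ ((1 : ℝ) / d) := by
    rw [← Real.rpow_add two_pos]
    ring_nf
  have hroot : (2 : ℝ) ^ ((1 : ℝ) / d) ≤ 2 ^ (1 : ℝ) :=
    Real.rpow_le_rpow_of_exponent_le one_le_two
      (div_le_one_of_le₀ (mod_cast Nat.one_le_iff_ne_zero.2 hd) d.cast_nonneg)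
  have hone : (1 : ℝ) ≤ 2 ^ (((j : ℝ) + 1) / d) :=
    Real.one_le_rpow one_le_two (by positivity)
  have hle : (blockDegree d j : ℝ) ≤ 4 * 2 ^ (((j : ℝ) + 1) / d) := by
    rw [Real.rpow_one] at hroot
    nlinarith
  calc ((d * blockDegree d j : ℕ) : ℝ) = d * blockDegree d j := by push_cast; rfl
    _ ≤ d * (4 * 2 ^ (((j : ℝ) + 1) / d)) := by gcongr
    _ = 4 * d * 2 ^ (((j : ℝ) + 1) / d) := by ring

lemma exists_forall_sum_mul_blockDegree_le (hd : d ≠ 0) :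
    ∃ A : ℝ, ∀ k : ℕ, ((∑ j : Fin k, d * blockDegree d j : ℕ) : ℝ) ≤ A * 2 ^ ((k : ℝ) / d) := by
  let a : ℝ := 2 ^ ((1 : ℝ) / d)
  have ha : 1 < a := Real.one_lt_rpow one_lt_two (by positivity)
  have hpow (n : ℕ) : (2 : ℝ) ^ ((n : ℝ) / d) = a ^ n := by
    rw [← Real.rpow_mul_natCast zero_le_two, one_div_mul_eq_div]
  refine ⟨4 * d * a / (a - 1), fun k ↦ ?_⟩
  rw [Fin.sum_univ_eq_sum_range (fun j ↦ d * blockDegree d j) k, Nat.cast_sum]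
  calc ∑ j ∈ Finset.range k, ((d * blockDegree d j : ℕ) : ℝ)
      ≤ ∑ j ∈ Finset.range k, 4 * d * a * a ^ j := Finset.sum_le_sum fun j _ ↦
        (mul_blockDegree_le hd j).trans_eq (by rw [← Nat.cast_succ, hpow, pow_succ']; ring)
    _ = 4 * d * a / (a - 1) * (a ^ k - 1) := by rw [← Finset.mul_sum, geom_sum_eq ha.ne']; ring
    _ ≤ 4 * d * a / (a - 1) * a ^ k := by
        have := sub_pos.2 ha
        gcongr
        exact sub_le_self _ zero_le_one
    _ = 4 * d * a / (a - 1) * 2 ^ ((k : ℝ) / d) := by rw [hpow]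

lemma exists_forall_ncard_le_mul_rpow (hd : d ≠ 0) (b : ℕ) {r : ℕ} (hr : r ≤ d) :
    ∃ K : ℝ, ∀ k ≠ 0, ∀ T : Set (Fin d → ℝ), IsSemiAlgebraicOfComplexity d b T → dimH T ≤ r →
      ∀ P : Fin k → MvPolynomial (Fin d) ℝ, (∀ j, (P j).totalDegree ≤ d * blockDegree d j) →
        ({ν | (T ∩ signCell P ν).Nonempty}.ncard : ℝ) ≤ K * 2 ^ ((k : ℝ) * (r / d)) := by
  obtain ⟨A, hA⟩ := exists_forall_sum_mul_blockDegree_le hd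
  refine ⟨3 ^ b * cellBound (d - r) r (2 * b) * A ^ r, fun k hk T hT hdim P hP ↦ ?_⟩
  have hD : 0 < ∑ j : Fin k, d * blockDegree d j := by
    refine Finset.sum_pos (fun j _ ↦ ?_) ⟨(⟨0, hk.bot_lt⟩ : Fin k), Finset.mem_univ _⟩
    exact Nat.mul_pos hd.bot_lt (Nat.ceil_pos.2 (by positivity))
  calc ({ν | (T ∩ signCell P ν).Nonempty}.ncard : ℝ)
      ≤ 3 ^ b * cellBound (d - r) r (2 * b) * (∑ j : Fin k, d * blockDegree d j : ℕ) ^ r :=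
        mod_cast ncard_setOf_inter_signCell_nonempty_le hr hT hdim hD
          (Finset.sum_le_sum fun j _ ↦ hP j)
    _ ≤ 3 ^ b * cellBound (d - r) r (2 * b) * (A * 2 ^ ((k : ℝ) / d)) ^ r := by
        gcongr
        exact hA k
    _ = 3 ^ b * cellBound (d - r) r (2 * b) * A ^ r * 2 ^ ((k : ℝ) * (r / d)) := by
        rw [mul_pow, ← Real.rpow_mul_natCast zero_le_two, div_mul_eq_mul_div, mul_div_assoc,
          ← mul_assoc]

lemma exists_pos_forall_ncard_le_mul_rpow (hd : d ≠ 0) (b : ℕ) :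
    ∃ M : ℝ, 0 < M ∧ ∀ r : ℕ, ∀ k ≠ 0, ∀ T : Set (Fin d → ℝ),
      IsSemiAlgebraicOfComplexity d b T → dimH T ≤ r →
      ∀ P : Fin k → MvPolynomial (Fin d) ℝ, (∀ j, (P j).totalDegree ≤ d * blockDegree d j) →
        ({ν | (T ∩ signCell P ν).Nonempty}.ncard : ℝ) ≤ M * 2 ^ ((k : ℝ) * (r / d)) := by
  choose! K hK using fun r (hr : r ≤ d) ↦ exists_forall_ncard_le_mul_rpow hd b hr
  obtain ⟨M, hM⟩ := ((Finset.range (d + 1)).image K).exists_le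
  refine ⟨max 1 M, by positivity, fun r k hk T hT hdim P hP ↦ ?_⟩
  have hdim' : dimH T ≤ (min r d : ℕ) := by
    rcases min_choice r d with h | h <;> rw [h]
    · exact hdim
    · exact (dimH_mono T.subset_univ).trans_eq (Real.dimH_univ_pi_fin d)
  have hexp : ((min r d : ℕ) : ℝ) / d ≤ r / d := by
    gcongr
    exact min_le_left r d
  have hKM : K (min r d) ≤ max 1 M :=
    (hM _ (Finset.mem_image_of_mem K (by simp))).trans (le_max_right 1 M)
  calc ({ν | (T ∩ signCell P ν).Nonempty}.ncard : ℝ)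
      ≤ K (min r d) * 2 ^ ((k : ℝ) * ((min r d : ℕ) / d)) :=
        hK _ (min_le_right r d) k hk T hT hdim' P hP
    _ ≤ max 1 M * 2 ^ ((k : ℝ) * (r / d)) := by
        gcongr
        exact one_le_two

lemma le_div_inv_mul_two_rpow {k : ℕ} {N s M t : ℝ} (hM : 0 < M)
    (h : 2 ^ k * N ≤ s * (M * 2 ^ ((k : ℝ) * t))) : N ≤ s / (M⁻¹ * 2 ^ ((k : ℝ) * (1 - t))) := by
  have hsplit : (2 : ℝ) ^ k = 2 ^ ((k : ℝ) * (1 - t)) * 2 ^ ((k : ℝ) * t) := by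
    rw [← Real.rpow_add two_pos, ← Real.rpow_natCast]
    ring_nf
  rw [hsplit] at h
  rw [le_div_iff₀ (by positivity)]
  have hx : (0 : ℝ) < 2 ^ ((k : ℝ) * t) := by positivity
  refine le_of_mul_le_mul_right ?_ (mul_pos hM hx)
  calc N * (M⁻¹ * 2 ^ ((k : ℝ) * (1 - t))) * (M * 2 ^ ((k : ℝ) * t))
      = 2 ^ ((k : ℝ) * (1 - t)) * 2 ^ ((k : ℝ) * t) * N := by field_simp
    _ ≤ s * (M * 2 ^ ((k : ℝ) * t)) := h

end Degrees

end PolynomialPartitioning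

open PolynomialPartitioning in
/-- **Guth's generalized polynomial partitioning.** For a finite family `S` of semi-algebraic
sets in `ℝ^d`, each of dimension at most `r` and complexity at most `b`, and every `k ≥ 1`,
there is a tuple `(P_1,…,P_k)` with `deg P_j ≤ C·2^{j/d}`, all of whose `2^k` strict sign
conditions are realizable, with each realization meeting at most `|S|/(c·2^{k(1−r/d)})`
sets from `S`. -/
theorem generalized_polynomial_partitioning (d : ℕ) (hd : 1 ≤ d) :
    ∃ C : ℝ, 0 < C ∧ ∀ b : ℕ, 1 ≤ b → ∃ c : ℝ, 0 < c ∧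
      ∀ (r : ℕ) (S : Finset (Set (Fin d → ℝ))),
        (∀ T ∈ S, IsSemiAlgebraicOfComplexity d b T ∧ dimH T ≤ (r : ENNReal)) →
        ∀ k : ℕ, 1 ≤ k →
          ∃ P : Fin k → MvPolynomial (Fin d) ℝ,
            (∀ j : Fin k, ((P j).totalDegree : ℝ) ≤ C * 2 ^ (((j : ℕ) + 1 : ℝ) / d)) ∧
            (∀ ν : Fin k → Bool, (StrictRealization P ν).Nonempty) ∧
            (∀ ν : Fin k → Bool,
              (Set.ncard {T | T ∈ S ∧ (T ∩ StrictRealization P ν).Nonempty} : ℝ)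
                ≤ (S.card : ℝ) / (c * 2 ^ ((k : ℝ) * (1 - (r : ℝ) / d)))) := by
  have hd₀ : d ≠ 0 := by omega
  refine ⟨4 * d, by positivity, fun b _ ↦ ?_⟩
  obtain ⟨M, hM, hcells⟩ := exists_pos_forall_ncard_le_mul_rpow hd₀ b
  refine ⟨M⁻¹, inv_pos.2 hM, fun r S hS k hk ↦ ?_⟩
  have : Nonempty (Fin k) := ⟨⟨0, hk⟩⟩
  obtain ⟨P, hdeg, hnonempty, hncard⟩ := exists_forall_signCell_nonempty_and_ncard_le
    (R := M * 2 ^ ((k : ℝ) * (r / d))) (q := fun j : Fin k ↦ blockDegree d j) (S := S)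
    (by simpa using fun j : Fin k ↦ two_pow_lt_succ_blockDegree_pow hd₀ j) (by positivity)
    fun T hT P hP ↦ hcells r k (by omega) T (hS T hT).1 (hS T hT).2 P (by simpa using hP)
  simp only [Fintype.card_fin] at hdeg hncard
  simp only [strictRealization_eq_signCell]
  exact ⟨P, fun j ↦ (Nat.cast_le.2 (hdeg j)).trans (mul_blockDegree_le hd₀ j), hnonempty,
    fun ν ↦ le_div_inv_mul_two_rpow hM (hncard ν)⟩
end
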